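/- arXiv:2012.13515 — 2 statements merged into one kernel-verified Lean document; each statement's English description precedes it below -/
import Mathlib

section
/- Let E ⊆ ℝ² be compact, ε > 0, and x ∈ ∂E_ε. Then x does not lie on the boundary ∂V of any connected component V of the complement E_ε^c if and only if x is a one-sided chain singularity (S6) or a chain-chain singularity (S7). -/
open Metric Set Filter Topology RealInnerProductSpace

noncomputable section

/-- The Euclidean plane. -/
abbrev Plane := EuclideanSpace ℝ (Fin 2)

/-- The closed ε-neighbourhood of a set `E ⊆ ℝ²`: the closure of the union of open
ε-balls centred at points of `E`. -/
def eNbhd (E : Set Plane) (ε : ℝ) : Set Plane :=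
  closure (⋃ y ∈ E, ball y ε)

/-- The set of contributors of a boundary point `x ∈ ∂E_ε`: points `y ∈ ∂E` with
`‖y - x‖ = ε`. -/
def contributors (E : Set Plane) (ε : ℝ) (x : Plane) : Set Plane :=
  {y ∈ frontier E | ‖y - x‖ = ε}

/-- The set of outward directions from `E_ε` at `x`. -/
def outwardDirs (E : Set Plane) (ε : ℝ) (x : Plane) : Set Plane :=
  {ξ | ‖ξ‖ = 1 ∧ ∃ u : ℕ → Plane, (∀ n, u n ∉ eNbhd E ε) ∧
    Tendsto u atTop (nhds x) ∧
    Tendsto (fun n => (‖u n - x‖)⁻¹ • (u n - x)) atTop (nhds ξ)}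

/-- The set of extremal outward directions at `x`: outward directions perpendicular to
`y - x` for some contributor `y`. -/
def extOutward (E : Set Plane) (ε : ℝ) (x : Plane) : Set Plane :=
  {ξ ∈ outwardDirs E ε x | ∃ y ∈ contributors E ε x, ⟪y - x, ξ⟫ = 0}

/-- The set of extremal contributors at `x`: contributors perpendicular to some
outward direction. -/
def extContrib (E : Set Plane) (ε : ℝ) (x : Plane) : Set Plane :=
  {y ∈ contributors E ε x | ∃ ξ ∈ outwardDirs E ε x, ⟪y - x, ξ⟫ = 0}

/-- The set of extremal pairs at `x`. -/
def extPairs (E : Set Plane) (ε : ℝ) (x : Plane) : Set (Plane × Plane) :=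
  {p | p.1 ∈ outwardDirs E ε x ∧ p.2 ∈ contributors E ε x ∧ ⟪p.2 - x, p.1⟫ = 0}

/-- The set `Unp(E)` of boundary points of `E_ε` with a unique contributor. -/
def unp (E : Set Plane) (ε : ℝ) : Set Plane :=
  {x ∈ frontier (eNbhd E ε) | ∃ y, contributors E ε x = {y}}

/-- A boundary point `x ∈ ∂E_ε` is smooth if `x ∈ Unp(E)` and a whole neighbourhood of
`x` on the boundary consists of points of `Unp(E)`. -/
def IsSmoothPt (E : Set Plane) (ε : ℝ) (x : Plane) : Prop :=
  x ∈ unp E ε ∧ ∃ r > 0, frontier (eNbhd E ε) ∩ ball x r ⊆ unp E ε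

/-- A singularity: a non-smooth boundary point of `E_ε`. -/
def IsSingularity (E : Set Plane) (ε : ℝ) (x : Plane) : Prop :=
  x ∈ frontier (eNbhd E ε) ∧ ¬ IsSmoothPt E ε x

/-- The open half-ball of radius `r` at `x` in direction `v`. -/
def halfBall (x v : Plane) (r : ℝ) : Set Plane :=
  {z ∈ ball x r | 0 < ⟪z - x, v⟫}

/-- `V` is a connected component of the complement of `E_ε`. -/
def IsCompOfCompl (E : Set Plane) (ε : ℝ) (V : Set Plane) : Prop :=
  ∃ z, z ∉ eNbhd E ε ∧ V = connectedComponentIn (eNbhd E ε)ᶜ z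

/-- The closed geodesic arc-segment between `v, w ∈ S¹`. -/
def arcSeg (v w : Plane) : Set Plane :=
  {u | ‖u‖ = 1 ∧ ∃ a b : ℝ, 0 ≤ a ∧ 0 ≤ b ∧ u = a • v + b • w}

/-- The open geodesic arc-segment between `v, w ∈ S¹`. -/
def openArc (v w : Plane) : Set Plane :=
  arcSeg v w \ {v, w}

/-- A chain sequence for `x`: a sequence of singularities converging to `x` whose
extremal contributors become increasingly opposed. -/
def IsChainSeq (E : Set Plane) (ε : ℝ) (x : Plane) (u : ℕ → Plane) : Prop :=
  (∀ n, IsSingularity E ε (u n)) ∧ (∀ n, u n ≠ x) ∧ Tendsto u atTop (nhds x) ∧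
  ∃ y1 y2 : ℕ → Plane, (∀ n, extContrib E ε (u n) = {y1 n, y2 n}) ∧
    Tendsto (fun n => ⟪ε⁻¹ • (y1 n - u n), ε⁻¹ • (y2 n - u n)⟫) atTop (nhds (-1))

/-- Type S1: wedge. -/
def IsWedge (E : Set Plane) (ε : ℝ) (x : Plane) : Prop :=
  IsSingularity E ε x ∧
  ∃ ξ₁ ξ₂, extOutward E ε x = {ξ₁, ξ₂} ∧ ξ₁ ≠ ξ₂ ∧ ξ₁ ≠ -ξ₂

/-- Type S2: one-sided sharp singularity. -/
def IsSharp (E : Set Plane) (ε : ℝ) (x : Plane) : Prop :=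
  IsSingularity E ε x ∧ (∃ ξ, extOutward E ε x = {ξ}) ∧
  ∃ δ > 0, IsConnected (ball x δ ∩ (eNbhd E ε)ᶜ)

/-- Type S3: sharp-sharp singularity. -/
def IsSharpSharp (E : Set Plane) (ε : ℝ) (x : Plane) : Prop :=
  IsSingularity E ε x ∧ ∃ ξ, extOutward E ε x = {ξ, -ξ} ∧
    ∀ η ∈ ({ξ, -ξ} : Set Plane), ∃ δ > 0, IsConnected (halfBall x η δ ∩ (eNbhd E ε)ᶜ)

/-- Type S4: one-sided shallow singularity. -/
def IsShallow (E : Set Plane) (ε : ℝ) (x : Plane) : Prop :=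
  IsSingularity E ε x ∧ x ∈ unp E ε ∧
  ∃ ξ₁ ξ₂, extOutward E ε x = {ξ₁, ξ₂} ∧
    (∃ δ > 0, halfBall x ξ₁ δ ∩ frontier (eNbhd E ε) ⊆ unp E ε) ∧
    (∀ δ > 0, ¬ (halfBall x ξ₂ δ ∩ frontier (eNbhd E ε) ⊆ unp E ε))

/-- Type S5: shallow-shallow singularity. -/
def IsShallowShallow (E : Set Plane) (ε : ℝ) (x : Plane) : Prop :=
  IsSingularity E ε x ∧ x ∈ unp E ε ∧
  ∃ ξ₁ ξ₂, extOutward E ε x = {ξ₁, ξ₂} ∧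
    ∀ η ∈ ({ξ₁, ξ₂} : Set Plane), ∀ δ > 0,
      ¬ (halfBall x η δ ∩ frontier (eNbhd E ε) ⊆ unp E ε)

/-- Type S6: one-sided chain singularity. -/
def IsChainSing (E : Set Plane) (ε : ℝ) (x : Plane) : Prop :=
  IsSingularity E ε x ∧ (∃ ξ, extOutward E ε x = {ξ}) ∧
  ∃ u, IsChainSeq E ε x u

/-- Type S7: chain-chain singularity. -/
def IsChainChain (E : Set Plane) (ε : ℝ) (x : Plane) : Prop :=
  IsSingularity E ε x ∧ ∃ ξ, extOutward E ε x = {ξ, -ξ} ∧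
    ∀ η ∈ ({ξ, -ξ} : Set Plane), ∃ δ > 0, ∃ u,
      IsChainSeq E ε x u ∧ ∀ n, u n ∈ halfBall x η δ

/-- Type S8: sharp-chain singularity. -/
def IsSharpChain (E : Set Plane) (ε : ℝ) (x : Plane) : Prop :=
  IsSingularity E ε x ∧ ∃ ξ, extOutward E ε x = {ξ, -ξ} ∧
    (∃ δ > 0, IsConnected (halfBall x ξ δ ∩ (eNbhd E ε)ᶜ)) ∧
    (∃ δ > 0, ∃ u, IsChainSeq E ε x u ∧ ∀ n, u n ∈ halfBall x (-ξ) δ)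


namespace Inacc

variable {E : Set Plane} {ε : ℝ} {x u z ξ ν : Plane}

lemma mem_eNbhd (hE : IsCompact E) (hε : 0 < ε) : z ∈ eNbhd E ε ↔ ∃ y ∈ E, ‖y - z‖ ≤ ε := by
  have h1 : eNbhd E ε = cthickening ε E := by
    rw [eNbhd, ← thickening_eq_biUnion_ball, closure_thickening hε]
  rw [h1, hE.cthickening_eq_biUnion_closedBall hε.le]
  simp [mem_closedBall, dist_eq_norm, norm_sub_rev]

lemma notMem_eNbhd (hE : IsCompact E) (hε : 0 < ε) : z ∉ eNbhd E ε ↔ ∀ y ∈ E, ε < ‖y - z‖ := by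
  rw [mem_eNbhd hE hε]; push Not; rfl

lemma isClosed_eNbhd : IsClosed (eNbhd E ε) := isClosed_closure

lemma frontier_iff : u ∈ frontier (eNbhd E ε) ↔ u ∈ eNbhd E ε ∧ u ∈ closure (eNbhd E ε)ᶜ := by
  rw [frontier_eq_closure_inter_closure, isClosed_eNbhd.closure_eq]; rfl

lemma far_of_closure (hE : IsCompact E) (hε : 0 < ε) (hu : u ∈ closure (eNbhd E ε)ᶜ) :
    ∀ y ∈ E, ε ≤ ‖y - u‖ := by
  intro y hy
  have hc : IsClosed {z : Plane | ε ≤ ‖y - z‖} :=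
    isClosed_le continuous_const (by fun_prop)
  have : closure (eNbhd E ε)ᶜ ⊆ {z : Plane | ε ≤ ‖y - z‖} := by
    apply closure_minimal _ hc
    intro z hz
    exact ((notMem_eNbhd hE hε).1 hz y hy).le
  exact this hu

lemma far_of_frontier (hE : IsCompact E) (hε : 0 < ε) (hu : u ∈ frontier (eNbhd E ε)) :
    ∀ y ∈ E, ε ≤ ‖y - u‖ := far_of_closure hE hε (frontier_iff.1 hu).2

lemma contrib_iff (hE : IsCompact E) (hε : 0 < ε) (hu : u ∈ frontier (eNbhd E ε)) {y : Plane} :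
    y ∈ contributors E ε u ↔ y ∈ E ∧ ‖y - u‖ = ε := by
  constructor
  · rintro ⟨h1, h2⟩
    exact ⟨hE.isClosed.frontier_subset h1, h2⟩
  · rintro ⟨h1, h2⟩
    refine ⟨?_, h2⟩
    rw [frontier, hE.isClosed.closure_eq]
    refine ⟨h1, fun hi => ?_⟩
    have hfar := far_of_frontier hE hε hu
    rw [mem_interior_iff_mem_nhds, Metric.mem_nhds_iff] at hi
    obtain ⟨r, hr, hb⟩ := hi
    set t := min (1/2) (r / (2 * ε)) with ht
    have ht0 : 0 < t := by positivity
    have ht1 : t ≤ 1/2 := min_le_left _ _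
    have ht2 : t * (2 * ε) ≤ r := by
      have : t ≤ r / (2 * ε) := min_le_right _ _
      rwa [le_div_iff₀ (by positivity)] at this
    have hm : y - t • (y - u) ∈ E := by
      apply hb
      rw [mem_ball, dist_eq_norm]
      have : y - t • (y - u) - y = -(t • (y - u)) := by abel
      rw [this, norm_neg, norm_smul, h2, Real.norm_of_nonneg ht0.le]
      nlinarith
    have := hfar _ hm
    have h3 : y - t • (y - u) - u = (1 - t) • (y - u) := by module
    rw [h3, norm_smul, h2, Real.norm_of_nonneg (by linarith)] at this
    nlinarith

lemma exists_contrib (hE : IsCompact E) (hε : 0 < ε) (hu : u ∈ frontier (eNbhd E ε)) :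
    ∃ y ∈ E, ‖y - u‖ = ε := by
  obtain ⟨y, hy, h⟩ := (mem_eNbhd hE hε).1 (frontier_iff.1 hu).1
  exact ⟨y, hy, le_antisymm h (far_of_frontier hE hε hu y hy)⟩

lemma norm_shift (y u v : Plane) :
    ‖y - (u + v)‖ ^ 2 = ‖y - u‖ ^ 2 - 2 * ⟪y - u, v⟫ + ‖v‖ ^ 2 := by
  rw [← norm_sub_sq_real]; congr 2; abel

lemma mem_outward_iff (hu : u ∈ eNbhd E ε) : ξ ∈ outwardDirs E ε u ↔ ‖ξ‖ = 1 ∧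
    ∀ ρ > 0, ∃ z ∉ eNbhd E ε, ‖z - u‖ < ρ ∧ ‖(‖z - u‖)⁻¹ • (z - u) - ξ‖ < ρ := by
  constructor
  · rintro ⟨h1, v, hv, hv1, hv2⟩
    refine ⟨h1, fun ρ hρ => ?_⟩
    have e1 := (Metric.tendsto_nhds.1 hv1) ρ hρ
    have e2 := (Metric.tendsto_nhds.1 hv2) ρ hρ
    obtain ⟨n, h3, h4⟩ := (e1.and e2).exists
    rw [dist_eq_norm] at h3 h4
    exact ⟨v n, hv n, h3, h4⟩
  · rintro ⟨h1, h2⟩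
    refine ⟨h1, ?_⟩
    have h3 : ∀ n : ℕ, ∃ z ∉ eNbhd E ε, ‖z - u‖ < 1 / ((n:ℝ) + 1) ∧
        ‖(‖z - u‖)⁻¹ • (z - u) - ξ‖ < 1 / ((n:ℝ) + 1) :=
      fun n => h2 _ (by positivity)
    choose v hv hv1 hv2 using h3
    refine ⟨v, hv, ?_, ?_⟩
    · rw [tendsto_iff_norm_sub_tendsto_zero]
      exact squeeze_zero (fun _ => norm_nonneg _) (fun n => (hv1 n).le)
        tendsto_one_div_add_atTop_nhds_zero_nat
    · rw [tendsto_iff_norm_sub_tendsto_zero]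
      exact squeeze_zero (fun _ => norm_nonneg _) (fun n => (hv2 n).le)
        tendsto_one_div_add_atTop_nhds_zero_nat

lemma outward_closed (hu : u ∈ eNbhd E ε) {d : ℕ → Plane} (hd : ∀ n, d n ∈ outwardDirs E ε u)
    (h : Tendsto d atTop (𝓝 ξ)) : ξ ∈ outwardDirs E ε u := by
  rw [mem_outward_iff hu]
  refine ⟨?_, fun ρ hρ => ?_⟩
  · have h1 : Tendsto (fun n => ‖d n‖) atTop (𝓝 ‖ξ‖) := h.norm
    have h2 : (fun n => ‖d n‖) = fun _ => (1:ℝ) := funext fun n => (hd n).1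
    rw [h2] at h1
    exact (tendsto_nhds_unique h1 tendsto_const_nhds)
  · obtain ⟨n, hn⟩ := ((Metric.tendsto_nhds.1 h) (ρ/2) (by positivity)).exists
    rw [dist_eq_norm] at hn
    obtain ⟨z, hz, h1, h2⟩ := ((mem_outward_iff hu).1 (hd n)).2 (ρ/2) (by positivity)
    refine ⟨z, hz, by linarith, ?_⟩
    have := norm_add_le ((‖z - u‖)⁻¹ • (z - u) - d n) (d n - ξ)
    rw [sub_add_sub_cancel] at this
    linarith

lemma outward_inner_nonpos (hE : IsCompact E) (hε : 0 < ε) (hξ : ξ ∈ outwardDirs E ε u)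
    {y : Plane} (hy : y ∈ E) (hyu : ‖y - u‖ = ε) : ⟪y - u, ξ⟫ ≤ 0 := by
  obtain ⟨h1, v, hv, hv1, hv2⟩ := hξ
  have h3 : Tendsto (fun n => ⟪y - u, (‖v n - u‖)⁻¹ • (v n - u)⟫) atTop (𝓝 ⟪y - u, ξ⟫) :=
    tendsto_const_nhds.inner hv2
  have h4 : Tendsto (fun n => ‖v n - u‖ / 2) atTop (𝓝 0) := by
    have := (tendsto_iff_norm_sub_tendsto_zero.1 hv1).div_const 2
    simpa using this
  refine le_of_tendsto_of_tendsto' h3 h4 fun n => ?_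
  have h5 := (notMem_eNbhd hE hε).1 (hv n) y hy
  have h6 := norm_shift y u (v n - u)
  rw [add_sub_cancel, hyu] at h6
  have h7 : ε ^ 2 < ‖y - v n‖ ^ 2 := by gcongr
  rw [inner_smul_right]
  rcases (norm_nonneg (v n - u)).eq_or_lt with h0 | h0
  · rw [← h0]; simp
  · rw [inv_mul_le_iff₀ h0]; nlinarith

/-- Pushing off in a strictly outward direction. -/
lemma strict_push (hE : IsCompact E) (hε : 0 < ε) (hu : u ∈ frontier (eNbhd E ε)) {d : Plane}
    (hd : ∀ y ∈ E, ‖y - u‖ = ε → ⟪y - u, d⟫ < 0) :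
    ∃ τ > 0, ∀ v, ‖v - u‖ < τ → (∀ y ∈ E, ε ≤ ‖y - v‖) → ∀ t, 0 < t → t < τ →
      v + t • d ∉ eNbhd E ε := by
  by_contra hcon
  push Not at hcon
  have h3 : ∀ n : ℕ, ∃ v, ‖v - u‖ < 1 / ((n:ℝ) + 1) ∧ (∀ y ∈ E, ε ≤ ‖y - v‖) ∧ ∃ t, 0 < t ∧
      t < 1 / ((n:ℝ) + 1) ∧ v + t • d ∈ eNbhd E ε := fun n => hcon _ (by positivity)
  choose v hv hfar t ht0 ht hm using h3
  simp only [mem_eNbhd hE hε] at hm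
  choose y hyE hy using hm
  obtain ⟨y₀, hy₀, φ, hφ, hlim⟩ := hE.tendsto_subseq hyE
  have hvl : Tendsto v atTop (𝓝 u) := by
    rw [tendsto_iff_norm_sub_tendsto_zero]
    exact squeeze_zero (fun _ => norm_nonneg _) (fun n => (hv n).le)
      tendsto_one_div_add_atTop_nhds_zero_nat
  have htl : Tendsto t atTop (𝓝 0) :=
    squeeze_zero (fun n => (ht0 n).le) (fun n => (ht n).le)
      tendsto_one_div_add_atTop_nhds_zero_nat
  have hvl' := hvl.comp hφ.tendsto_atTop
  have htl' := htl.comp hφ.tendsto_atTop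
  have h5 : Tendsto (fun n => ‖y (φ n) - (v (φ n) + t (φ n) • d)‖) atTop
      (𝓝 ‖y₀ - (u + (0:ℝ) • d)‖) := (hlim.sub (hvl'.add (htl'.smul_const d))).norm
  have h6 : ‖y₀ - u‖ ≤ ε := by
    have := le_of_tendsto' h5 (fun n => hy (φ n))
    simpa using this
  have h7 := le_antisymm h6 (far_of_frontier hE hε hu y₀ hy₀)
  have h8 : Tendsto (fun n => ⟪y (φ n) - v (φ n), d⟫) atTop (𝓝 ⟪y₀ - u, d⟫) :=
    (hlim.sub hvl').inner tendsto_const_nhds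
  have h9 : 0 ≤ ⟪y₀ - u, d⟫ := by
    refine ge_of_tendsto' h8 fun n => ?_
    have a1 := hy (φ n)
    have a2 := hfar (φ n) _ (hyE (φ n))
    have a3 := norm_shift (y (φ n)) (v (φ n)) (t (φ n) • d)
    rw [inner_smul_right] at a3
    have a4 : ‖y (φ n) - (v (φ n) + t (φ n) • d)‖ ^ 2 ≤ ε ^ 2 := by gcongr
    have a5 : ε ^ 2 ≤ ‖y (φ n) - v (φ n)‖ ^ 2 := by gcongr
    have a6 : 0 ≤ t (φ n) * ⟪y (φ n) - v (φ n), d⟫ := by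
      have := sq_nonneg ‖t (φ n) • d‖
      linarith
    exact nonneg_of_mul_nonneg_right a6 (ht0 _)
  exact absurd (hd y₀ hy₀ h7) (not_lt.2 h9)

lemma outward_of_strict (hE : IsCompact E) (hε : 0 < ε) (hu : u ∈ frontier (eNbhd E ε)) {d : Plane}
    (hd1 : ‖d‖ = 1) (hd : ∀ y ∈ E, ‖y - u‖ = ε → ⟪y - u, d⟫ < 0) :
    d ∈ outwardDirs E ε u := by
  rw [mem_outward_iff (frontier_iff.1 hu).1]
  refine ⟨hd1, fun ρ hρ => ?_⟩
  obtain ⟨τ, hτ, h⟩ := strict_push hE hε hu hd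
  set t := min τ ρ / 2 with ht
  have h0 : 0 < min τ ρ := lt_min hτ hρ
  have ht0 : 0 < t := by positivity
  have h1 : min τ ρ ≤ τ := min_le_left _ _
  have h2 : min τ ρ ≤ ρ := min_le_right _ _
  refine ⟨u + t • d, h u (by simpa) (far_of_frontier hE hε hu) t ht0 (by linarith), ?_, ?_⟩
  · rw [add_sub_cancel_left, norm_smul, hd1, Real.norm_of_nonneg ht0.le]; linarith
  · rw [add_sub_cancel_left, norm_smul, hd1, Real.norm_of_nonneg ht0.le, mul_one,
      smul_smul, inv_mul_cancel₀ ht0.ne', one_smul, sub_self, norm_zero]; exact hρ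

/-- Complement points accumulating at `u` produce outward directions; a version that records a
sign condition. -/
lemma exists_outward {P : Plane → Prop} (hu : u ∈ eNbhd E ε)
    (h : ∀ ρ > 0, ∃ z ∉ eNbhd E ε, ‖z - u‖ < ρ ∧ P z) :
    ∃ ξ ∈ outwardDirs E ε u, ∃ v : ℕ → Plane, (∀ n, P (v n)) ∧
      Tendsto (fun n => (‖v n - u‖)⁻¹ • (v n - u)) atTop (𝓝 ξ) := by
  have h3 : ∀ n : ℕ, ∃ z ∉ eNbhd E ε, ‖z - u‖ < 1 / ((n:ℝ) + 1) ∧ P z :=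
    fun n => h _ (by positivity)
  choose v hv hv1 hv2 using h3
  have hs : ∀ n, (‖v n - u‖)⁻¹ • (v n - u) ∈ sphere (0 : Plane) 1 := by
    intro n
    rw [mem_sphere_zero_iff_norm, norm_smul, norm_inv, norm_norm, inv_mul_cancel₀]
    rw [norm_ne_zero_iff, sub_ne_zero]
    rintro h
    exact hv n (h ▸ hu)
  obtain ⟨ξ, hξ, φ, hφ, hlim⟩ := (isCompact_sphere (0 : Plane) 1).tendsto_subseq hs
  have hvl : Tendsto v atTop (𝓝 u) := by
    rw [tendsto_iff_norm_sub_tendsto_zero]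
    exact squeeze_zero (fun _ => norm_nonneg _) (fun n => (hv1 n).le)
      tendsto_one_div_add_atTop_nhds_zero_nat
  exact ⟨ξ, ⟨by simpa using hξ, v ∘ φ, fun n => hv _, hvl.comp hφ.tendsto_atTop, hlim⟩,
    v ∘ φ, fun n => hv2 _, hlim⟩

lemma outward_nonempty (hu : u ∈ frontier (eNbhd E ε)) : ∃ ξ, ξ ∈ outwardDirs E ε u := by
  obtain ⟨ξ, h, -⟩ := exists_outward (P := fun _ => True) (frontier_iff.1 hu).1 (by
    intro ρ hρ
    obtain ⟨z, hz, hd⟩ := Metric.mem_closure_iff.1 (frontier_iff.1 hu).2 ρ hρ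
    rw [dist_comm, dist_eq_norm] at hd
    exact ⟨z, hz, hd, trivial⟩)
  exact ⟨ξ, h⟩

/-- Orthonormal frames in the plane. -/
structure Frame (ξ ν : Plane) : Prop where
  h1 : ‖ξ‖ = 1
  h2 : ‖ν‖ = 1
  h3 : ⟪ξ, ν⟫ = 0

lemma Frame.negr (h : Frame ξ ν) : Frame ξ (-ν) := ⟨h.h1, by simp [h.h2], by simp [h.h3]⟩
lemma Frame.negl (h : Frame ξ ν) : Frame (-ξ) ν := ⟨by simp [h.h1], h.h2, by simp [h.h3]⟩

lemma exists_frame (h : ‖ξ‖ = 1) : ∃ ν, Frame ξ ν := by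
  have h' : ξ 0 ^ 2 + ξ 1 ^ 2 = 1 := by
    have := EuclideanSpace.norm_sq_eq ξ
    rw [h] at this
    simp [Fin.sum_univ_two] at this
    linarith
  refine ⟨!₂[-ξ 1, ξ 0], h, ?_, ?_⟩
  · rw [EuclideanSpace.norm_eq]
    simp [Fin.sum_univ_two]
    linarith
  · simp [PiLp.inner_apply, Fin.sum_univ_two]
    ring

lemma Frame.decomp (h : Frame ξ ν) (z : Plane) : z = ⟪z, ξ⟫ • ξ + ⟪z, ν⟫ • ν := by
  have ha : ξ 0 ^ 2 + ξ 1 ^ 2 = 1 := by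
    have := EuclideanSpace.norm_sq_eq ξ
    rw [h.h1] at this
    simp [Fin.sum_univ_two] at this
    linarith
  have hb : ν 0 ^ 2 + ν 1 ^ 2 = 1 := by
    have := EuclideanSpace.norm_sq_eq ν
    rw [h.h2] at this
    simp [Fin.sum_univ_two] at this
    linarith
  have hc : ξ 0 * ν 0 + ξ 1 * ν 1 = 0 := by
    have := h.h3
    simp [PiLp.inner_apply, Fin.sum_univ_two] at this
    linarith
  set a := ξ 0
  set b := ξ 1
  set c := ν 0
  set d := ν 1
  have e1 : a ^ 2 = d ^ 2 := by
    linear_combination (d^2) * ha - (a^2) * hb + (a*c - b*d) * hc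
  have e2 : a ^ 2 + c ^ 2 = 1 := by linarith
  have e3 : b ^ 2 + d ^ 2 = 1 := by linarith
  have e4 : a * b + c * d = 0 := by
    linear_combination (-c*d) * ha - a * b * hb + (a*d + b * c) * hc
  ext i
  fin_cases i
  · simp [PiLp.inner_apply, Fin.sum_univ_two]
    linear_combination (-z 0) * e2 - z 1 * e4
  · simp [PiLp.inner_apply, Fin.sum_univ_two]
    linear_combination (-z 1) * e3 - z 0 * e4

lemma Frame.inner_eq (h : Frame ξ ν) (z v : Plane) :
    ⟪z, v⟫ = ⟪z, ξ⟫ * ⟪v, ξ⟫ + ⟪z, ν⟫ * ⟪v, ν⟫ := by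
  conv_lhs => rw [h.decomp v]
  rw [inner_add_right, inner_smul_right, inner_smul_right]; ring

lemma Frame.norm_sq (h : Frame ξ ν) (z : Plane) : ‖z‖ ^ 2 = ⟪z, ξ⟫ ^ 2 + ⟪z, ν⟫ ^ 2 := by
  rw [← real_inner_self_eq_norm_sq, h.inner_eq]; ring

lemma Frame.ext (h : Frame ξ ν) {z v : Plane} (h1 : ⟪z, ξ⟫ = ⟪v, ξ⟫) (h2 : ⟪z, ν⟫ = ⟪v, ν⟫) :
    z = v := by
  rw [h.decomp z, h.decomp v, h1, h2]

lemma Frame.xx (h : Frame ξ ν) : ⟪ξ, ξ⟫ = 1 := by rw [real_inner_self_eq_norm_sq, h.h1]; norm_num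
lemma Frame.nn (h : Frame ξ ν) : ⟪ν, ν⟫ = 1 := by rw [real_inner_self_eq_norm_sq, h.h2]; norm_num
lemma Frame.nx (h : Frame ξ ν) : ⟪ν, ξ⟫ = 0 := by rw [real_inner_comm, h.h3]


/-- Two opposite contributors at `x`. -/
structure Pinch (E : Set Plane) (ε : ℝ) (x ξ ν : Plane) : Prop where
  hE : IsCompact E
  hε : 0 < ε
  hx : x ∈ frontier (eNbhd E ε)
  fr : Frame ξ ν
  hp : x + ε • ν ∈ E
  hm : x - ε • ν ∈ E

lemma Pinch.negr (S : Pinch E ε x ξ ν) : Pinch E ε x ξ (-ν) :=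
  ⟨S.hE, S.hε, S.hx, S.fr.negr, by simpa [← sub_eq_add_neg] using S.hm, by simpa using S.hp⟩

lemma Pinch.negl (S : Pinch E ε x ξ ν) : Pinch E ε x (-ξ) ν :=
  ⟨S.hE, S.hε, S.hx, S.fr.negl, S.hp, S.hm⟩

lemma Pinch.thin1 (S : Pinch E ε x ξ ν) (hz : ∀ y ∈ E, ε ≤ ‖y - z‖) :
    2 * ε * ⟪z - x, ν⟫ ≤ ‖z - x‖ ^ 2 := by
  have h1 := hz _ S.hp
  have h2 := norm_shift (x + ε • ν) x (z - x)
  have h3 : ε ^ 2 ≤ ‖x + ε • ν - z‖ ^ 2 := by have := S.hε; gcongr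
  rw [add_sub_cancel, add_sub_cancel_left, norm_smul, S.fr.h2, Real.norm_of_nonneg S.hε.le,
    inner_smul_left] at h2
  simp only [conj_trivial] at h2
  rw [real_inner_comm] at h2
  nlinarith

lemma Pinch.thin (S : Pinch E ε x ξ ν) (hz : ∀ y ∈ E, ε ≤ ‖y - z‖) :
    2 * ε * |⟪z - x, ν⟫| ≤ ‖z - x‖ ^ 2 := by
  have h1 := S.thin1 hz
  have h2 := S.negr.thin1 hz
  rw [inner_neg_right] at h2
  rcases abs_cases ⟪z - x, ν⟫ with ⟨h, _⟩ | ⟨h, _⟩ <;> rw [h] <;> linarith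

lemma Pinch.thin2 (S : Pinch E ε x ξ ν) (hz : ∀ y ∈ E, ε ≤ ‖y - z‖) (hzx : ‖z - x‖ ≤ ε) :
    ‖z - x‖ ^ 2 ≤ 2 * ⟪z - x, ξ⟫ ^ 2 := by
  have h1 := S.thin hz
  have h2 := S.fr.norm_sq (z - x)
  have hε := S.hε
  have h3 : 2 * |⟪z - x, ν⟫| ≤ ‖z - x‖ := by
    have h0 := norm_nonneg (z - x)
    have : ε * (2 * |⟪z - x, ν⟫|) ≤ ε * ‖z - x‖ := by nlinarith
    exact le_of_mul_le_mul_left this hε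
  have h4 : (2 * |⟪z - x, ν⟫|) ^ 2 ≤ ‖z - x‖ ^ 2 := by gcongr
  rw [mul_pow, sq_abs] at h4
  nlinarith

lemma Pinch.slope (S : Pinch E ε x ξ ν) (hu : ∀ y ∈ E, ε ≤ ‖y - u‖) (hux : ‖u - x‖ ≤ ε)
    (hs : 0 < ⟪u - x, ξ⟫) {y : Plane} (hy : y ∈ E) (hyu : ‖y - u‖ = ε) :
    -2 * ⟪u - x, ξ⟫ ≤ ⟪y - u, ξ⟫ := by
  have hε := S.hε
  have h1 := far_of_frontier S.hE S.hε S.hx y hy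
  have h2 := norm_shift y u (x - u)
  rw [add_sub_cancel, hyu] at h2
  have h3 : ε ^ 2 ≤ ‖y - x‖ ^ 2 := by gcongr
  have h4 := S.fr.inner_eq (y - u) (u - x)
  have h5 : ⟪y - u, x - u⟫ = -⟪y - u, u - x⟫ := by rw [← inner_neg_right, neg_sub]
  have h6 : ‖x - u‖ = ‖u - x‖ := norm_sub_rev _ _
  rw [h5, h6] at h2
  have h7 := S.thin hu
  have h8 := S.thin2 hu hux
  have h9 : |⟪y - u, ν⟫| ≤ ε := by
    have := abs_real_inner_le_norm (y - u) ν
    rwa [hyu, S.fr.h2, mul_one] at this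
  have h10 : ⟪y - u, ν⟫ * ⟪u - x, ν⟫ ≤ ε * |⟪u - x, ν⟫| := by
    refine (le_abs_self _).trans ?_
    rw [abs_mul]; gcongr
  have h11 : ⟪u - x, ξ⟫ * (-2 * ⟪u - x, ξ⟫) ≤ ⟪u - x, ξ⟫ * ⟪y - u, ξ⟫ := by nlinarith
  exact le_of_mul_le_mul_left h11 hs

lemma tendsto_of_lt {v : ℕ → Plane} (hv : ∀ n : ℕ, ‖v n - u‖ < 1 / ((n:ℝ) + 1)) :
    Tendsto v atTop (𝓝 u) := by
  rw [tendsto_iff_norm_sub_tendsto_zero]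
  exact squeeze_zero (fun _ => norm_nonneg _) (fun n => (hv n).le)
    tendsto_one_div_add_atTop_nhds_zero_nat

/-- Contributors of nearby boundary points cluster at `x ± ε ν`. -/
lemma Pinch.cluster (S : Pinch E ε x ξ ν) (ho : ξ ∈ outwardDirs E ε x) {ρ : ℝ} (hρ : 0 < ρ) :
    ∃ δ > 0, ∀ u, ‖u - x‖ < δ → 0 < ⟪u - x, ξ⟫ → (∀ y ∈ E, ε ≤ ‖y - u‖) → ∀ y ∈ E, ‖y - u‖ = ε →
      ε ^ 2 * (1 - ρ) < ⟪y - u, ν⟫ ^ 2 := by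
  have hε := S.hε
  by_contra hcon
  push Not at hcon
  have h3 : ∀ n : ℕ, ∃ u, ‖u - x‖ < min ε (1 / ((n:ℝ) + 1)) ∧ 0 < ⟪u - x, ξ⟫ ∧
      (∀ y ∈ E, ε ≤ ‖y - u‖) ∧ ∃ y ∈ E, ‖y - u‖ = ε ∧ ⟪y - u, ν⟫ ^ 2 ≤ ε ^ 2 * (1 - ρ) :=
    fun n => hcon _ (by positivity)
  choose u hu hs hfar y hyE hyu hy using h3
  obtain ⟨y₀, hy₀, φ, hφ, hlim⟩ := S.hE.tendsto_subseq hyE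
  have hul : Tendsto u atTop (𝓝 x) := tendsto_of_lt fun n => (hu n).trans_le (min_le_right _ _)
  have hul' := hul.comp hφ.tendsto_atTop
  have hsub : Tendsto (fun n => y (φ n) - u (φ n)) atTop (𝓝 (y₀ - x)) := hlim.sub hul'
  have e1 : ‖y₀ - x‖ = ε := by
    have := hsub.norm
    simp only [hyu] at this
    exact tendsto_nhds_unique this tendsto_const_nhds |>.symm ▸ rfl
  have e2 := outward_inner_nonpos S.hE hε ho hy₀ e1
  have e3 : 0 ≤ ⟪y₀ - x, ξ⟫ := by
    have t1 : Tendsto (fun n => ⟪y (φ n) - u (φ n), ξ⟫) atTop (𝓝 ⟪y₀ - x, ξ⟫) :=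
      hsub.inner tendsto_const_nhds
    have t2 : Tendsto (fun n => -2 * ⟪u (φ n) - x, ξ⟫) atTop (𝓝 (-2 * ⟪x - x, ξ⟫)) :=
      ((hul'.sub tendsto_const_nhds).inner tendsto_const_nhds).const_mul _
    have := le_of_tendsto_of_tendsto' t2 t1 fun n =>
      S.slope (hfar _) ((hu _).le.trans (min_le_left _ _)) (hs _) (hyE _) (hyu _)
    simpa using this
  have e4 : ⟪y₀ - x, ν⟫ ^ 2 ≤ ε ^ 2 * (1 - ρ) := by
    have t1 : Tendsto (fun n => ⟪y (φ n) - u (φ n), ν⟫ ^ 2) atTop (𝓝 (⟪y₀ - x, ν⟫ ^ 2)) :=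
      (hsub.inner tendsto_const_nhds).pow 2
    exact le_of_tendsto' t1 fun n => hy _
  have e5 := S.fr.norm_sq (y₀ - x)
  rw [e1, le_antisymm e2 e3] at e5
  have : 0 < ε ^ 2 * ρ := by positivity
  nlinarith

/-- The cut property on the `ξ`-side. -/
def HasCut (E : Set Plane) (ε : ℝ) (x ξ ν : Plane) : Prop :=
  ∀ ρ > 0, ∃ σ : ℝ → ℝ, Continuous σ ∧ ∀ w, |w| ≤ ε / 8 → 0 < σ w ∧ σ w < ρ ∧
    x + σ w • ξ + w • ν ∈ eNbhd E ε

lemma mem_of_seg (hE : IsCompact E) (hε : 0 < ε) {a : Plane} (ha : a ∈ E) (hau : ‖a - u‖ = ε)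
    {l : ℝ} (h0 : 0 ≤ l) (h1 : l ≤ 1) : u + l • (a - u) ∈ eNbhd E ε := by
  rw [mem_eNbhd hE hε]
  refine ⟨a, ha, ?_⟩
  have : a - (u + l • (a - u)) = (1 - l) • (a - u) := by module
  rw [this, norm_smul, hau, Real.norm_of_nonneg (by linarith)]
  nlinarith

lemma Pinch.cut_point (S : Pinch E ε x ξ ν) {ρ : ℝ} (hρ : 0 < ρ)
    (hfar : ∀ y ∈ E, ε ≤ ‖y - u‖) (hux : ‖u - x‖ ≤ ε / 10) (hs : 0 < ⟪u - x, ξ⟫)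
    (hsρ : ⟪u - x, ξ⟫ < ρ / 2)
    {a : Plane} (ha : a ∈ E) (hau : ‖a - u‖ = ε) (haν : 9 / 10 * ε < ⟪a - u, ν⟫)
    (haξ : ⟪a - u, ξ⟫ < ρ) {w : ℝ} (hw : |w| ≤ ε / 8) (hwu : ⟪u - x, ν⟫ ≤ w) :
    let s := ⟪u - x, ξ⟫ + (w - ⟪u - x, ν⟫) * (⟪a - u, ξ⟫ / ⟪a - u, ν⟫)
    0 < s ∧ s < ρ ∧ x + s • ξ + w • ν ∈ eNbhd E ε := by
  intro s
  have hε := S.hε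
  have h1 := S.slope hfar (by linarith) hs ha hau
  have hA : 0 < ⟪a - u, ν⟫ := by nlinarith
  set l := (w - ⟪u - x, ν⟫) / ⟪a - u, ν⟫ with hl
  have hsl : s = ⟪u - x, ξ⟫ + l * ⟪a - u, ξ⟫ := by simp only [s, hl]; ring
  have hwb : |⟪u - x, ν⟫| ≤ ε / 10 := by
    have := abs_real_inner_le_norm (u - x) ν
    rw [S.fr.h2, mul_one] at this
    linarith
  rw [abs_le] at hwb hw
  have l0 : 0 ≤ l := div_nonneg (by linarith) hA.le
  have l1 : l ≤ 1 / 4 := by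
    rw [hl, div_le_iff₀ hA]; nlinarith
  refine ⟨?_, ?_, ?_⟩
  · rw [hsl]; nlinarith
  · rw [hsl]; nlinarith
  · have h2 := mem_of_seg S.hE hε ha hau l0 (by linarith)
    have h3 : x + s • ξ + w • ν = u + l • (a - u) := by
      have h4 : s • ξ + w • ν = (u - x) + l • (a - u) := by
        apply S.fr.ext
        · simp only [inner_add_left, inner_smul_left, S.fr.xx, S.fr.nx, hsl, conj_trivial]; ring
        · simp only [inner_add_left, inner_smul_left, S.fr.nn, S.fr.h3, conj_trivial]
          have : l * ⟪a - u, ν⟫ = w - ⟪u - x, ν⟫ := div_mul_cancel₀ _ hA.ne'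
          rw [this]; ring
      rw [add_assoc, h4]; abel
    rw [h3]; exact h2

lemma Pinch.cut_of_two (S : Pinch E ε x ξ ν) {ρ : ℝ} (hρ : 0 < ρ)
    (hfar : ∀ y ∈ E, ε ≤ ‖y - u‖) (hux : ‖u - x‖ ≤ ε / 10) (hs : 0 < ⟪u - x, ξ⟫)
    (hsρ : ⟪u - x, ξ⟫ < ρ / 2)
    {a : Plane} (ha : a ∈ E) (hau : ‖a - u‖ = ε) (haν : 9 / 10 * ε < ⟪a - u, ν⟫)
    (haξ : ⟪a - u, ξ⟫ < ρ)
    {b : Plane} (hb : b ∈ E) (hbu : ‖b - u‖ = ε) (hbν : ⟪b - u, ν⟫ < -(9 / 10 * ε))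
    (hbξ : ⟪b - u, ξ⟫ < ρ) :
    ∃ σ : ℝ → ℝ, Continuous σ ∧ ∀ w, |w| ≤ ε / 8 → 0 < σ w ∧ σ w < ρ ∧
    x + σ w • ξ + w • ν ∈ eNbhd E ε := by
  refine ⟨fun w => ⟪u - x, ξ⟫ + max (w - ⟪u - x, ν⟫) 0 * (⟪a - u, ξ⟫ / ⟪a - u, ν⟫) +
    min (w - ⟪u - x, ν⟫) 0 * (⟪b - u, ξ⟫ / ⟪b - u, ν⟫), by fun_prop, fun w hw => ?_⟩
  rcases le_total ⟪u - x, ν⟫ w with h | h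
  · have := S.cut_point hρ hfar hux hs hsρ ha hau haν haξ hw h
    simpa [max_eq_left (sub_nonneg.2 h), min_eq_right (sub_nonneg.2 h)] using this
  · have := S.negr.cut_point hρ hfar hux hs hsρ hb hbu (by rw [inner_neg_right]; linarith) hbξ
      (w := -w) (by rwa [abs_neg]) (by rw [inner_neg_right]; linarith)
    have e : (-w - -⟪u - x, ν⟫) * (⟪b - u, ξ⟫ / -⟪b - u, ν⟫) =
        (w - ⟪u - x, ν⟫) * (⟪b - u, ξ⟫ / ⟪b - u, ν⟫) := by rw [div_neg]; ring
    simp only [inner_neg_right, e] at this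
    simpa [max_eq_right (sub_nonpos.2 h), min_eq_left (sub_nonpos.2 h)] using this

lemma Pinch.cut_of_chain (S : Pinch E ε x ξ ν) (ho : ξ ∈ outwardDirs E ε x) {v : ℕ → Plane}
    (hv : IsChainSeq E ε x v) (hside : ∀ᶠ n in atTop, 0 < ⟪v n - x, ξ⟫) : HasCut E ε x ξ ν := by
  intro ρ hρ
  have hε := S.hε
  obtain ⟨hsing, -, hlim, y1, y2, hext, hinner⟩ := hv
  set κ := min (1 / 10) (ρ ^ 2 / ε ^ 2) with hκ
  have hκ0 : 0 < κ := by positivity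
  have hκ1 : κ ≤ 1 / 10 := min_le_left _ _
  have hκ2 : ε ^ 2 * κ ≤ ρ ^ 2 := by
    have : κ ≤ ρ ^ 2 / ε ^ 2 := min_le_right _ _
    rw [le_div_iff₀ (by positivity)] at this
    linarith
  obtain ⟨δ, hδ, hcl⟩ := S.cluster ho hκ0
  have ev1 : ∀ᶠ n in atTop, ‖v n - x‖ < min δ (min (ε / 10) (ρ / 2)) := by
    have := Metric.tendsto_nhds.1 hlim (min δ (min (ε / 10) (ρ / 2))) (by positivity)
    simpa [dist_eq_norm] using this
  have ev2 := hinner.eventually_lt_const (show (-1 : ℝ) < -1/2 by norm_num)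
  obtain ⟨n, hs, hn, hi⟩ := (hside.and (ev1.and ev2)).exists
  have hfr := (hsing n).1
  have hfar := far_of_frontier S.hE hε hfr
  obtain ⟨hn1, hn2, hn3⟩ : ‖v n - x‖ < δ ∧ ‖v n - x‖ < ε / 10 ∧ ‖v n - x‖ < ρ / 2 := by
    simpa using hn
  have m1 : y1 n ∈ extContrib E ε (v n) := by rw [hext]; simp
  have m2 : y2 n ∈ extContrib E ε (v n) := by rw [hext]; simp
  obtain ⟨a1, a2⟩ := (contrib_iff S.hE hε hfr).1 m1.1
  obtain ⟨b1, b2⟩ := (contrib_iff S.hE hε hfr).1 m2.1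
  have c1 := hcl _ hn1 hs hfar _ a1 a2
  have c2 := hcl _ hn1 hs hfar _ b1 b2
  have q1 := S.fr.norm_sq (y1 n - v n)
  have q2 := S.fr.norm_sq (y2 n - v n)
  rw [a2] at q1
  rw [b2] at q2
  have q3 := S.fr.inner_eq (y1 n - v n) (y2 n - v n)
  have hi' : ⟪y1 n - v n, y2 n - v n⟫ < - (ε ^ 2 / 2) := by
    rw [inner_smul_left, inner_smul_right] at hi
    simp only [conj_trivial] at hi
    have h5 : ⟪y1 n - v n, y2 n - v n⟫ = ε ^ 2 * (ε⁻¹ * (ε⁻¹ * ⟪y1 n - v n, y2 n - v n⟫)) := by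
      field_simp
    rw [h5]
    have : 0 < ε ^ 2 := by positivity
    nlinarith
  have hsρ : ⟪v n - x, ξ⟫ < ρ / 2 := by
    have := (le_abs_self _).trans (abs_real_inner_le_norm (v n - x) ξ)
    rw [S.fr.h1, mul_one] at this
    linarith
  set s1 := ⟪y1 n - v n, ξ⟫
  set s2 := ⟪y2 n - v n, ξ⟫
  set w1 := ⟪y1 n - v n, ν⟫
  set w2 := ⟪y2 n - v n, ν⟫
  have hε2 : 0 < ε ^ 2 := by positivity
  have k1 : s1 < ρ := lt_of_pow_lt_pow_left₀ 2 hρ.le (by nlinarith)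
  have k2 : s2 < ρ := lt_of_pow_lt_pow_left₀ 2 hρ.le (by nlinarith)
  have k3 : w1 * w2 < 0 := by nlinarith [sq_nonneg (s1 + s2)]
  have big : ∀ w : ℝ, 0 ≤ w → ε ^ 2 * (1 - κ) < w ^ 2 → 9 / 10 * ε < w := by
    intro w h0 h
    exact lt_of_pow_lt_pow_left₀ 2 h0 (by nlinarith)
  rcases mul_neg_iff.1 k3 with ⟨p, q⟩ | ⟨p, q⟩
  · exact S.cut_of_two hρ hfar hn2.le hs hsρ a1 a2 (big _ p.le c1) k1 b1 b2
      (by have := big (-w2) (by linarith) (by rwa [neg_sq]); linarith) k2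
  · exact S.cut_of_two hρ hfar hn2.le hs hsρ b1 b2 (big _ q.le c2) k2 a1 a2
      (by have := big (-w1) (by linarith) (by rwa [neg_sq]); linarith) k1

lemma Pinch.no_access (S : Pinch E ε x ξ ν) (c1 : HasCut E ε x ξ ν) (c2 : HasCut E ε x (-ξ) ν)
    {V : Set Plane} (hV : IsPreconnected V) (hVs : V ⊆ (eNbhd E ε)ᶜ) : x ∉ closure V := by
  have hε := S.hε
  intro hxV
  have hne : V.Nonempty := closure_nonempty_iff.1 ⟨x, hxV⟩
  obtain ⟨z₀, hz₀⟩ := hne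
  have hfar : ∀ z ∈ V, ∀ y ∈ E, ε ≤ ‖y - z‖ := fun z hz y hy =>
    ((notMem_eNbhd S.hE hε).1 (hVs hz) y hy).le
  -- choose ρ
  obtain ⟨ρ, hρ, hρε, hρz⟩ : ∃ ρ > 0, ρ ≤ ε / 4 ∧ (|⟪z₀ - x, ν⟫| ≤ ε / 8 → ρ ≤ |⟪z₀ - x, ξ⟫|) := by
    by_cases h0 : ⟪z₀ - x, ξ⟫ = 0
    · refine ⟨ε / 4, by positivity, le_rfl, fun hw => ?_⟩
      exfalso
      have h1 := S.thin (hfar z₀ hz₀)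
      have h2 := S.fr.norm_sq (z₀ - x)
      rw [h0, ← sq_abs ⟪z₀ - x, ν⟫] at h2
      have h3 : |⟪z₀ - x, ν⟫| = 0 := by
        by_contra h
        have : 0 < |⟪z₀ - x, ν⟫| := lt_of_le_of_ne (abs_nonneg _) (Ne.symm h)
        nlinarith
      rw [abs_eq_zero] at h3
      have h4 : z₀ - x = 0 := S.fr.ext (by simpa using h0) (by simpa using h3)
      rw [sub_eq_zero] at h4
      exact hVs hz₀ (h4 ▸ (frontier_iff.1 S.hx).1)
    · exact ⟨min (ε / 4) |⟪z₀ - x, ξ⟫|, lt_min (by positivity) (abs_pos.2 h0), min_le_left _ _,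
        fun _ => min_le_right _ _⟩
  obtain ⟨σ, hσc, hσ⟩ := c1 ρ hρ
  obtain ⟨τ, hτc, hτ⟩ := c2 ρ hρ
  set s : Plane → ℝ := fun z => ⟪z - x, ξ⟫ with hs
  set w : Plane → ℝ := fun z => ⟪z - x, ν⟫ with hw
  have sc : Continuous s := by fun_prop
  have wc : Continuous w := by fun_prop
  set Q : Set Plane := {z | |w z| < ε / 8} ∩ ({z | s z < σ (w z)} ∩ {z | - τ (w z) < s z}) with hQ
  set Q' : Set Plane := {z | ε / 8 < |w z|} ∪ ({z | σ (w z) < s z} ∪ {z | s z < - τ (w z)}) with hQ'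
  have oQ : IsOpen Q := (isOpen_lt (by fun_prop) (by fun_prop)).inter
    ((isOpen_lt (by fun_prop) (by fun_prop)).inter (isOpen_lt (by fun_prop) (by fun_prop)))
  have oQ' : IsOpen Q' := (isOpen_lt (by fun_prop) (by fun_prop)).union
    ((isOpen_lt (by fun_prop) (by fun_prop)).union (isOpen_lt (by fun_prop) (by fun_prop)))
  have dis : Disjoint Q' Q := by
    rw [Set.disjoint_left]
    rintro z (h | h | h) ⟨h1, h2, h3⟩ <;> simp only [mem_ofPred_eq] at * <;> linarith
  have xQ : x ∈ Q := by
    have h1 := (hσ 0 (by simp; positivity)).1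
    have h2 := (hτ 0 (by simp; positivity)).1
    simp [hQ, hs, hw]
    exact ⟨hε, h1, h2⟩
  have sub : V ⊆ Q' ∪ Q := by
    intro z hz
    by_contra hcon
    rw [mem_union, not_or] at hcon
    obtain ⟨n1, n2⟩ := hcon
    simp only [hQ', mem_union, mem_ofPred_eq, not_or, not_lt] at n1
    obtain ⟨n3, n4, n5⟩ := n1
    obtain ⟨σ1, σ2, σ3⟩ := hσ _ n3
    obtain ⟨τ1, τ2, τ3⟩ := hτ _ n3
    have hdec : z = x + s z • ξ + w z • ν := by
      have := S.fr.decomp (z - x)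
      rw [add_assoc, hs, hw, ← this]; abel
    apply n2
    refine ⟨?_, ?_, ?_⟩
    · rw [mem_ofPred_eq]
      refine lt_of_le_of_ne n3 fun he => ?_
      have h1 := S.thin (hfar z hz)
      have h2 := S.fr.norm_sq (z - x)
      have h3 : s z ^ 2 ≤ (ε / 4) ^ 2 := by
        apply sq_le_sq'
        · linarith
        · linarith
      change 2 * ε * |w z| ≤ _ at h1
      change _ = s z ^ 2 + w z ^ 2 at h2
      rw [← sq_abs (w z), he] at h2
      rw [he] at h1
      have : 0 < ε ^ 2 := by positivity
      nlinarith
    · rw [mem_ofPred_eq]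
      refine lt_of_le_of_ne n4 fun he => ?_
      rw [← he, ← hdec] at σ3
      exact hVs hz σ3
    · rw [mem_ofPred_eq]
      refine lt_of_le_of_ne n5 fun he => ?_
      rw [smul_neg, ← neg_smul, he, ← hdec] at τ3
      exact hVs hz τ3
  have z0Q : z₀ ∈ Q' := by
    by_contra hcon
    simp only [hQ', mem_union, mem_ofPred_eq, not_or, not_lt] at hcon
    obtain ⟨n3, n4, n5⟩ := hcon
    obtain ⟨σ1, σ2, σ3⟩ := hσ _ n3
    obtain ⟨τ1, τ2, τ3⟩ := hτ _ n3
    have h1 : ρ ≤ |s z₀| := hρz n3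
    have h2 : |s z₀| < ρ := abs_lt.2 ⟨by linarith, by linarith⟩
    linarith
  have hsub := hV.subset_left_of_subset_union oQ' oQ dis sub ⟨z₀, hz₀, z0Q⟩
  obtain ⟨z, hzQ, hzV⟩ := mem_closure_iff.1 hxV Q oQ xQ
  exact Set.disjoint_left.1 dis (hsub hzV) hzQ

lemma opp_of_chain (hE : IsCompact E) (hε : 0 < ε) {v : ℕ → Plane}
    (hv : IsChainSeq E ε x v) : ∃ e : Plane, ‖e‖ = ε ∧ x + e ∈ E ∧ x - e ∈ E := by
  obtain ⟨hsing, -, hlim, y1, y2, hext, hinner⟩ := hv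
  have m1 : ∀ n, y1 n ∈ E ∧ ‖y1 n - v n‖ = ε := fun n => by
    have : y1 n ∈ extContrib E ε (v n) := by rw [hext]; simp
    exact (contrib_iff hE hε (hsing n).1).1 this.1
  have m2 : ∀ n, y2 n ∈ E ∧ ‖y2 n - v n‖ = ε := fun n => by
    have : y2 n ∈ extContrib E ε (v n) := by rw [hext]; simp
    exact (contrib_iff hE hε (hsing n).1).1 this.1
  obtain ⟨a, ha, φ, hφ, hla⟩ := hE.tendsto_subseq (fun n => (m1 n).1)
  obtain ⟨b, hb, ψ, hψ, hlb⟩ := hE.tendsto_subseq (fun n => (m2 (φ n)).1)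
  have hθ := (hφ.comp hψ).tendsto_atTop
  have l0 := hlim.comp hθ
  have la : Tendsto (fun n => y1 (φ (ψ n)) - v (φ (ψ n))) atTop (𝓝 (a - x)) :=
    (hla.comp hψ.tendsto_atTop).sub l0
  have lb : Tendsto (fun n => y2 (φ (ψ n)) - v (φ (ψ n))) atTop (𝓝 (b - x)) := hlb.sub l0
  have na : ‖a - x‖ = ε := by
    have := la.norm
    simp only [(m1 _).2] at this
    exact (tendsto_nhds_unique this tendsto_const_nhds)
  have nb : ‖b - x‖ = ε := by
    have := lb.norm
    simp only [(m2 _).2] at this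
    exact (tendsto_nhds_unique this tendsto_const_nhds)
  have hi : ⟪ε⁻¹ • (a - x), ε⁻¹ • (b - x)⟫ = -1 :=
    tendsto_nhds_unique ((la.const_smul ε⁻¹).inner (lb.const_smul ε⁻¹)) (hinner.comp hθ)
  have hi' : ⟪a - x, b - x⟫ = -ε ^ 2 := by
    rw [inner_smul_left, inner_smul_right] at hi
    simp only [conj_trivial] at hi
    field_simp at hi
    linarith
  have hz : ‖(a - x) + (b - x)‖ ^ 2 = 0 := by
    rw [norm_add_sq_real, hi', na, nb]; ring
  have hz' : (a - x) + (b - x) = 0 := by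
    rw [sq_eq_zero_iff, norm_eq_zero] at hz; exact hz
  refine ⟨a - x, na, by simpa using ha, ?_⟩
  have : x - (a - x) = b := by
    have h : b = x - (a - x) + ((a - x) + (b - x)) := by abel
    rw [hz', add_zero] at h
    exact h.symm
  rwa [this]

lemma pinch_of_opp (hE : IsCompact E) (hε : 0 < ε) (hx : x ∈ frontier (eNbhd E ε))
    (ho : ξ ∈ outwardDirs E ε x) {e : Plane} (he : ‖e‖ = ε) (hp : x + e ∈ E) (hm : x - e ∈ E) :
    Pinch E ε x ξ (ε⁻¹ • e) := by
  have h1 := outward_inner_nonpos hE hε ho hp (by simpa using he)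
  have h2 := outward_inner_nonpos hE hε ho hm (by simpa using he)
  have h3 : x - e - x = -e := by abel
  rw [add_sub_cancel_left] at h1
  rw [h3, inner_neg_left] at h2
  have h4 : ⟪e, ξ⟫ = 0 := by linarith
  refine ⟨hE, hε, hx, ⟨ho.1, ?_, ?_⟩, ?_, ?_⟩
  · rw [norm_smul, he, norm_inv, Real.norm_of_nonneg hε.le, inv_mul_cancel₀ hε.ne']
  · rw [inner_smul_right, real_inner_comm, h4, mul_zero]
  · rwa [smul_smul, mul_inv_cancel₀ hε.ne', one_smul]
  · rwa [smul_smul, mul_inv_cancel₀ hε.ne', one_smul]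

lemma Pinch.outward_pm (S : Pinch E ε x ξ ν) {η : Plane} (h : η ∈ outwardDirs E ε x) :
    η = ξ ∨ η = -ξ := by
  have hε := S.hε
  have h1 := outward_inner_nonpos S.hE hε h S.hp
    (by simp [norm_smul, S.fr.h2, abs_of_pos hε])
  have h2 := outward_inner_nonpos S.hE hε h S.hm
    (by simp [norm_smul, S.fr.h2, abs_of_pos hε])
  have h3 : x - ε • ν - x = -(ε • ν) := by abel
  rw [add_sub_cancel_left, inner_smul_left] at h1
  rw [h3, inner_neg_left, inner_smul_left] at h2
  simp only [conj_trivial] at h1 h2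
  have h4 : ε * ⟪ν, η⟫ = 0 := by linarith
  have h5 : ⟪η, ν⟫ = 0 := by
    rw [real_inner_comm]; exact (mul_eq_zero.1 h4).resolve_left hε.ne'
  have h6 := S.fr.norm_sq η
  rw [h.1, h5] at h6
  have h7 := S.fr.decomp η
  rw [h5, zero_smul, add_zero] at h7
  have h8 : ⟪η, ξ⟫ = 1 ∨ ⟪η, ξ⟫ = -1 := by
    rw [← sq_eq_one_iff]; linarith
  rcases h8 with h8 | h8 <;> rw [h8] at h7
  · left; simpa using h7
  · right; simpa using h7

lemma Pinch.side (S : Pinch E ε x ξ ν) (hn : -ξ ∉ outwardDirs E ε x) :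
    ∃ δ > 0, ∀ z ∉ eNbhd E ε, ‖z - x‖ < δ → 0 < ⟪z - x, ξ⟫ := by
  by_contra hcon
  push Not at hcon
  obtain ⟨η, hη, v, hv, hl⟩ := exists_outward (P := fun z => ⟪z - x, ξ⟫ ≤ 0)
    (frontier_iff.1 S.hx).1 hcon
  have h1 : Tendsto (fun n => ⟪(‖v n - x‖)⁻¹ • (v n - x), ξ⟫) atTop (𝓝 ⟪η, ξ⟫) :=
    hl.inner tendsto_const_nhds
  have h2 : ⟪η, ξ⟫ ≤ 0 := by
    refine le_of_tendsto' h1 fun n => ?_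
    rw [inner_smul_left]
    exact mul_nonpos_of_nonneg_of_nonpos (by simp) (hv n)
  rcases S.outward_pm hη with rfl | rfl
  · rw [S.fr.xx] at h2; linarith
  · exact hn hη

lemma Pinch.cut_of_empty (S : Pinch E ε x ξ ν) (hn : -ξ ∉ outwardDirs E ε x) :
    HasCut E ε x (-ξ) ν := by
  intro ρ hρ
  have hε := S.hε
  obtain ⟨δ, hδ, hside⟩ := S.side hn
  obtain ⟨t, ht0, ht1, ht2, ht3⟩ : ∃ t > 0, t ≤ δ / 2 ∧ t ≤ ε ∧ t < ρ := by
    refine ⟨min (δ / 2) (min ε (ρ / 2)), by positivity, min_le_left _ _,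
      (min_le_right _ _).trans (min_le_left _ _), ?_⟩
    have : min (δ / 2) (min ε (ρ / 2)) ≤ ρ / 2 := (min_le_right _ _).trans (min_le_right _ _)
    linarith
  refine ⟨fun _ => t, continuous_const, fun w hw => ⟨ht0, ht3, ?_⟩⟩
  by_contra hz
  have hfar : ∀ y ∈ E, ε ≤ ‖y - (x + t • -ξ + w • ν)‖ := fun y hy =>
    ((notMem_eNbhd S.hE hε).1 hz y hy).le
  have e0 : x + t • -ξ + w • ν - x = -t • ξ + w • ν := by module
  have h1 := S.thin hfar
  have h2 := S.fr.norm_sq (x + t • -ξ + w • ν - x)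
  have e1 : ⟪x + t • -ξ + w • ν - x, ξ⟫ = -t := by
    rw [e0, inner_add_left, inner_smul_left, inner_smul_left, S.fr.xx, S.fr.nx]; simp
  have e2 : ⟪x + t • -ξ + w • ν - x, ν⟫ = w := by
    rw [e0, inner_add_left, inner_smul_left, inner_smul_left, S.fr.nn, S.fr.h3]; simp
  have h3 := hside _ hz
  rw [e1] at h2 h3
  rw [e2] at h1 h2
  rw [← sq_abs w] at h2
  have h4 : |w| ≤ t := by
    have h0 := abs_nonneg w
    have : ε * |w| ≤ ε * t := by nlinarith
    exact le_of_mul_le_mul_left this hε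
  have h5 : ‖x + t • -ξ + w • ν - x‖ < δ := by
    apply lt_of_pow_lt_pow_left₀ 2 hδ.le
    have h0 := abs_nonneg w
    nlinarith
  have := h3 h5
  linarith

lemma isPreconnected_comp {V : Set Plane} (hV : IsCompOfCompl E ε V) :
    IsPreconnected V ∧ V ⊆ (eNbhd E ε)ᶜ := by
  obtain ⟨z, hz, rfl⟩ := hV
  exact ⟨isPreconnected_connectedComponentIn, connectedComponentIn_subset _ _⟩

lemma backward (hE : IsCompact E) (hε : 0 < ε) (hx : x ∈ frontier (eNbhd E ε))
    (h : IsChainSing E ε x ∨ IsChainChain E ε x) :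
    ∀ V, IsCompOfCompl E ε V → x ∉ frontier V := by
  intro V hV hxV
  obtain ⟨hV1, hV2⟩ := isPreconnected_comp hV
  have hxV' : x ∈ closure V := frontier_subset_closure hxV
  rcases h with ⟨-, ⟨ξ, hext⟩, v, hv⟩ | ⟨-, ξ, hext, hch⟩
  · obtain ⟨e, he, hp, hm⟩ := opp_of_chain hE hε hv
    have ho : ξ ∈ extOutward E ε x := by rw [hext]; simp
    have S := pinch_of_opp hE hε hx ho.1 he hp hm
    have hn : -ξ ∉ outwardDirs E ε x := by
      intro hn
      have : -ξ ∈ extOutward E ε x := by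
        obtain ⟨y, hy, h⟩ := ho.2
        exact ⟨hn, y, hy, by rw [inner_neg_right, h, neg_zero]⟩
      rw [hext, mem_singleton_iff] at this
      have h1 := S.fr.xx
      have h2 : ⟪-ξ, ξ⟫ = 1 := by rw [this]; exact h1
      rw [inner_neg_left] at h2
      linarith
    refine S.no_access (S.cut_of_chain ho.1 hv ?_) (S.cut_of_empty hn) hV1 hV2 hxV'
    obtain ⟨δ, hδ, hside⟩ := S.side hn
    have ev : ∀ᶠ n in atTop, ‖v n - x‖ < min δ ε := by
      have := Metric.tendsto_nhds.1 hv.2.2.1 (min δ ε) (by positivity)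
      simpa only [dist_eq_norm] using this
    filter_upwards [ev] with n hn'
    have hfr := (hv.1 n).1
    have hfar := far_of_frontier hE hε hfr
    have t2 := S.thin2 hfar (hn'.le.trans (min_le_right _ _))
    have hne : 0 < ‖v n - x‖ := norm_pos_iff.2 (sub_ne_zero.2 (hv.2.1 n))
    have h0 : 0 ≤ ⟪v n - x, ξ⟫ := by
      by_contra hneg
      push Not at hneg
      have ho : IsOpen ({z : Plane | ‖z - x‖ < δ} ∩ {z : Plane | ⟪z - x, ξ⟫ < 0}) :=
        (isOpen_lt (by fun_prop) (by fun_prop)).inter (isOpen_lt (by fun_prop) (by fun_prop))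
      obtain ⟨z, ⟨hz1, hz2⟩, hz⟩ := mem_closure_iff.1 (frontier_iff.1 hfr).2 _ ho
        ⟨hn'.trans_le (min_le_left _ _), hneg⟩
      have := hside z hz hz1
      exact absurd this (not_lt.2 (le_of_lt hz2))
    refine lt_of_le_of_ne h0 fun h => ?_
    rw [← h] at t2
    nlinarith
  · have ho : ξ ∈ extOutward E ε x := by rw [hext]; simp
    have ho' : -ξ ∈ extOutward E ε x := by rw [hext]; simp
    obtain ⟨δ1, -, v1, hv1, hs1⟩ := hch ξ (by simp)
    obtain ⟨δ2, -, v2, hv2, hs2⟩ := hch (-ξ) (by simp)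
    obtain ⟨e, he, hp, hm⟩ := opp_of_chain hE hε hv1
    have S := pinch_of_opp hE hε hx ho.1 he hp hm
    exact S.no_access (S.cut_of_chain ho.1 hv1 (Eventually.of_forall fun n => (hs1 n).2))
      (S.negl.cut_of_chain ho'.1 hv2 (Eventually.of_forall fun n => (hs2 n).2)) hV1 hV2 hxV'

lemma Frame.sgn_outward (fr : Frame ξ ν) (hE : IsCompact E) (hε : 0 < ε) {d : Plane}
    (hd : d ∈ outwardDirs E ε u)
    {yp ym : Plane} (hp : yp ∈ E) (hpu : ‖yp - u‖ = ε) (hpν : 0 < ⟪yp - u, ν⟫)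
    (hm : ym ∈ E) (hmu : ‖ym - u‖ = ε) (hmν : ⟪ym - u, ν⟫ < 0) : ⟪d, ξ⟫ ≠ 0 := by
  intro h0
  have h1 := outward_inner_nonpos hE hε hd hp hpu
  have h2 := outward_inner_nonpos hE hε hd hm hmu
  rw [fr.inner_eq, h0] at h1 h2
  have h3 := fr.norm_sq d
  rw [hd.1, h0] at h3
  have h4 : ⟪d, ν⟫ ≤ 0 := by
    by_contra h; push Not at h; nlinarith
  have h5 : 0 ≤ ⟪d, ν⟫ := by
    by_contra h; push Not at h; nlinarith
  have : ⟪d, ν⟫ = 0 := le_antisymm h4 h5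
  rw [this] at h3
  norm_num at h3

lemma slope_unique {s1 w1 s2 w2 ε : ℝ} (h1 : s1 ^ 2 + w1 ^ 2 = ε ^ 2) (h2 : s2 ^ 2 + w2 ^ 2 = ε ^ 2)
    (hs : 0 < w1 * w2) (he : s1 / w1 = s2 / w2) : s1 = s2 ∧ w1 = w2 := by
  have n1 : w1 ≠ 0 := by rintro rfl; simp at hs
  have n2 : w2 ≠ 0 := by rintro rfl; simp at hs
  set m := s2 / w2 with hm
  have e1 : s1 = m * w1 := by rw [← he, div_mul_cancel₀ _ n1]
  have e2 : s2 = m * w2 := by rw [hm, div_mul_cancel₀ _ n2]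
  have h3 : (m ^ 2 + 1) * ((w1 - w2) * (w1 + w2)) = 0 := by
    rw [e1] at h1; rw [e2] at h2; linear_combination h1 - h2
  have h4 : (w1 - w2) * (w1 + w2) = 0 :=
    (mul_eq_zero.1 h3).resolve_left (by positivity)
  have h5 : w1 = w2 := by
    rcases mul_eq_zero.1 h4 with h | h
    · linarith
    · exfalso
      have : w2 = -w1 := by linarith
      rw [this] at hs
      nlinarith [sq_nonneg w1]
  exact ⟨by rw [e1, e2, h5], h5⟩

lemma ext_two_aux (hE : IsCompact E) (hε : 0 < ε) (hu : u ∈ frontier (eNbhd E ε))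
    (fr : Frame ξ ν) (hne : ∀ y ∈ E, ‖y - u‖ = ε → ⟪y - u, ν⟫ ≠ 0)
    {yp ym : Plane} (hp : yp ∈ E) (hpu : ‖yp - u‖ = ε) (hpν : 0 < ⟪yp - u, ν⟫)
    (hm : ym ∈ E) (hmu : ‖ym - u‖ = ε) (hmν : ⟪ym - u, ν⟫ < 0)
    {d : Plane} (hd : d ∈ outwardDirs E ε u) (hda : 0 < ⟪d, ξ⟫) :
    ∃ y1 y2, y1 ∈ E ∧ ‖y1 - u‖ = ε ∧ 0 < ⟪y1 - u, ν⟫ ∧ y2 ∈ E ∧ ‖y2 - u‖ = ε ∧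
      ⟪y2 - u, ν⟫ < 0 ∧ extContrib E ε u = {y1, y2} := by
  set f : Plane → ℝ := fun y => ⟪y - u, ξ⟫ / ⟪y - u, ν⟫ with hf
  set Kp : Set Plane := E ∩ ({y | ‖y - u‖ = ε} ∩ {y | 0 ≤ ⟪y - u, ν⟫}) with hKp
  set Km : Set Plane := E ∩ ({y | ‖y - u‖ = ε} ∩ {y | ⟪y - u, ν⟫ ≤ 0}) with hKm
  have cKp : IsCompact Kp := hE.inter_right
    ((isClosed_eq (by fun_prop) (by fun_prop)).inter (isClosed_le (by fun_prop) (by fun_prop)))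
  have cKm : IsCompact Km := hE.inter_right
    ((isClosed_eq (by fun_prop) (by fun_prop)).inter (isClosed_le (by fun_prop) (by fun_prop)))
  have fp : ContinuousOn f Kp := by
    apply ContinuousOn.div (by fun_prop) (by fun_prop)
    intro y hy
    exact hne y hy.1 hy.2.1
  have fm : ContinuousOn f Km := by
    apply ContinuousOn.div (by fun_prop) (by fun_prop)
    intro y hy
    exact hne y hy.1 hy.2.1
  obtain ⟨y1, ⟨h1E, h1u, h1ν'⟩, hmax⟩ := cKp.exists_isMaxOn ⟨yp, hp, hpu, hpν.le⟩ fp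
  obtain ⟨y2, ⟨h2E, h2u, h2ν'⟩, hmin⟩ := cKm.exists_isMinOn ⟨ym, hm, hmu, hmν.le⟩ fm
  have h1ν : 0 < ⟪y1 - u, ν⟫ := lt_of_le_of_ne h1ν' (hne y1 h1E h1u).symm
  have h2ν : ⟪y2 - u, ν⟫ < 0 := lt_of_le_of_ne h2ν' (hne y2 h2E h2u)
  change ‖y1 - u‖ = ε at h1u
  change ‖y2 - u‖ = ε at h2u
  have hmax' : ∀ y ∈ E, ‖y - u‖ = ε → 0 < ⟪y - u, ν⟫ → f y ≤ f y1 := fun y a b c =>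
    hmax ⟨a, b, c.le⟩
  have hmin' : ∀ y ∈ E, ‖y - u‖ = ε → ⟪y - u, ν⟫ < 0 → f y2 ≤ f y := fun y a b c =>
    hmin ⟨a, b, c.le⟩
  have sf : ∀ y ∈ E, ‖y - u‖ = ε → ⟪y - u, ξ⟫ = f y * ⟪y - u, ν⟫ := fun y a b =>
    (div_mul_cancel₀ _ (hne y a b)).symm
  -- the outward inequality in terms of slopes
  have op : ∀ c ∈ outwardDirs E ε u, ∀ y ∈ E, ‖y - u‖ = ε → 0 < ⟪y - u, ν⟫ →
      f y * ⟪c, ξ⟫ + ⟪c, ν⟫ ≤ 0 := by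
    intro c hc y hy hyu hyν
    have h := outward_inner_nonpos hE hε hc hy hyu
    rw [fr.inner_eq, sf y hy hyu] at h
    by_contra hcon
    push Not at hcon
    nlinarith [mul_pos hcon hyν]
  have om : ∀ c ∈ outwardDirs E ε u, ∀ y ∈ E, ‖y - u‖ = ε → ⟪y - u, ν⟫ < 0 →
      0 ≤ f y * ⟪c, ξ⟫ + ⟪c, ν⟫ := by
    intro c hc y hy hyu hyν
    have h := outward_inner_nonpos hE hε hc hy hyu
    rw [fr.inner_eq, sf y hy hyu] at h
    by_contra hcon
    push Not at hcon
    nlinarith [mul_pos_of_neg_of_neg hcon hyν]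
  have perp : ∀ c : Plane, ∀ y ∈ E, ‖y - u‖ = ε →
      (⟪y - u, c⟫ = 0 ↔ f y * ⟪c, ξ⟫ + ⟪c, ν⟫ = 0) := by
    intro c y hy hyu
    rw [fr.inner_eq, sf y hy hyu]
    have : f y * ⟪y - u, ν⟫ * ⟪c, ξ⟫ + ⟪y - u, ν⟫ * ⟪c, ν⟫ =
      ⟪y - u, ν⟫ * (f y * ⟪c, ξ⟫ + ⟪c, ν⟫) := by ring
    rw [this, mul_eq_zero, or_iff_right (hne y hy hyu)]
  have uniq : ∀ y ∈ E, ∀ y' ∈ E, ‖y - u‖ = ε → ‖y' - u‖ = ε → 0 < ⟪y - u, ν⟫ * ⟪y' - u, ν⟫ →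
      f y = f y' → y = y' := by
    intro y hy y' hy' hyu hyu' hs he
    have q1 := fr.norm_sq (y - u)
    have q2 := fr.norm_sq (y' - u)
    rw [hyu] at q1
    rw [hyu'] at q2
    obtain ⟨r1, r2⟩ := slope_unique q1.symm q2.symm hs he
    have := fr.ext r1 r2
    exact sub_left_injective this
  have d1 := op d hd y1 h1E h1u h1ν
  have d2 := om d hd y2 h2E h2u h2ν
  have m12 : f y1 ≤ f y2 := by
    have : f y1 * ⟪d, ξ⟫ ≤ f y2 * ⟪d, ξ⟫ := by linarith
    exact le_of_mul_le_mul_right this hda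
  -- outward directions of prescribed slope
  have key : ∀ m, f y1 ≤ m → m ≤ f y2 → ∃ c ∈ outwardDirs E ε u, m * ⟪c, ξ⟫ + ⟪c, ν⟫ = 0 := by
    intro m hm1 hm2
    rcases m12.eq_or_lt with heq | hlt
    · refine ⟨d, hd, ?_⟩
      have : m = f y1 := by linarith
      subst this
      rw [← heq] at d2
      linarith
    · set g : ℝ → Plane := fun m => (‖ξ - m • ν‖)⁻¹ • (ξ - m • ν) with hg
      have nz : ∀ m : ℝ, ‖ξ - m • ν‖ ≠ 0 := by
        intro m h
        rw [norm_eq_zero] at h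
        have : ⟪ξ - m • ν, ξ⟫ = 1 := by
          rw [inner_sub_left, inner_smul_left, fr.xx, fr.nx]; simp
        rw [h, inner_zero_left] at this
        norm_num at this
      have gc : Continuous g := by
        have c1 : Continuous fun m : ℝ => (‖ξ - m • ν‖)⁻¹ := Continuous.inv₀ (by fun_prop) nz
        have c2 : Continuous fun m : ℝ => ξ - m • ν := by fun_prop
        exact c1.smul c2
      have gξ : ∀ m : ℝ, ⟪g m, ξ⟫ = (‖ξ - m • ν‖)⁻¹ := by
        intro m
        simp only [hg]
        rw [inner_smul_left, inner_sub_left, inner_smul_left, fr.xx, fr.nx]; simp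
      have gν : ∀ m : ℝ, ⟪g m, ν⟫ = -(‖ξ - m • ν‖)⁻¹ * m := by
        intro m
        simp only [hg]
        rw [inner_smul_left, inner_sub_left, inner_smul_left, fr.nn, fr.h3]; simp
      have gin : ∀ m, f y1 < m → m < f y2 → g m ∈ outwardDirs E ε u := by
        intro m a b
        apply outward_of_strict hE hε hu
        · simp only [hg]
          rw [norm_smul, norm_inv, norm_norm, inv_mul_cancel₀ (nz m)]
        · intro y hy hyu
          have pos : 0 < (‖ξ - m • ν‖)⁻¹ := inv_pos.2 (lt_of_le_of_ne (norm_nonneg _) (nz m).symm)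
          rw [fr.inner_eq, gξ, gν, sf y hy hyu]
          have e : f y * ⟪y - u, ν⟫ * (‖ξ - m • ν‖)⁻¹ + ⟪y - u, ν⟫ * (-(‖ξ - m • ν‖)⁻¹ * m) =
            (‖ξ - m • ν‖)⁻¹ * (⟪y - u, ν⟫ * (f y - m)) := by ring
          rw [e]
          apply mul_neg_of_pos_of_neg pos
          rcases lt_or_gt_of_ne (hne y hy hyu) with h | h
          · exact mul_neg_of_neg_of_pos h (by have := hmin' y hy hyu h; linarith)
          · exact mul_neg_of_pos_of_neg h (by have := hmax' y hy hyu h; linarith)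
      refine ⟨g m, ?_, by rw [gξ, gν]; ring⟩
      set mid := (f y1 + f y2) / 2 with hmid
      have hl : Tendsto (fun n : ℕ => m + (mid - m) * (1 / ((n:ℝ) + 1))) atTop (𝓝 (m + (mid - m) * 0)) :=
        (tendsto_one_div_add_atTop_nhds_zero_nat.const_mul _).const_add _
      rw [mul_zero, add_zero] at hl
      refine outward_closed (frontier_iff.1 hu).1 (d := fun n : ℕ => g (m + (mid - m) * (1 / ((n:ℝ) + 1))))
        (fun n => ?_) ((gc.tendsto m).comp hl)
      have r0 : 0 < 1 / ((n:ℝ) + 1) := by positivity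
      have r1 : 1 / ((n:ℝ) + 1) ≤ 1 := by
        rw [div_le_one (by positivity)]
        have : (0:ℝ) ≤ n := by positivity
        linarith
      set r := 1 / ((n:ℝ) + 1)
      apply gin
      · nlinarith
      · nlinarith
  refine ⟨y1, y2, h1E, h1u, h1ν, h2E, h2u, h2ν, ?_⟩
  ext y
  simp only [mem_insert_iff, mem_singleton_iff]
  constructor
  · rintro ⟨hy, c, hc, hperp⟩
    obtain ⟨hyE, hyu⟩ := (contrib_iff hE hε hu).1 hy
    rw [perp c y hyE hyu] at hperp
    have c1 := op c hc y1 h1E h1u h1ν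
    have c2 := om c hc y2 h2E h2u h2ν
    have c0 := fr.sgn_outward hE hε hc hp hpu hpν hm hmu hmν
    rcases lt_or_gt_of_ne c0 with hneg | hpos
    · have k1 : f y ≤ f y1 := by
        by_contra h; push Not at h; nlinarith
      have k2 : f y2 ≤ f y := by
        by_contra h; push Not at h; nlinarith
      rcases lt_or_gt_of_ne (hne y hyE hyu) with h | h
      · right; exact uniq y hyE y2 h2E hyu h2u (mul_pos_of_neg_of_neg h h2ν) (by linarith)
      · left; exact uniq y hyE y1 h1E hyu h1u (mul_pos h h1ν) (by linarith)
    · have k1 : f y1 ≤ f y := by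
        by_contra h; push Not at h; nlinarith
      have k2 : f y ≤ f y2 := by
        by_contra h; push Not at h; nlinarith
      rcases lt_or_gt_of_ne (hne y hyE hyu) with h | h
      · right
        have := hmin' y hyE hyu h
        exact uniq y hyE y2 h2E hyu h2u (mul_pos_of_neg_of_neg h h2ν) (by linarith)
      · left
        have := hmax' y hyE hyu h
        exact uniq y hyE y1 h1E hyu h1u (mul_pos h h1ν) (by linarith)
  · rintro (rfl | rfl)
    · obtain ⟨c, hc, h⟩ := key _ le_rfl m12
      exact ⟨(contrib_iff hE hε hu).2 ⟨h1E, h1u⟩, c, hc, (perp c _ h1E h1u).2 h⟩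
    · obtain ⟨c, hc, h⟩ := key _ m12 le_rfl
      exact ⟨(contrib_iff hE hε hu).2 ⟨h2E, h2u⟩, c, hc, (perp c _ h2E h2u).2 h⟩

lemma ext_two (hE : IsCompact E) (hε : 0 < ε) (hu : u ∈ frontier (eNbhd E ε))
    (fr : Frame ξ ν) (hne : ∀ y ∈ E, ‖y - u‖ = ε → ⟪y - u, ν⟫ ≠ 0)
    {yp ym : Plane} (hp : yp ∈ E) (hpu : ‖yp - u‖ = ε) (hpν : 0 < ⟪yp - u, ν⟫)
    (hm : ym ∈ E) (hmu : ‖ym - u‖ = ε) (hmν : ⟪ym - u, ν⟫ < 0) :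
    ∃ y1 y2, y1 ∈ E ∧ ‖y1 - u‖ = ε ∧ 0 < ⟪y1 - u, ν⟫ ∧ y2 ∈ E ∧ ‖y2 - u‖ = ε ∧
      ⟪y2 - u, ν⟫ < 0 ∧ extContrib E ε u = {y1, y2} := by
  obtain ⟨d, hd⟩ := outward_nonempty hu
  rcases lt_or_gt_of_ne (fr.sgn_outward hE hε hd hp hpu hpν hm hmu hmν) with h | h
  · exact ext_two_aux hE hε hu fr.negl hne hp hpu hpν hm hmu hmν hd
      (by rw [inner_neg_right]; linarith)
  · exact ext_two_aux hE hε hu fr hne hp hpu hpν hm hmu hmν hd h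

lemma comp_mem_of_seg {z v : Plane} {A : Set Plane} (hv : v ∈ connectedComponentIn (eNbhd E ε)ᶜ z)
    (hA : IsPreconnected A) (hvA : v ∈ A) (hAs : A ⊆ (eNbhd E ε)ᶜ) :
    A ⊆ connectedComponentIn (eNbhd E ε)ᶜ z := by
  rw [connectedComponentIn_eq hv]
  exact hA.subset_connectedComponentIn hvA hAs

lemma access_of_dir (hE : IsCompact E) (hε : 0 < ε) (hx : x ∈ frontier (eNbhd E ε)) {d : Plane}
    (hd : ∀ y ∈ E, ‖y - x‖ = ε → ⟪y - x, d⟫ < 0) :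
    ∃ V, IsCompOfCompl E ε V ∧ x ∈ frontier V := by
  obtain ⟨τ, hτ, h⟩ := strict_push hE hε hx hd
  have h' : ∀ t, 0 < t → t < τ → x + t • d ∉ eNbhd E ε :=
    h x (by simpa) (far_of_frontier hE hε hx)
  set A : Set Plane := (fun t : ℝ => x + t • d) '' Ioo 0 τ with hA
  have pA : IsPreconnected A := isPreconnected_Ioo.image _ (by fun_prop)
  have sA : A ⊆ (eNbhd E ε)ᶜ := by
    rintro _ ⟨t, ⟨h1, h2⟩, rfl⟩
    exact h' t h1 h2
  have mA : x + (τ / 2) • d ∈ A := ⟨τ / 2, ⟨by linarith, by linarith⟩, rfl⟩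
  have hsub := pA.subset_connectedComponentIn mA sA
  refine ⟨_, ⟨x + (τ / 2) • d, sA mA, rfl⟩, ?_, ?_⟩
  · apply closure_mono hsub
    have h0 : (0:ℝ) ∈ closure (Ioo 0 τ) := by
      rw [closure_Ioo hτ.ne]; exact ⟨le_rfl, hτ.le⟩
    have := image_closure_subset_closure_image (s := Ioo 0 τ)
      (show Continuous fun t : ℝ => x + t • d by fun_prop) ⟨0, h0, rfl⟩
    simpa using this
  · intro hi
    exact connectedComponentIn_subset _ _ (interior_subset hi) (frontier_iff.1 hx).1

lemma exists_push_dir (hE : IsCompact E) (hε : 0 < ε)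
    (ho : ξ ∈ outwardDirs E ε u) (fr : Frame ξ ν) (hn : u + ε • ν ∉ E) :
    ∃ d : Plane, ∀ y ∈ E, ‖y - u‖ = ε → ⟪y - u, d⟫ < 0 := by
  by_contra hcon
  push Not at hcon
  have h3 : ∀ n : ℕ, ∃ y ∈ E, ‖y - u‖ = ε ∧ 0 ≤ ⟪y - u, ξ + (1 / ((n:ℝ) + 1)) • ν⟫ :=
    fun n => hcon _
  choose y hyE hyu hy using h3
  obtain ⟨y₀, hy₀, φ, hφ, hlim⟩ := hE.tendsto_subseq hyE
  have hsub : Tendsto (fun n => y (φ n) - u) atTop (𝓝 (y₀ - u)) := hlim.sub tendsto_const_nhds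
  have e1 : ‖y₀ - u‖ = ε := by
    have := hsub.norm
    simp only [hyu] at this
    exact (tendsto_nhds_unique this tendsto_const_nhds)
  have e2 := outward_inner_nonpos hE hε ho hy₀ e1
  have hy' : ∀ n, 0 ≤ ⟪y n - u, ξ⟫ + 1 / ((n:ℝ) + 1) * ⟪y n - u, ν⟫ := by
    intro n
    have := hy n
    rwa [inner_add_right, inner_smul_right] at this
  have hnn : ∀ n, 0 ≤ ⟪y n - u, ν⟫ := by
    intro n
    have h1 := outward_inner_nonpos hE hε ho (hyE n) (hyu n)
    have h2 := hy' n
    have h3 : 0 ≤ 1 / ((n:ℝ) + 1) * ⟪y n - u, ν⟫ := by linarith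
    exact nonneg_of_mul_nonneg_right h3 (by positivity)
  have lν : Tendsto (fun n => ⟪y (φ n) - u, ν⟫) atTop (𝓝 ⟪y₀ - u, ν⟫) :=
    hsub.inner tendsto_const_nhds
  have lξ : Tendsto (fun n => ⟪y (φ n) - u, ξ⟫) atTop (𝓝 ⟪y₀ - u, ξ⟫) :=
    hsub.inner tendsto_const_nhds
  have e3 : 0 ≤ ⟪y₀ - u, ν⟫ := ge_of_tendsto' lν fun n => hnn _
  have e4 : 0 ≤ ⟪y₀ - u, ξ⟫ := by
    have l1 := (tendsto_one_div_add_atTop_nhds_zero_nat (𝕜 := ℝ)).comp hφ.tendsto_atTop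
    have := ge_of_tendsto' (lξ.add (l1.mul lν)) (fun n => hy' (φ n))
    simpa using this
  have e5 : ⟪y₀ - u, ξ⟫ = 0 := le_antisymm e2 e4
  have e6 := fr.norm_sq (y₀ - u)
  rw [e1, e5] at e6
  have e7 : ⟪y₀ - u, ν⟫ = ε := by
    have : ⟪y₀ - u, ν⟫ ^ 2 = ε ^ 2 := by linarith
    exact (pow_left_inj₀ e3 hε.le two_ne_zero).1 this
  apply hn
  have := fr.decomp (y₀ - u)
  rw [e5, e7, zero_smul, zero_add] at this
  rw [← this]
  simpa using hy₀

lemma exists_pinch (hE : IsCompact E) (hε : 0 < ε) (hx : x ∈ frontier (eNbhd E ε))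
    (hacc : ∀ V, IsCompOfCompl E ε V → x ∉ frontier V) (ho : ξ ∈ outwardDirs E ε x) :
    ∃ ν, Pinch E ε x ξ ν := by
  obtain ⟨ν, fr⟩ := exists_frame ho.1
  refine ⟨ν, hE, hε, hx, fr, ?_, ?_⟩
  · by_contra hn
    obtain ⟨d, hd⟩ := exists_push_dir hE hε ho fr hn
    obtain ⟨V, h1, h2⟩ := access_of_dir hE hε hx hd
    exact hacc V h1 h2
  · by_contra hn
    obtain ⟨d, hd⟩ := exists_push_dir hE hε ho fr.negr (by rwa [smul_neg, ← sub_eq_add_neg])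
    obtain ⟨V, h1, h2⟩ := access_of_dir hE hε hx hd
    exact hacc V h1 h2

/-- If all contributors of `u` lie on one side, a component touching `u` extends to the left. -/
lemma push_left (hE : IsCompact E) (hε : 0 < ε) (fr : Frame ξ ν)
    (hu : u ∈ frontier (eNbhd E ε)) {z : Plane}
    (huV : u ∈ closure (connectedComponentIn (eNbhd E ε)ᶜ z))
    (hc : ∀ y ∈ E, ‖y - u‖ = ε → 0 < ⟪y - u, ν⟫ ∧ ε ^ 2 * (9 / 10) < ⟪y - u, ν⟫ ^ 2)
    {κ : ℝ} (hκ : 0 < κ) :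
    ∃ v ∈ connectedComponentIn (eNbhd E ε)ᶜ z, ‖v - u‖ < κ ∧ ⟪v - x, ξ⟫ < ⟪u - x, ξ⟫ := by
  set d : Plane := -(ξ + ν) with hd
  have hdn : ‖d‖ ≤ 2 := by
    rw [hd, norm_neg]
    have := norm_add_le ξ ν
    rw [fr.h1, fr.h2] at this
    linarith
  obtain ⟨τ, hτ, h⟩ := strict_push hE hε hu (d := d) (by
    intro y hy hyu
    obtain ⟨h1, h2⟩ := hc y hy hyu
    have h3 := fr.norm_sq (y - u)
    rw [hyu] at h3
    rw [hd, inner_neg_right, inner_add_right]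
    have h4 : -⟪y - u, ξ⟫ < ⟪y - u, ν⟫ := lt_of_pow_lt_pow_left₀ 2 h1.le (by
      have : 0 < ε ^ 2 := by positivity
      nlinarith)
    linarith)
  set t := min τ κ / 4 with ht
  have hm : 0 < min τ κ := lt_min hτ hκ
  have t0 : 0 < t := by positivity
  have t1 : t < τ := by have := min_le_left τ κ; linarith
  have t2 : 4 * t ≤ κ := by have := min_le_right τ κ; linarith
  obtain ⟨v₀, hv₀, hdist⟩ := Metric.mem_closure_iff.1 huV t t0
  rw [dist_comm, dist_eq_norm] at hdist
  have hv₀' : v₀ ∉ eNbhd E ε := connectedComponentIn_subset _ _ hv₀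
  set A : Set Plane := (fun r : ℝ => v₀ + r • d) '' Icc 0 t with hA
  have pA : IsPreconnected A := isPreconnected_Icc.image _ (by fun_prop)
  have sA : A ⊆ (eNbhd E ε)ᶜ := by
    rintro _ ⟨r, ⟨h1, h2⟩, rfl⟩
    rcases h1.eq_or_lt with h0 | h0
    · subst h0; simpa using hv₀'
    · exact h v₀ (by linarith) (fun y hy => ((notMem_eNbhd hE hε).1 hv₀' y hy).le) r h0 (by linarith)
  have hsub := comp_mem_of_seg hv₀ pA ⟨0, ⟨le_rfl, t0.le⟩, by simp⟩ sA
  refine ⟨v₀ + t • d, hsub ⟨t, ⟨t0.le, le_rfl⟩, rfl⟩, ?_, ?_⟩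
  · have e : v₀ + t • d - u = (v₀ - u) + t • d := by abel
    have := norm_add_le (v₀ - u) (t • d)
    rw [norm_smul, Real.norm_of_nonneg t0.le] at this
    rw [e]
    nlinarith
  · have e : v₀ + t • d - x = (u - x) + (v₀ - u) + t • d := by abel
    have h5 : ⟪v₀ - u, ξ⟫ < t := by
      have := (le_abs_self _).trans (abs_real_inner_le_norm (v₀ - u) ξ)
      rw [fr.h1, mul_one] at this
      linarith
    have h6 : ⟪d, ξ⟫ = -1 := by
      rw [hd, inner_neg_left, inner_add_left, fr.xx, fr.nx]; norm_num
    rw [e, inner_add_left, inner_add_left, inner_smul_left, h6]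
    simp only [conj_trivial]
    linarith

lemma Pinch.exists_cross (S : Pinch E ε x ξ ν) (ho : ξ ∈ outwardDirs E ε x)
    (hacc : ∀ V, IsCompOfCompl E ε V → x ∉ frontier V) {ρ : ℝ} (hρ : 0 < ρ) :
    ∃ u ∈ frontier (eNbhd E ε), ‖u - x‖ < ρ ∧ 0 < ⟪u - x, ξ⟫ ∧ ∃ y1 y2, y1 ∈ E ∧ ‖y1 - u‖ = ε ∧
      y2 ∈ E ∧ ‖y2 - u‖ = ε ∧ y1 ≠ y2 ∧ extContrib E ε u = {y1, y2} ∧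
      ⟪y1 - u, y2 - u⟫ ≤ -(ε ^ 2 * (1 - 2 * ρ)) := by
  have hε := S.hε
  have hE := S.hE
  have fr := S.fr
  obtain ⟨ρ', hρ'0, hρ'1, hρ'2⟩ : ∃ ρ' > 0, ρ' ≤ ρ ∧ ρ' ≤ 1 / 10 :=
    ⟨min ρ (1 / 10), by positivity, min_le_left _ _, min_le_right _ _⟩
  obtain ⟨δ, hδ, hcl⟩ := S.cluster ho hρ'0
  obtain ⟨r, hr, hr1, hr2, hr3⟩ : ∃ r > 0, r ≤ δ ∧ r ≤ ε ∧ r ≤ ρ :=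
    ⟨min δ (min ε ρ), by positivity, min_le_left _ _, (min_le_right _ _).trans (min_le_left _ _),
      (min_le_right _ _).trans (min_le_right _ _)⟩
  obtain ⟨z, hz, hzx, hzd⟩ := ((mem_outward_iff (frontier_iff.1 S.hx).1).1 ho).2
    (min (r / 4) (1 / 2)) (by positivity)
  have hzx' : ‖z - x‖ < r / 4 := hzx.trans_le (min_le_left _ _)
  have hz0 : 0 < ‖z - x‖ := by
    rw [norm_pos_iff, sub_ne_zero]
    rintro rfl
    exact hz (frontier_iff.1 S.hx).1
  have hzs : 0 < ⟪z - x, ξ⟫ := by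
    have h1 := (abs_real_inner_le_norm ((‖z - x‖)⁻¹ • (z - x) - ξ) ξ)
    rw [fr.h1, mul_one, inner_sub_left, fr.xx, inner_smul_left] at h1
    have h2 := hzd.trans_le (min_le_right _ _)
    have h3 := (abs_le.1 (h1.trans h2.le)).1
    simp only [conj_trivial] at h3
    have h4 : 0 < (‖z - x‖)⁻¹ * ⟪z - x, ξ⟫ := by linarith
    exact pos_of_mul_pos_right h4 (by positivity)
  set V := connectedComponentIn (eNbhd E ε)ᶜ z with hV
  have hVc : IsCompOfCompl E ε V := ⟨z, hz, rfl⟩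
  have hVs : V ⊆ (eNbhd E ε)ᶜ := connectedComponentIn_subset _ _
  have hVo : IsOpen V := isClosed_eNbhd.isOpen_compl.connectedComponentIn
  have hzV : z ∈ V := mem_connectedComponentIn hz
  have hxV : x ∉ closure V := by
    intro h
    refine hacc V hVc ⟨h, fun hi => ?_⟩
    exact hVs (interior_subset hi) (frontier_iff.1 S.hx).1
  have bξ : ∀ v : Plane, |⟪v, ξ⟫| ≤ ‖v‖ := fun v => by
    have := abs_real_inner_le_norm v ξ
    rwa [fr.h1, mul_one] at this
  have bν : ∀ v : Plane, |⟪v, ν⟫| ≤ ‖v‖ := fun v => by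
    have := abs_real_inner_le_norm v ν
    rwa [fr.h2, mul_one] at this
  set K : Set Plane := closure V ∩ ({v | 0 ≤ ⟪v - x, ξ⟫} ∩ ({v | ⟪v - x, ξ⟫ ≤ ⟪z - x, ξ⟫} ∩
    {v | |⟪v - x, ν⟫| ≤ r / 4})) with hK
  have hzr : ⟪z - x, ξ⟫ < r / 4 := ((le_abs_self _).trans (bξ _)).trans_lt hzx'
  have normK : ∀ v ∈ K, ‖v - x‖ < r := by
    rintro v ⟨-, h1, h2, h3⟩
    simp only [mem_ofPred_eq] at h1 h2 h3
    have h4 := fr.norm_sq (v - x)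
    rw [← sq_abs ⟪v - x, ν⟫] at h4
    apply lt_of_pow_lt_pow_left₀ 2 hr.le
    have := abs_nonneg ⟪v - x, ν⟫
    nlinarith
  have clK : IsClosed K := isClosed_closure.inter ((isClosed_le (by fun_prop) (by fun_prop)).inter
    ((isClosed_le (by fun_prop) (by fun_prop)).inter (isClosed_le (by fun_prop) (by fun_prop))))
  have cK : IsCompact K := by
    refine (isCompact_closedBall x r).of_isClosed_subset clK fun v hv => ?_
    rw [mem_closedBall, dist_eq_norm]
    exact (normK v hv).le
  have zK : z ∈ K := ⟨subset_closure hzV, hzs.le, le_refl ⟪z - x, ξ⟫, ((bν _).trans_lt hzx').le⟩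
  obtain ⟨u, huK, hmin⟩ := cK.exists_isMinOn ⟨z, zK⟩
    (show ContinuousOn (fun v : Plane => ⟪v - x, ξ⟫) K by fun_prop)
  have hux := normK u huK
  obtain ⟨huV, hu1, hu2, hu3⟩ := huK
  simp only [mem_ofPred_eq] at hu1 hu2 hu3
  have huc : u ∈ closure (eNbhd E ε)ᶜ := closure_mono hVs huV
  have hfar := far_of_closure hE hε huc
  have t1 := S.thin hfar
  have t2 := S.thin2 hfar (by linarith)
  have hus : 0 < ⟪u - x, ξ⟫ := by
    refine lt_of_le_of_ne hu1 fun h => hxV ?_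
    rw [← h] at t2
    have : ‖u - x‖ = 0 := by
      have h0 := norm_nonneg (u - x)
      nlinarith
    rw [norm_eq_zero, sub_eq_zero] at this
    rwa [← this]
  have huw : |⟪u - x, ν⟫| < r / 4 := by
    have h1 : ε * |⟪u - x, ν⟫| ≤ ⟪u - x, ξ⟫ ^ 2 := by linarith
    have h2 : ε * |⟪u - x, ν⟫| < ε * (r / 4) := by nlinarith
    exact lt_of_mul_lt_mul_left h2 hε.le
  -- minimality
  have hno : ¬ ∀ κ > 0, ∃ v ∈ V, ‖v - u‖ < κ ∧ ⟪v - x, ξ⟫ < ⟪u - x, ξ⟫ := by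
    intro h
    obtain ⟨v, hv, hvu, hvs⟩ := h (min ⟪u - x, ξ⟫ (r / 4 - |⟪u - x, ν⟫|))
      (lt_min hus (by linarith))
    have k1 := hvu.trans_le (min_le_left _ _)
    have k2 := hvu.trans_le (min_le_right _ _)
    have e : v - x = (v - u) + (u - x) := by abel
    have : v ∈ K := by
      refine ⟨subset_closure hv, ?_, ?_, ?_⟩
      · have := (abs_le.1 (bξ (v - u))).1
        simp only [mem_ofPred_eq]
        rw [e, inner_add_left]; linarith
      · simp only [mem_ofPred_eq]; linarith
      · simp only [mem_ofPred_eq]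
        have h1 := bν (v - u)
        have h2 := abs_add_le ⟪v - u, ν⟫ ⟪u - x, ν⟫
        rw [e, inner_add_left]; linarith
    have h3 : ⟪u - x, ξ⟫ ≤ ⟪v - x, ξ⟫ := hmin this
    linarith
  have huE : u ∈ eNbhd E ε := by
    by_contra huE
    apply hno
    intro κ hκ
    obtain ⟨ρ₁, hρ₁, hball⟩ := Metric.isOpen_iff.1 isClosed_eNbhd.isOpen_compl u huE
    obtain ⟨v₀, hv₀, hd₀⟩ := Metric.mem_closure_iff.1 huV ρ₁ hρ₁
    have hbV : ball u ρ₁ ⊆ V := comp_mem_of_seg hv₀ (convex_ball u ρ₁).isPreconnected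
      (by rw [mem_ball, dist_comm]; exact hd₀) hball
    set t := min κ ρ₁ / 2 with ht
    have hm : 0 < min κ ρ₁ := lt_min hκ hρ₁
    have m1 := min_le_left κ ρ₁
    have m2 := min_le_right κ ρ₁
    have e1 : u - t • ξ - u = -(t • ξ) := by abel
    have e2 : ‖u - t • ξ - u‖ = t := by
      rw [e1, norm_neg, norm_smul, fr.h1, mul_one, Real.norm_of_nonneg (by positivity)]
    refine ⟨u - t • ξ, hbV ?_, by rw [e2]; linarith, ?_⟩
    · rw [mem_ball, dist_eq_norm, e2]; linarith
    · have e3 : u - t • ξ - x = (u - x) - t • ξ := by abel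
      rw [e3, inner_sub_left, inner_smul_left, fr.xx]
      simp only [conj_trivial]
      linarith
  have huf : u ∈ frontier (eNbhd E ε) := frontier_iff.2 ⟨huE, huc⟩
  have hcu := hcl u (by linarith) hus hfar
  have hε2 : 0 < ε ^ 2 := by positivity
  have hcu' : ∀ y ∈ E, ‖y - u‖ = ε → ε ^ 2 * (9 / 10) < ⟪y - u, ν⟫ ^ 2 := by
    intro y hy hyu
    have := hcu y hy hyu
    nlinarith
  have hne : ∀ y ∈ E, ‖y - u‖ = ε → ⟪y - u, ν⟫ ≠ 0 := by
    intro y hy hyu h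
    have := hcu' y hy hyu
    rw [h] at this
    nlinarith
  obtain ⟨ym, hm, hmu, hmν⟩ : ∃ y ∈ E, ‖y - u‖ = ε ∧ ⟪y - u, ν⟫ < 0 := by
    by_contra hcon
    push Not at hcon
    apply hno
    intro κ hκ
    exact push_left hE hε fr huf huV (fun y hy hyu =>
      ⟨lt_of_le_of_ne (hcon y hy hyu) (hne y hy hyu).symm, hcu' y hy hyu⟩) hκ
  obtain ⟨yp, hp, hpu, hpν⟩ : ∃ y ∈ E, ‖y - u‖ = ε ∧ 0 < ⟪y - u, ν⟫ := by
    by_contra hcon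
    push Not at hcon
    apply hno
    intro κ hκ
    refine push_left hE hε fr.negr huf huV (fun y hy hyu => ?_) hκ
    rw [inner_neg_right, neg_sq]
    exact ⟨neg_pos.2 (lt_of_le_of_ne (hcon y hy hyu) (hne y hy hyu)), hcu' y hy hyu⟩
  obtain ⟨y1, y2, h1E, h1u, h1ν, h2E, h2u, h2ν, hext⟩ :=
    ext_two hE hε huf fr hne hp hpu hpν hm hmu hmν
  refine ⟨u, huf, by linarith, hus, y1, y2, h1E, h1u, h2E, h2u, ?_, hext, ?_⟩
  · rintro rfl; linarith
  · have q1 := fr.norm_sq (y1 - u)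
    have q2 := fr.norm_sq (y2 - u)
    rw [h1u] at q1
    rw [h2u] at q2
    have c1 := hcu y1 h1E h1u
    have c2 := hcu y2 h2E h2u
    rw [fr.inner_eq]
    set s1 := ⟪y1 - u, ξ⟫
    set s2 := ⟪y2 - u, ξ⟫
    set w1 := ⟪y1 - u, ν⟫
    set w2 := ⟪y2 - u, ν⟫
    have a1 : s1 * s2 ≤ ε ^ 2 * ρ' := by nlinarith [sq_nonneg (s1 - s2)]
    have a2 : ε ^ 2 * (1 - ρ') ≤ w1 * (-w2) := by
      have hA : 0 ≤ ε ^ 2 * (1 - ρ') := by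
        apply mul_nonneg hε2.le; linarith
      have : (ε ^ 2 * (1 - ρ')) ^ 2 ≤ (w1 * (-w2)) ^ 2 := by
        have e : (w1 * (-w2)) ^ 2 = w1 ^ 2 * w2 ^ 2 := by ring
        rw [e, sq]
        exact mul_le_mul c1.le c2.le hA (sq_nonneg _)
      exact le_of_sq_le_sq this (mul_nonneg h1ν.le (by linarith))
    have a3 : ε ^ 2 * ρ' ≤ ε ^ 2 * ρ := by gcongr
    linarith

lemma sing_of_two (hE : IsCompact E) (hε : 0 < ε) (hu : u ∈ frontier (eNbhd E ε)) {y1 y2 : Plane}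
    (h1 : y1 ∈ E) (h1u : ‖y1 - u‖ = ε) (h2 : y2 ∈ E) (h2u : ‖y2 - u‖ = ε) (hne : y1 ≠ y2) :
    IsSingularity E ε u := by
  refine ⟨hu, fun hs => ?_⟩
  obtain ⟨-, y, hy⟩ := hs.1
  have m1 := (contrib_iff hE hε hu).2 ⟨h1, h1u⟩
  have m2 := (contrib_iff hE hε hu).2 ⟨h2, h2u⟩
  rw [hy, mem_singleton_iff] at m1 m2
  exact hne (m1.trans m2.symm)

lemma Pinch.exists_chain (S : Pinch E ε x ξ ν) (ho : ξ ∈ outwardDirs E ε x)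
    (hacc : ∀ V, IsCompOfCompl E ε V → x ∉ frontier V) :
    ∃ v, IsChainSeq E ε x v ∧ ∀ n, v n ∈ halfBall x ξ 2 := by
  have hε := S.hε
  have h : ∀ n : ℕ, _ := fun n => S.exists_cross ho hacc (ρ := 1 / ((n:ℝ) + 1)) (by positivity)
  choose v hv hvx hvs y1 y2 h1 h1u h2 h2u hne hext hin using h
  refine ⟨v, ⟨fun n => sing_of_two S.hE hε (hv n) (h1 n) (h1u n) (h2 n) (h2u n) (hne n), ?_,
    tendsto_of_lt hvx, y1, y2, hext, ?_⟩, ?_⟩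
  · intro n h
    have := hvs n
    rw [h, sub_self, inner_zero_left] at this
    exact lt_irrefl _ this
  · have l1 : Tendsto (fun n : ℕ => -(1 - 2 * (1 / ((n:ℝ) + 1)))) atTop (𝓝 (-(1 - 2 * 0))) :=
      ((tendsto_one_div_add_atTop_nhds_zero_nat.const_mul 2).const_sub 1).neg
    rw [mul_zero, sub_zero] at l1
    refine tendsto_of_tendsto_of_tendsto_of_le_of_le tendsto_const_nhds l1 (fun n => ?_) (fun n => ?_)
    · have := (abs_le.1 (abs_real_inner_le_norm (ε⁻¹ • (y1 n - v n)) (ε⁻¹ • (y2 n - v n)))).1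
      rw [norm_smul, norm_smul, h1u, h2u, norm_inv, Real.norm_of_nonneg hε.le,
        inv_mul_cancel₀ hε.ne'] at this
      simpa using this
    · have := hin n
      simp only
      rw [inner_smul_left, inner_smul_right]
      simp only [conj_trivial]
      have e : ε⁻¹ * (ε⁻¹ * ⟪y1 n - v n, y2 n - v n⟫) = ⟪y1 n - v n, y2 n - v n⟫ / ε ^ 2 := by
        field_simp
      rw [e, div_le_iff₀ (by positivity)]
      linarith
  · intro n
    refine ⟨?_, hvs n⟩
    rw [mem_ball, dist_eq_norm]
    have : 1 / ((n:ℝ) + 1) ≤ 1 := by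
      rw [div_le_one (by positivity)]
      have : (0:ℝ) ≤ n := by positivity
      linarith
    linarith [hvx n]

lemma forward (hE : IsCompact E) (hε : 0 < ε) (hx : x ∈ frontier (eNbhd E ε))
    (hacc : ∀ V, IsCompOfCompl E ε V → x ∉ frontier V) :
    IsChainSing E ε x ∨ IsChainChain E ε x := by
  obtain ⟨ξ, ho⟩ := outward_nonempty hx
  obtain ⟨ν, S⟩ := exists_pinch hE hε hx hacc ho
  have np : ‖x + ε • ν - x‖ = ε := by simp [norm_smul, S.fr.h2, abs_of_pos hε]
  have nm : ‖x - ε • ν - x‖ = ε := by simp [norm_smul, S.fr.h2, abs_of_pos hε]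
  have hsing : IsSingularity E ε x := by
    refine sing_of_two hE hε hx S.hp np S.hm nm fun h => ?_
    have h1 : ⟪x + ε • ν - x, ν⟫ = ε := by
      rw [add_sub_cancel_left, inner_smul_left, S.fr.nn]; simp
    rw [h] at h1
    have e : x - ε • ν - x = -(ε • ν) := by abel
    rw [e, inner_neg_left, inner_smul_left, S.fr.nn] at h1
    simp only [conj_trivial] at h1
    linarith
  have hext : ∀ η ∈ outwardDirs E ε x, η ∈ extOutward E ε x := by
    intro η hη
    refine ⟨hη, x + ε • ν, (contrib_iff hE hε hx).2 ⟨S.hp, np⟩, ?_⟩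
    have : ⟪x + ε • ν - x, ξ⟫ = 0 := by
      rw [add_sub_cancel_left, inner_smul_left, S.fr.nx, mul_zero]
    rcases S.outward_pm hη with rfl | rfl
    · exact this
    · rw [inner_neg_right, this, neg_zero]
  by_cases hn : -ξ ∈ outwardDirs E ε x
  · right
    refine ⟨hsing, ξ, ?_, ?_⟩
    · ext η
      simp only [mem_insert_iff, mem_singleton_iff]
      constructor
      · intro h; exact S.outward_pm h.1
      · rintro (rfl | rfl)
        · exact hext _ ho
        · exact hext _ hn
    · intro η hη
      simp only [mem_insert_iff, mem_singleton_iff] at hη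
      rcases hη with rfl | rfl
      · exact ⟨2, by norm_num, S.exists_chain ho hacc⟩
      · exact ⟨2, by norm_num, S.negl.exists_chain hn hacc⟩
  · left
    refine ⟨hsing, ⟨ξ, ?_⟩, ?_⟩
    · ext η
      simp only [mem_singleton_iff]
      constructor
      · intro h
        rcases S.outward_pm h.1 with rfl | rfl
        · rfl
        · exact absurd h.1 hn
      · rintro rfl
        exact hext _ ho
    · obtain ⟨v, hv, -⟩ := S.exists_chain ho hacc
      exact ⟨v, hv⟩

end Inacc

/-- Inaccessible singularities: a boundary point of `E_ε` lies on the boundary of no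
connected component of the complement if and only if it is a one-sided chain singularity
(S6) or a chain-chain singularity (S7). -/
theorem inaccessible_singularities (E : Set Plane) (hE : IsCompact E) {ε : ℝ}
    (hε : 0 < ε) (x : Plane) (hx : x ∈ frontier (eNbhd E ε)) :
    (∀ V, IsCompOfCompl E ε V → x ∉ frontier V) ↔
      (IsChainSing E ε x ∨ IsChainChain E ε x) := by
  exact ⟨Inacc.forward hE hε hx, Inacc.backward hE hε hx⟩

end
end

section
/- Let E ⊆ ℝ² be compact, ε > 0, and x ∈ ∂E_ε. Then the following are equivalent: (a) there exists a sequence (V_n) of pairwise disjoint connected components of E_ε^c with Hausdorff distance dist_H({x}, V_n) → 0 as n → ∞; (b) there exists a sequence (x_n) of singularities on ∂E_ε with x_n ≠ x, x_n → x, and ⟨(y_n^{(1)} − x_n)/ε, (y_n^{(2)} − x_n)/ε⟩ → −1, where Π_ext(x_n) = {y_n^{(1)}, y_n^{(2)}}. -/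
open Metric Set Filter Topology RealInnerProductSpace

noncomputable section

/-! ## Basic plane geometry -/

lemma inner_coord (a b : Plane) : ⟪a, b⟫ = a 0 * b 0 + a 1 * b 1 := by
  simp [PiLp.inner_apply, Fin.sum_univ_two]; ring

lemma normSq_coord (a : Plane) : ‖a‖ ^ 2 = a 0 ^ 2 + a 1 ^ 2 := by
  rw [← real_inner_self_eq_norm_sq, inner_coord]; ring

/-- Rotation by a right angle. -/
def rotJ (v : Plane) : Plane := !₂[-v 1, v 0]

@[simp] lemma rotJ_zero (v : Plane) : rotJ v 0 = -v 1 := by simp [rotJ]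
@[simp] lemma rotJ_one (v : Plane) : rotJ v 1 = v 0 := by simp [rotJ]

lemma plane_ext {a b : Plane} (h0 : a 0 = b 0) (h1 : a 1 = b 1) : a = b := by
  ext i; fin_cases i <;> assumption

lemma norm_rotJ (v : Plane) : ‖rotJ v‖ = ‖v‖ := by
  have h : ‖rotJ v‖ ^ 2 = ‖v‖ ^ 2 := by
    rw [normSq_coord, normSq_coord]; simp; ring
  exact (pow_left_inj₀ (norm_nonneg _) (norm_nonneg _) two_ne_zero).1 h

lemma norm_sub_smul_sq (y u v : Plane) (t : ℝ) :
    ‖y - (u + t • v)‖ ^ 2 = ‖y - u‖ ^ 2 - 2 * t * ⟪y - u, v⟫ + t ^ 2 * ‖v‖ ^ 2 := by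
  simp only [normSq_coord, inner_coord, PiLp.sub_apply, PiLp.add_apply, PiLp.smul_apply,
    smul_eq_mul]; ring

/-- Two vectors of equal norm that are not opposite; dual direction alternative. -/
lemma cone_dichotomy {ε : ℝ} (hε : 0 < ε) (w1 w2 e : Plane) (h1 : ‖w1‖ = ε) (h2 : ‖w2‖ = ε)
    (he : ‖e‖ = 1) (hne : w1 ≠ -w2) :
    (∃ a b : ℝ, 0 ≤ a ∧ 0 ≤ b ∧ e = a • w1 + b • w2) ∨
    (∃ v : Plane, ⟪w1, v⟫ < 0 ∧ ⟪w2, v⟫ < 0 ∧ 0 < ⟪e, v⟫) := by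
  have n1 := normSq_coord w1
  have n2 := normSq_coord w2
  have n3 := normSq_coord e
  rw [h1] at n1; rw [h2] at n2; rw [he] at n3
  by_cases hD : w1 0 * w2 1 - w1 1 * w2 0 = 0
  · -- parallel, hence equal
    have heq : w1 = w2 := by
      have hi : (⟪w1, w2⟫) ^ 2 = (ε ^ 2) ^ 2 := by
        rw [inner_coord]
        have : (w1 0 * w2 0 + w1 1 * w2 1) ^ 2 =
          (w1 0 ^ 2 + w1 1 ^ 2) * (w2 0 ^ 2 + w2 1 ^ 2) - (w1 0 * w2 1 - w1 1 * w2 0) ^ 2 := by ring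
        rw [this, hD, ← n1, ← n2]; ring
      rcases sq_eq_sq_iff_eq_or_eq_neg.1 hi with h | h
      · have : ‖w1 - w2‖ ^ 2 = 0 := by
          rw [norm_sub_sq_real, h1, h2, h]; ring
        exact sub_eq_zero.1 (norm_eq_zero.1 (pow_eq_zero_iff two_ne_zero |>.1 this))
      · exfalso; apply hne
        have : ‖w1 + w2‖ ^ 2 = 0 := by
          rw [norm_add_sq_real, h1, h2, h]; ring
        exact eq_neg_of_add_eq_zero_left (norm_eq_zero.1 (pow_eq_zero_iff two_ne_zero |>.1 this))
    subst heq
    by_cases hew : ε • e = w1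
    · left
      refine ⟨ε⁻¹, 0, by positivity, le_refl _, ?_⟩
      rw [← hew, smul_smul, inv_mul_cancel₀ hε.ne']; simp
    · right
      have hpos : 0 < ‖ε • e - w1‖ ^ 2 := by
        have := norm_pos_iff.2 (sub_ne_zero.2 hew); positivity
      rw [norm_sub_sq_real, norm_smul, he, h1, Real.norm_eq_abs, abs_of_pos hε,
        inner_smul_left] at hpos
      simp at hpos
      have hlt : ⟪e, w1⟫ < ε := by nlinarith
      have hlt' : ⟪w1, e⟫ < ε := by rw [real_inner_comm]; exact hlt
      have : ⟪w1, ε • e - w1⟫ < 0 := by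
        rw [inner_sub_right, inner_smul_right, real_inner_self_eq_norm_sq, h1]; nlinarith
      refine ⟨ε • e - w1, this, this, ?_⟩
      rw [inner_sub_right, inner_smul_right, real_inner_self_eq_norm_sq, he]; nlinarith
  · set D := w1 0 * w2 1 - w1 1 * w2 0 with hDdef
    set a := (e 0 * w2 1 - e 1 * w2 0) / D with ha
    set b := (w1 0 * e 1 - w1 1 * e 0) / D with hb
    have hexp : e = a • w1 + b • w2 := by
      apply plane_ext
      · simp only [PiLp.add_apply, PiLp.smul_apply, smul_eq_mul, ha, hb]
        field_simp
        rw [hDdef]; ring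
      · simp only [PiLp.add_apply, PiLp.smul_apply, smul_eq_mul, ha, hb]
        field_simp
        rw [hDdef]; ring
    have key : ∀ α β : ℝ, ∃ v : Plane, ⟪w1, v⟫ = -α ∧ ⟪w2, v⟫ = -β := by
      intro α β
      refine ⟨(α / D) • rotJ w2 - (β / D) • rotJ w1, ?_, ?_⟩
      · rw [inner_coord]
        simp only [PiLp.sub_apply, PiLp.smul_apply, smul_eq_mul, rotJ_zero, rotJ_one]
        field_simp
        rw [hDdef]; ring
      · rw [inner_coord]
        simp only [PiLp.sub_apply, PiLp.smul_apply, smul_eq_mul, rotJ_zero, rotJ_one]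
        field_simp
        rw [hDdef]; ring
    by_cases ha0 : 0 ≤ a
    · by_cases hb0 : 0 ≤ b
      · exact Or.inl ⟨a, b, ha0, hb0, hexp⟩
      · right
        push Not at hb0
        obtain ⟨v, hv1, hv2⟩ := key (-b) (|a| + 1)
        refine ⟨v, by rw [hv1]; linarith, by rw [hv2]; have := abs_nonneg a; linarith, ?_⟩
        rw [hexp, inner_add_left, inner_smul_left, inner_smul_left, hv1, hv2]
        simp only [conj_trivial]
        have := le_abs_self a
        nlinarith
    · right
      push Not at ha0
      obtain ⟨v, hv1, hv2⟩ := key (|b| + 1) (-a)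
      refine ⟨v, by rw [hv1]; have := abs_nonneg b; linarith, by rw [hv2]; linarith, ?_⟩
      rw [hexp, inner_add_left, inner_smul_left, inner_smul_left, hv1, hv2]
      simp only [conj_trivial]
      have := le_abs_self b
      nlinarith

/-- A compact subset of the half circle has two extreme vectors. -/
lemma extreme_pair {ε : ℝ} (hε : 0 < ε) (W : Set Plane) (hW : IsCompact W) (hne : W.Nonempty)
    (hn : ∀ w ∈ W, ‖w‖ = ε) (ξ : Plane) (hξ : ‖ξ‖ = 1) (hle : ∀ w ∈ W, ⟪w, ξ⟫ ≤ 0) :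
    ∃ w1 ∈ W, ∃ w2 ∈ W, (w1 = -w2 ∧ ⟪w1, ξ⟫ = 0) ∨
      (w1 ≠ -w2 ∧ ∀ w ∈ W, ∃ a b : ℝ, 0 ≤ a ∧ 0 ≤ b ∧ w = a • w1 + b • w2) := by
  have hcont : ContinuousOn (fun w : Plane => ⟪w, rotJ ξ⟫) W := by fun_prop
  obtain ⟨w1, hw1, hmax⟩ := hW.exists_isMaxOn hne hcont
  obtain ⟨w2, hw2, hmin⟩ := hW.exists_isMinOn hne hcont
  refine ⟨w1, hw1, w2, hw2, ?_⟩
  have hξ2 := normSq_coord ξ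
  rw [hξ] at hξ2
  have decomp : ∀ w : Plane, w = ⟪w, rotJ ξ⟫ • rotJ ξ - (-⟪w, ξ⟫) • ξ := by
    intro w
    apply plane_ext
    · simp only [inner_coord, PiLp.sub_apply, PiLp.smul_apply, smul_eq_mul, rotJ_zero, rotJ_one]
      linear_combination (w 0) * hξ2
    · simp only [inner_coord, PiLp.sub_apply, PiLp.smul_apply, smul_eq_mul, rotJ_zero, rotJ_one]
      linear_combination (w 1) * hξ2
  have hsq : ∀ w ∈ W, ⟪w, rotJ ξ⟫ ^ 2 + (-⟪w, ξ⟫) ^ 2 = ε ^ 2 := by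
    intro w hw
    have := normSq_coord w
    rw [hn w hw] at this
    simp only [inner_coord, rotJ_zero, rotJ_one]
    rw [this]
    linear_combination (-(w 0 ^ 2 + w 1 ^ 2)) * hξ2
  have hdet : ∀ s c s' c' : ℝ, 0 ≤ c → 0 ≤ c' → s ^ 2 + c ^ 2 = ε ^ 2 → s' ^ 2 + c' ^ 2 = ε ^ 2 →
      s' ≤ s → 0 ≤ s * c' - c * s' := by
    intro s c s' c' hc hc' h h' hss
    by_cases h0 : 0 ≤ s'
    · have : c ≤ c' := by
        apply (pow_le_pow_iff_left₀ hc hc' two_ne_zero).1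
        nlinarith
      nlinarith [mul_le_mul hss this hc (by linarith)]
    · push Not at h0
      by_cases h1 : 0 ≤ s
      · nlinarith [mul_nonneg h1 hc', mul_nonneg hc (neg_nonneg.2 h0.le)]
      · push Not at h1
        have : c' ≤ c := by
          apply (pow_le_pow_iff_left₀ hc' hc two_ne_zero).1
          nlinarith
        nlinarith [mul_le_mul (show -s ≤ -s' by linarith) this hc' (by linarith)]
  have q1 := hsq w1 hw1
  have q2 := hsq w2 hw2
  have c1 : 0 ≤ -⟪w1, ξ⟫ := by linarith [hle w1 hw1]
  have c2 : 0 ≤ -⟪w2, ξ⟫ := by linarith [hle w2 hw2]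
  have d1 := decomp w1
  have d2 := decomp w2
  have hs12 : ⟪w2, rotJ ξ⟫ ≤ ⟪w1, rotJ ξ⟫ := hmax hw2
  by_cases hopp : w1 = -w2
  · left
    refine ⟨hopp, ?_⟩
    have : ⟪w1, ξ⟫ = -⟪w2, ξ⟫ := by rw [hopp, inner_neg_left]
    linarith
  right
  refine ⟨hopp, fun w hw => ?_⟩
  have q := hsq w hw
  have c0 : 0 ≤ -⟪w, ξ⟫ := by linarith [hle w hw]
  have d := decomp w
  have hA : ⟪w, rotJ ξ⟫ ≤ ⟪w1, rotJ ξ⟫ := hmax hw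
  have hB : ⟪w2, rotJ ξ⟫ ≤ ⟪w, rotJ ξ⟫ := hmin hw
  generalize ⟪w, rotJ ξ⟫ = s at *
  generalize ⟪w1, rotJ ξ⟫ = s1 at *
  generalize ⟪w2, rotJ ξ⟫ = s2 at *
  generalize -⟪w, ξ⟫ = c at *
  generalize -⟪w1, ξ⟫ = k1 at *
  generalize -⟪w2, ξ⟫ = k2 at *
  have hD := hdet s1 k1 s2 k2 c1 c2 q1 q2 hs12
  have hDa := hdet s c s2 k2 c0 c2 q q2 hB
  have hDb := hdet s1 k1 s c c1 c0 q1 q hA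
  rcases hD.lt_or_eq with hpos | hzero
  · have hne0 := hpos.ne'
    have ha := div_mul_cancel₀ (s * k2 - c * s2) hne0
    have hb := div_mul_cancel₀ (s1 * c - k1 * s) hne0
    refine ⟨(s * k2 - c * s2) / (s1 * k2 - k1 * s2), (s1 * c - k1 * s) / (s1 * k2 - k1 * s2),
      by positivity, by positivity, ?_⟩
    generalize (s * k2 - c * s2) / (s1 * k2 - k1 * s2) = a at *
    generalize (s1 * c - k1 * s) / (s1 * k2 - k1 * s2) = b at *
    rw [d, d1, d2]
    apply plane_ext
    · simp only [PiLp.add_apply, PiLp.sub_apply, PiLp.smul_apply, smul_eq_mul]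
      apply mul_left_cancel₀ hne0
      linear_combination (-(s1 * rotJ ξ 0 - k1 * ξ 0)) * ha - (s2 * rotJ ξ 0 - k2 * ξ 0) * hb
    · simp only [PiLp.add_apply, PiLp.sub_apply, PiLp.smul_apply, smul_eq_mul]
      apply mul_left_cancel₀ hne0
      linear_combination (-(s1 * rotJ ξ 1 - k1 * ξ 1)) * ha - (s2 * rotJ ξ 1 - k2 * ξ 1) * hb
  · have hss : s1 ^ 2 = s2 ^ 2 := by
      have h1 : s1 * k2 = k1 * s2 := by linarith
      have h2 : s1 ^ 2 * k2 ^ 2 = k1 ^ 2 * s2 ^ 2 := by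
        rw [← mul_pow, ← mul_pow, h1]
      have h3 : k2 ^ 2 = ε ^ 2 - s2 ^ 2 := by linarith
      have h4 : k1 ^ 2 = ε ^ 2 - s1 ^ 2 := by linarith
      rw [h3, h4] at h2
      have : ε ^ 2 * (s1 ^ 2 - s2 ^ 2) = 0 := by linarith
      have h5 := (mul_eq_zero.1 this).resolve_left (by positivity)
      linarith
    have hkk : k1 = k2 := by
      have : k1 ^ 2 = k2 ^ 2 := by linarith
      exact (pow_left_inj₀ c1 c2 two_ne_zero).1 this
    have hs : s1 = s2 := by
      rcases sq_eq_sq_iff_eq_or_eq_neg.1 hss with h | h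
      · exact h
      · have hz : s2 * k2 = 0 := by rw [hkk, h] at hzero; linarith
        rcases mul_eq_zero.1 hz with h0 | h0
        · rw [h, h0]; simp
        · exfalso; apply hopp
          rw [d1, d2, hkk, h0, h]; simp
    have e0 : s = s1 := by linarith
    have e1 : c = k1 := by
      have : c ^ 2 = k1 ^ 2 := by rw [e0] at q; linarith
      exact (pow_left_inj₀ c0 c1 two_ne_zero).1 this
    refine ⟨1, 0, zero_le_one, le_refl _, ?_⟩
    rw [d, d1, e0, e1]; simp

/-! ## Basic facts on the ε-neighbourhood -/

lemma notMem_eNbhd_iff {E : Set Plane} (hE : IsCompact E) {ε : ℝ} (hε : 0 < ε) (z : Plane) :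
    z ∉ eNbhd E ε ↔ ∀ y ∈ E, ε < ‖y - z‖ := by
  have : eNbhd E ε = ⋃ y ∈ E, closedBall y ε := by
    rw [eNbhd, ← thickening_eq_biUnion_ball, closure_thickening hε,
      hE.cthickening_eq_biUnion_closedBall hε.le]
  rw [this]
  simp only [mem_iUnion, mem_closedBall, not_exists, not_le, exists_prop, not_and]
  simp only [dist_comm z, dist_eq_norm]

lemma isClosed_eNbhd (E : Set Plane) (ε : ℝ) : IsClosed (eNbhd E ε) := isClosed_closure

lemma frontier_feasible {E : Set Plane} (hE : IsCompact E) {ε : ℝ} (hε : 0 < ε) {z : Plane}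
    (hz : z ∈ closure (eNbhd E ε)ᶜ) : ∀ y ∈ E, ε ≤ ‖y - z‖ := by
  intro y hy
  have hcl : IsClosed {u : Plane | ε ≤ ‖y - u‖} := isClosed_le continuous_const (by fun_prop)
  exact closure_minimal (fun u hu => ((notMem_eNbhd_iff hE hε u).1 hu y hy).le) hcl hz

lemma frontier_closure_compl {E : Set Plane} {ε : ℝ} {z : Plane}
    (hz : z ∈ frontier (eNbhd E ε)) : z ∈ closure (eNbhd E ε)ᶜ := by
  rw [frontier_eq_closure_inter_closure] at hz; exact hz.2

lemma mem_frontier_of {E : Set Plane} {ε : ℝ} {z : Plane}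
    (hz : z ∈ closure (eNbhd E ε)ᶜ) (hz' : z ∈ eNbhd E ε) : z ∈ frontier (eNbhd E ε) := by
  rw [frontier_eq_closure_inter_closure]; exact ⟨subset_closure hz', hz⟩

lemma contributors_iff {E : Set Plane} (hE : IsCompact E) {ε : ℝ} (hε : 0 < ε) {z : Plane}
    (hz : z ∈ frontier (eNbhd E ε)) (y : Plane) :
    y ∈ contributors E ε z ↔ y ∈ E ∧ ‖y - z‖ = ε := by
  constructor
  · rintro ⟨h1, h2⟩
    exact ⟨hE.isClosed.frontier_subset h1, h2⟩
  · rintro ⟨h1, h2⟩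
    refine ⟨?_, h2⟩
    rw [hE.isClosed.frontier_eq]
    refine ⟨h1, fun h_int => ?_⟩
    have hfe := frontier_feasible hE hε (frontier_closure_compl hz)
    rw [mem_interior_iff_mem_nhds, Metric.mem_nhds_iff] at h_int
    obtain ⟨r, hr, hsub⟩ := h_int
    set t := min (r / (2 * ε)) 1 with ht
    have ht0 : 0 < t := by positivity
    have ht1 : t ≤ 1 := min_le_right _ _
    have ht2 : t * ε < r := by
      have : t ≤ r / (2 * ε) := min_le_left _ _
      calc t * ε ≤ r / (2 * ε) * ε := by gcongr
        _ = r / 2 := by field_simp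
        _ < r := by linarith
    have hmem : y - t • (y - z) ∈ E := by
      apply hsub
      rw [mem_ball, dist_eq_norm, sub_sub_cancel_left, norm_neg, norm_smul, h2,
        Real.norm_eq_abs, abs_of_pos ht0]
      exact ht2
    have := hfe _ hmem
    have h3 : y - t • (y - z) - z = (1 - t) • (y - z) := by
      rw [sub_smul, one_smul]; abel
    rw [h3, norm_smul, h2, Real.norm_eq_abs, abs_of_nonneg (by linarith)] at this
    nlinarith

lemma contributors_nonempty {E : Set Plane} (hE : IsCompact E) {ε : ℝ} (hε : 0 < ε) {z : Plane}
    (hz : z ∈ frontier (eNbhd E ε)) : ∃ y ∈ E, ‖y - z‖ = ε := by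
  have hfe := frontier_feasible hE hε (frontier_closure_compl hz)
  have h1 : z ∈ eNbhd E ε := (isClosed_eNbhd E ε).frontier_subset hz
  by_contra hcon
  push Not at hcon
  exact (notMem_eNbhd_iff hE hε z).2
    (fun y hy => lt_of_le_of_ne (hfe y hy) (Ne.symm (hcon y hy))) h1

lemma push_eventually {E : Set Plane} (hE : IsCompact E) {ε : ℝ} {z v : Plane}
    (hfe : ∀ y ∈ E, ε ≤ ‖y - z‖) (hv : ∀ y ∈ E, ‖y - z‖ = ε → ⟪y - z, v⟫ < 0) :
    ∀ᶠ q : Plane × ℝ in 𝓝 (z, 0), ∀ y ∈ E, 0 < q.2 → ε ≤ ‖y - q.1‖ →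
      ε < ‖y - (q.1 + q.2 • v)‖ := by
  apply hE.eventually_forall_of_forall_eventually
  intro y hy
  by_cases h : ⟪y - z, v⟫ < 0
  · have hc : Continuous (fun q : (Plane × ℝ) × Plane => ⟪q.2 - q.1.1, v⟫) := by fun_prop
    have := (isOpen_lt hc continuous_const).eventually_mem (x := ((z, (0:ℝ)), y)) h
    filter_upwards [this] with q hq'
    have hq := hq'
    intro ht hle
    refine lt_of_le_of_lt hle ?_
    apply (pow_lt_pow_iff_left₀ (norm_nonneg _) (norm_nonneg _) two_ne_zero).1
    rw [norm_sub_smul_sq]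
    have : 0 ≤ q.1.2 ^ 2 * ‖v‖ ^ 2 := by positivity
    nlinarith
  · have hlt : ε < ‖y - z‖ := lt_of_le_of_ne (hfe y hy) (fun h' => h (hv y hy h'.symm))
    have hc : Continuous (fun q : (Plane × ℝ) × Plane => ‖q.2 - (q.1.1 + q.1.2 • v)‖) := by
      fun_prop
    have := (isOpen_lt continuous_const hc).eventually_mem (x := ((z, (0:ℝ)), y))
      (show ε < ‖y - (z + (0:ℝ) • v)‖ by simpa using hlt)
    filter_upwards [this] with q hq'
    have hq := hq'
    intro _ _
    exact hq

lemma feasible_inner {ε : ℝ} (y z x : Plane) (hε : 0 < ε) (hyx : ‖y - x‖ = ε) (h : ε ≤ ‖y - z‖) :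
    2 * ⟪y - x, z - x⟫ ≤ ‖z - x‖ ^ 2 := by
  have h1 : ‖y - z‖ ^ 2 = ‖y - x‖ ^ 2 - 2 * ⟪y - x, z - x⟫ + ‖z - x‖ ^ 2 := by
    rw [← norm_sub_sq_real]; congr 2; abel
  rw [hyx] at h1
  nlinarith [pow_le_pow_left₀ hε.le h 2]

lemma tilt_eventually {E : Set Plane} (hE : IsCompact E) {ε : ℝ} (hε : 0 < ε) {x : Plane}
    {κ : ℝ} (hκ : 0 < κ) :
    ∀ᶠ z in 𝓝 x, ∀ p ∈ E ×ˢ sphere (0 : Plane) 1, z ≠ x → (∀ y ∈ E, ε ≤ ‖y - z‖) →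
      z - x = ‖z - x‖ • p.2 → ‖p.1 - z‖ = ε → ⟪p.1 - z, p.2⟫ ≤ κ := by
  apply (hE.prod (isCompact_sphere (0 : Plane) 1)).eventually_forall_of_forall_eventually
  rintro ⟨y, e⟩ ⟨hy, he⟩
  by_cases h : ‖y - x‖ = ε
  · by_cases h2 : ⟪y - x, e⟫ < κ
    · have hc : Continuous (fun q : Plane × Plane × Plane => ⟪q.2.1 - q.1, q.2.2⟫) := by fun_prop
      have := (isOpen_lt hc continuous_const).eventually_mem (x := (x, y, e)) h2
      filter_upwards [this] with q hq'
      have hq := hq'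
      intro _ _ _ _
      exact hq.le
    · push Not at h2
      have hc : Continuous (fun q : Plane × Plane × Plane => 2 * ⟪y - x, q.2.2⟫ - ‖q.1 - x‖) := by
        fun_prop
      have := (isOpen_lt continuous_const hc).eventually_mem (x := (x, y, e))
        (show (0:ℝ) < 2 * ⟪y - x, e⟫ - ‖x - x‖ by simp; linarith)
      filter_upwards [this] with q hq'
      have hq := hq'
      intro hne hfe heq _
      exfalso
      have h3 := feasible_inner y q.1 x hε h (hfe y hy)
      have h4 : ⟪y - x, q.1 - x⟫ = ‖q.1 - x‖ * ⟪y - x, q.2.2⟫ := by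
        conv_lhs => rw [heq]
        rw [inner_smul_right]
      rw [h4] at h3
      have : 0 < ‖q.1 - x‖ := norm_pos_iff.2 (sub_ne_zero.2 hne)
      nlinarith
  · have hc : Continuous (fun q : Plane × Plane × Plane => ‖q.2.1 - q.1‖) := by fun_prop
    have := (isOpen_ne_fun hc continuous_const).eventually_mem (x := (x, y, e)) h
    filter_upwards [this] with q hq'
    have hq : ‖q.2.1 - q.1‖ ≠ ε := hq'
    intro _ _ _ h'
    exact absurd h' hq

/-! ## Outward directions -/

lemma outward_le {E : Set Plane} (hE : IsCompact E) {ε : ℝ} (hε : 0 < ε) {z ξ y : Plane}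
    (hξ : ξ ∈ outwardDirs E ε z) (hy : y ∈ E) (hyz : ‖y - z‖ = ε) : ⟪y - z, ξ⟫ ≤ 0 := by
  obtain ⟨_, u, hu, hlim, hdir⟩ := hξ
  have h1 : Tendsto (fun n => 2 * ⟪y - z, (‖u n - z‖)⁻¹ • (u n - z)⟫) atTop
      (𝓝 (2 * ⟪y - z, ξ⟫)) := (tendsto_const_nhds.inner hdir).const_mul 2
  have h2 : Tendsto (fun n => ‖u n - z‖) atTop (𝓝 0) := by
    have := (hlim.sub_const z).norm
    simpa using this
  have h3 := le_of_tendsto_of_tendsto' h1 h2 (fun n => by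
    have h := feasible_inner y (u n) z hε hyz ((notMem_eNbhd_iff hE hε _).1 (hu n) y hy).le
    rw [inner_smul_right]
    by_cases h0 : ‖u n - z‖ = 0
    · simp [h0]
    · have hpos : 0 < ‖u n - z‖ := lt_of_le_of_ne (norm_nonneg _) (Ne.symm h0)
      calc 2 * (‖u n - z‖⁻¹ * ⟪y - z, u n - z⟫) = ‖u n - z‖⁻¹ * (2 * ⟪y - z, u n - z⟫) := by ring
        _ ≤ ‖u n - z‖⁻¹ * (‖u n - z‖ ^ 2) := by gcongr
        _ = ‖u n - z‖ := by field_simp)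
  linarith

lemma outward_nonempty {E : Set Plane} {ε : ℝ} {z : Plane}
    (hz : z ∈ frontier (eNbhd E ε)) : ∃ ξ, ξ ∈ outwardDirs E ε z := by
  obtain ⟨u, hu, hlim⟩ := mem_closure_iff_seq_limit.1 (frontier_closure_compl hz)
  have hzm := (isClosed_eNbhd E ε).frontier_subset hz
  have hne : ∀ n, u n - z ≠ 0 := by
    intro n h
    rw [sub_eq_zero] at h
    exact hu n (h ▸ hzm)
  have hs : ∀ n, (‖u n - z‖)⁻¹ • (u n - z) ∈ sphere (0 : Plane) 1 := by
    intro n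
    rw [mem_sphere_zero_iff_norm, norm_smul, norm_inv, norm_norm,
      inv_mul_cancel₀ (norm_ne_zero_iff.2 (hne n))]
  obtain ⟨ξ, hξ, φ, hφ, hl⟩ := (isCompact_sphere (0 : Plane) 1).tendsto_subseq hs
  exact ⟨ξ, by simpa using hξ, u ∘ φ, fun n => hu _, hlim.comp hφ.tendsto_atTop, hl⟩

lemma outward_of_limit {E : Set Plane} (hE : IsCompact E) {ε : ℝ} (hε : 0 < ε) {z ξ η : Plane}
    (hfe : ∀ y ∈ E, ε ≤ ‖y - z‖) (hξ : ‖ξ‖ = 1)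
    (h1 : ∀ y ∈ E, ‖y - z‖ = ε → ⟪y - z, ξ⟫ ≤ 0)
    (h2 : ∀ y ∈ E, ‖y - z‖ = ε → ⟪y - z, η⟫ < 0) : ξ ∈ outwardDirs E ε z := by
  refine ⟨hξ, ?_⟩
  have key : ∀ n : ℕ, ∃ t : ℝ, 0 < t ∧ t < 1 / ((n : ℝ) + 1) ∧
      z + t • (ξ + (1 / ((n : ℝ) + 1)) • η) ∉ eNbhd E ε := by
    intro n
    have hn : 0 < 1 / ((n : ℝ) + 1) := by positivity
    have hp := push_eventually hE (v := ξ + (1 / ((n : ℝ) + 1)) • η) hfe (by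
      intro y hy hyz
      rw [inner_add_right, inner_smul_right]
      have := h1 y hy hyz
      have := mul_neg_of_pos_of_neg hn (h2 y hy hyz)
      linarith)
    have hp2 : ∀ᶠ t : ℝ in 𝓝 0, ∀ y ∈ E, 0 < t → ε ≤ ‖y - z‖ →
        ε < ‖y - (z + t • (ξ + (1 / ((n : ℝ) + 1)) • η))‖ :=
      (show Tendsto (fun t : ℝ => (z, t)) (𝓝 0) (𝓝 (z, 0)) from
        (Continuous.prodMk_right z).tendsto 0).eventually hp
    have hp3 : ∀ᶠ t : ℝ in 𝓝[>] 0, 0 < t ∧ t < 1 / ((n : ℝ) + 1) := Ioo_mem_nhdsGT hn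
    obtain ⟨t, ht1, ht2, ht3⟩ := ((hp2.filter_mono nhdsWithin_le_nhds).and hp3).exists
    exact ⟨t, ht2, ht3, (notMem_eNbhd_iff hE hε _).2 fun y hy => ht1 y hy ht2 (hfe y hy)⟩
  choose t ht0 ht1 ht2 using key
  refine ⟨_, ht2, ?_, ?_⟩
  · have hlim0 : Tendsto t atTop (𝓝 0) :=
      squeeze_zero (fun n => (ht0 n).le) (fun n => (ht1 n).le) tendsto_one_div_add_atTop_nhds_zero_nat
    have hlim1 : Tendsto (fun n : ℕ => ξ + (1 / ((n : ℝ) + 1)) • η) atTop (𝓝 (ξ + (0:ℝ) • η)) :=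
      (tendsto_one_div_add_atTop_nhds_zero_nat.smul_const η).const_add ξ
    have := (hlim0.smul hlim1).const_add z
    simpa using this
  · have hlim1 : Tendsto (fun n : ℕ => ξ + (1 / ((n : ℝ) + 1)) • η) atTop (𝓝 ξ) := by
      simpa using ((tendsto_one_div_add_atTop_nhds_zero_nat (𝕜 := ℝ)).smul_const η).const_add ξ
    have hlim2 : Tendsto (fun n : ℕ => ‖ξ + (1 / ((n : ℝ) + 1)) • η‖⁻¹ •
        (ξ + (1 / ((n : ℝ) + 1)) • η)) atTop (𝓝 ((1 : ℝ)⁻¹ • ξ)) := by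
      have hn := hlim1.norm
      rw [hξ] at hn
      exact (hn.inv₀ one_ne_zero).smul hlim1
    rw [inv_one, one_smul] at hlim2
    refine hlim2.congr fun n => ?_
    rw [add_sub_cancel_left, norm_smul, Real.norm_eq_abs, abs_of_pos (ht0 n), smul_smul, mul_inv,
      mul_right_comm, inv_mul_cancel₀ (ht0 n).ne', one_mul]

/-! ## Extremal contributors -/

lemma neg_of_cone {w1 w2 w v : Plane} {a b : ℝ} (ha : 0 ≤ a) (hb : 0 ≤ b)
    (hw : w = a • w1 + b • w2) (hw0 : w ≠ 0) (h1 : ⟪w1, v⟫ < 0) (h2 : ⟪w2, v⟫ < 0) :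
    ⟪w, v⟫ < 0 := by
  rw [hw, inner_add_left, inner_smul_left, inner_smul_left]
  simp only [conj_trivial]
  rcases ha.lt_or_eq with h | h
  · nlinarith [mul_nonneg hb (neg_nonneg.2 h2.le), mul_pos h (neg_pos.2 h1)]
  · rcases hb.lt_or_eq with h' | h'
    · rw [← h]; nlinarith [mul_pos h' (neg_pos.2 h2)]
    · exfalso; apply hw0; rw [hw, ← h, ← h']; simp

lemma exists_perp {ε : ℝ} (hε : 0 < ε) (w1 w2 : Plane) (h1 : ‖w1‖ = ε) :
    ∃ ξ : Plane, ‖ξ‖ = 1 ∧ ⟪w1, ξ⟫ = 0 ∧ ⟪w2, ξ⟫ ≤ 0 := by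
  have hn : ‖ε⁻¹ • rotJ w1‖ = 1 := by
    rw [norm_smul, norm_rotJ, h1, norm_inv, Real.norm_eq_abs, abs_of_pos hε,
      inv_mul_cancel₀ hε.ne']
  have hp : ⟪w1, ε⁻¹ • rotJ w1⟫ = 0 := by
    rw [inner_smul_right, inner_coord]; simp; right; ring
  by_cases h : ⟪w2, ε⁻¹ • rotJ w1⟫ ≤ 0
  · exact ⟨_, hn, hp, h⟩
  · refine ⟨-(ε⁻¹ • rotJ w1), by rw [norm_neg, hn], by rw [inner_neg_right, hp, neg_zero], ?_⟩
    rw [inner_neg_right]; linarith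

/-- In the plane two vectors orthogonal to a common nonzero one are parallel; for vectors of
equal norm they are equal or opposite. -/
lemma eq_or_neg_of_perp {ε : ℝ} {w w' ξ : Plane} (hw : ‖w‖ = ε) (hw' : ‖w'‖ = ε)
    (hξ : ‖ξ‖ = 1) (h : ⟪w, ξ⟫ = 0) (h' : ⟪w', ξ⟫ = 0) : w = w' ∨ w = -w' := by
  have n1 := normSq_coord w
  have n2 := normSq_coord w'
  have n3 := normSq_coord ξ
  rw [hw] at n1; rw [hw'] at n2; rw [hξ] at n3
  rw [inner_coord] at h h'
  have e1 : w = (w 1 * ξ 0 - w 0 * ξ 1) • rotJ ξ := by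
    apply plane_ext
    · simp only [PiLp.smul_apply, smul_eq_mul, rotJ_zero]
      linear_combination (w 0) * n3 + ξ 0 * h
    · simp only [PiLp.smul_apply, smul_eq_mul, rotJ_one]
      linear_combination (w 1) * n3 + ξ 1 * h
  have e2 : w' = (w' 1 * ξ 0 - w' 0 * ξ 1) • rotJ ξ := by
    apply plane_ext
    · simp only [PiLp.smul_apply, smul_eq_mul, rotJ_zero]
      linear_combination (w' 0) * n3 + ξ 0 * h'
    · simp only [PiLp.smul_apply, smul_eq_mul, rotJ_one]
      linear_combination (w' 1) * n3 + ξ 1 * h'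
  have f1 : ‖w‖ = |w 1 * ξ 0 - w 0 * ξ 1| := by
    conv_lhs => rw [e1, norm_smul, norm_rotJ, hξ, mul_one, Real.norm_eq_abs]
  have f2 : ‖w'‖ = |w' 1 * ξ 0 - w' 0 * ξ 1| := by
    conv_lhs => rw [e2, norm_smul, norm_rotJ, hξ, mul_one, Real.norm_eq_abs]
  have : |w 1 * ξ 0 - w 0 * ξ 1| = |w' 1 * ξ 0 - w' 0 * ξ 1| := by
    rw [← f1, ← f2, hw, hw']
  rcases abs_eq_abs.1 this with g | g
  · left; rw [e1, e2, g]
  · right; rw [e1, e2, g, neg_smul]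

lemma ext_structure {E : Set Plane} (hE : IsCompact E) {ε : ℝ} (hε : 0 < ε) {z : Plane}
    (hz : z ∈ frontier (eNbhd E ε)) :
    ∃ y1 y2 : Plane, y1 ∈ E ∧ y2 ∈ E ∧ ‖y1 - z‖ = ε ∧ ‖y2 - z‖ = ε ∧
      extContrib E ε z = {y1, y2} ∧
      (y1 - z = -(y2 - z) ∨ (y1 - z ≠ -(y2 - z) ∧ ∀ y ∈ E, ‖y - z‖ = ε →
        ∃ a b : ℝ, 0 ≤ a ∧ 0 ≤ b ∧ y - z = a • (y1 - z) + b • (y2 - z))) := by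
  have hfe := frontier_feasible hE hε (frontier_closure_compl hz)
  obtain ⟨ξ, hξ⟩ := outward_nonempty hz
  have hξ1 : ‖ξ‖ = 1 := hξ.1
  set S : Set Plane := E ∩ {y | ‖y - z‖ = ε} with hS
  have hScomp : IsCompact S :=
    hE.inter_right (isClosed_eq (by fun_prop) continuous_const)
  have hWc : IsCompact ((fun y => y - z) '' S) := hScomp.image (by fun_prop)
  obtain ⟨y0, hy0, hy0'⟩ := contributors_nonempty hE hε hz
  obtain ⟨_, ⟨y1, ⟨hy1, hn1⟩, rfl⟩, _, ⟨y2, ⟨hy2, hn2⟩, rfl⟩, hcase⟩ :=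
    extreme_pair hε ((fun y => y - z) '' S) hWc ⟨_, y0, ⟨hy0, hy0'⟩, rfl⟩
      (by rintro _ ⟨y, ⟨_, hy⟩, rfl⟩; exact hy) ξ hξ1
      (by rintro _ ⟨y, ⟨hy, hy'⟩, rfl⟩; exact outward_le hE hε hξ hy hy')
  have hn1 : ‖y1 - z‖ = ε := hn1
  have hn2 : ‖y2 - z‖ = ε := hn2
  have inj : ∀ {a b : Plane}, a - z = b - z → a = b := fun h => sub_left_injective h
  refine ⟨y1, y2, hy1, hy2, hn1, hn2, ?_, ?_⟩
  · ext y
    simp only [mem_insert_iff, mem_singleton_iff]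
    constructor
    · rintro ⟨hyc, ξ', hξ', hperp⟩
      obtain ⟨hyE, hyn⟩ := (contributors_iff hE hε hz y).1 hyc
      have l1 := outward_le hE hε hξ' hy1 hn1
      have l2 := outward_le hE hε hξ' hy2 hn2
      rcases hcase with ⟨hopp, hp⟩ | ⟨hnopp, hcone⟩
      · have hopp : y1 - z = -(y2 - z) := hopp
        have l3 : ⟪y1 - z, ξ'⟫ = 0 := by
          have : ⟪y1 - z, ξ'⟫ = -⟪y2 - z, ξ'⟫ := by rw [hopp, inner_neg_left]
          linarith
        rcases eq_or_neg_of_perp hyn hn1 hξ'.1 hperp l3 with h | h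
        · left; exact inj h
        · right; rw [hopp, neg_neg] at h; exact inj h
      · have hnopp : y1 - z ≠ -(y2 - z) := hnopp
        obtain ⟨a, b, ha, hb, hab⟩ := hcone (y - z) ⟨y, ⟨hyE, hyn⟩, rfl⟩
        have hab : y - z = a • (y1 - z) + b • (y2 - z) := hab
        have hsum : a * ⟪y1 - z, ξ'⟫ + b * ⟪y2 - z, ξ'⟫ = 0 := by
          rw [hab, inner_add_left, inner_smul_left, inner_smul_left] at hperp
          simpa using hperp
        have m1 := mul_nonneg ha (neg_nonneg.2 l1)
        have m2 := mul_nonneg hb (neg_nonneg.2 l2)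
        have z1 : a * ⟪y1 - z, ξ'⟫ = 0 := by linarith
        have z2 : b * ⟪y2 - z, ξ'⟫ = 0 := by linarith
        rcases mul_eq_zero.1 z1 with h | h
        · right
          rw [h, zero_smul, zero_add] at hab
          have : ε = b * ε := by
            have := congrArg norm hab
            rwa [norm_smul, hyn, hn2, Real.norm_eq_abs, abs_of_nonneg hb] at this
          have hb1 : b = 1 := by
            apply mul_right_cancel₀ hε.ne'; linarith
          rw [hb1, one_smul] at hab
          exact inj hab
        · left
          rcases mul_eq_zero.1 z2 with h' | h'
          · rw [h', zero_smul, add_zero] at hab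
            have : ε = a * ε := by
              have := congrArg norm hab
              rwa [norm_smul, hyn, hn1, Real.norm_eq_abs, abs_of_nonneg ha] at this
            have ha1 : a = 1 := by
              apply mul_right_cancel₀ hε.ne'; linarith
            rw [ha1, one_smul] at hab
            exact inj hab
          · have h12 := (eq_or_neg_of_perp hn1 hn2 hξ'.1 h h').resolve_right hnopp
            rcases eq_or_neg_of_perp hyn hn1 hξ'.1 hperp h with h3 | h3
            · exact inj h3
            · exfalso
              have : (a + b + 1) • (y1 - z) = 0 := by
                rw [← h12, h3] at hab
                rw [add_smul, add_smul, one_smul, ← hab]; simp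
              rcases smul_eq_zero.1 this with h4 | h4
              · linarith
              · rw [h4, norm_zero] at hn1; linarith
    · intro hy
      rcases hcase with ⟨hopp, hp⟩ | ⟨hnopp, hcone⟩
      · have hopp : y1 - z = -(y2 - z) := hopp
        have hp : ⟪y1 - z, ξ⟫ = 0 := hp
        have hp2 : ⟪y2 - z, ξ⟫ = 0 := by
          rw [hopp, inner_neg_left] at hp; linarith
        rcases hy with rfl | rfl
        · exact ⟨(contributors_iff hE hε hz _).2 ⟨hy1, hn1⟩, ξ, hξ, hp⟩
        · exact ⟨(contributors_iff hE hε hz _).2 ⟨hy2, hn2⟩, ξ, hξ, hp2⟩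
      · have hnopp : y1 - z ≠ -(y2 - z) := hnopp
        have hposn : 0 < ‖(y1 - z) + (y2 - z)‖ ^ 2 := by
          have : 0 < ‖(y1 - z) + (y2 - z)‖ :=
            norm_pos_iff.2 (fun h => hnopp (eq_neg_of_add_eq_zero_left h))
          positivity
        rw [norm_add_sq_real, hn1, hn2] at hposn
        have s1 : ⟪y1 - z, -((y1 - z) + (y2 - z))⟫ < 0 := by
          rw [inner_neg_right, inner_add_right, real_inner_self_eq_norm_sq, hn1]; linarith
        have s2 : ⟪y2 - z, -((y1 - z) + (y2 - z))⟫ < 0 := by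
          rw [inner_neg_right, inner_add_right, real_inner_self_eq_norm_sq, hn2,
            real_inner_comm]; linarith
        have hstrict : ∀ y ∈ E, ‖y - z‖ = ε → ⟪y - z, -((y1 - z) + (y2 - z))⟫ < 0 := by
          intro y hyE hyn
          obtain ⟨a, b, ha, hb, hab⟩ := hcone (y - z) ⟨y, ⟨hyE, hyn⟩, rfl⟩
          refine neg_of_cone ha hb hab ?_ s1 s2
          rw [← norm_ne_zero_iff, hyn]; exact hε.ne'
        have hout : ∀ ξ' : Plane, ‖ξ'‖ = 1 → ⟪y1 - z, ξ'⟫ ≤ 0 → ⟪y2 - z, ξ'⟫ ≤ 0 →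
            ξ' ∈ outwardDirs E ε z := by
          intro ξ' h0 h1 h2
          refine outward_of_limit hE hε hfe h0 ?_ hstrict
          intro y hyE hyn
          obtain ⟨a, b, ha, hb, hab⟩ := hcone (y - z) ⟨y, ⟨hyE, hyn⟩, rfl⟩
          have hab : y - z = a • (y1 - z) + b • (y2 - z) := hab
          rw [hab, inner_add_left, inner_smul_left, inner_smul_left]
          simp only [conj_trivial]
          nlinarith [mul_nonneg ha (neg_nonneg.2 h1), mul_nonneg hb (neg_nonneg.2 h2)]
        rcases hy with rfl | rfl
        · obtain ⟨ξ', a1, a2, a3⟩ := exists_perp hε (y - z) (y2 - z) hn1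
          exact ⟨(contributors_iff hE hε hz _).2 ⟨hy1, hn1⟩, ξ', hout ξ' a1 a2.le a3, a2⟩
        · obtain ⟨ξ', a1, a2, a3⟩ := exists_perp hε (y - z) (y1 - z) hn2
          exact ⟨(contributors_iff hE hε hz _).2 ⟨hy2, hn2⟩, ξ', hout ξ' a1 a3 a2.le, a2⟩
  · rcases hcase with ⟨hopp, _⟩ | ⟨hnopp, hcone⟩
    · exact Or.inl hopp
    · exact Or.inr ⟨hnopp, fun y hy hyn => hcone (y - z) ⟨y, ⟨hy, hyn⟩, rfl⟩⟩

/-! ## Forward direction -/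

lemma forward_point {E : Set Plane} (hE : IsCompact E) {ε : ℝ} (hε : 0 < ε) {x : Plane}
    {δ : ℝ} (hδ : 0 < δ) (hδ1 : δ ≤ 1) {V : Set Plane} (hV : IsCompOfCompl E ε V)
    (hb : Bornology.IsBounded V)
    (htilt : ∀ z ∈ closure V, ∀ p ∈ E ×ˢ sphere (0 : Plane) 1, z ≠ x →
      (∀ y ∈ E, ε ≤ ‖y - z‖) →
      z - x = ‖z - x‖ • p.2 → ‖p.1 - z‖ = ε → ⟪p.1 - z, p.2⟫ ≤ ε * δ / 2) :
    ∃ z ∈ closure V, IsSingularity E ε z ∧ z ≠ x ∧ ∃ y1 y2 : Plane,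
      ‖y1 - z‖ = ε ∧ ‖y2 - z‖ = ε ∧ extContrib E ε z = {y1, y2} ∧
      ⟪y1 - z, y2 - z⟫ < (-1 + δ) * ε ^ 2 := by
  obtain ⟨z0, hz0, rfl⟩ := hV
  set V := connectedComponentIn (eNbhd E ε)ᶜ z0 with hVdef
  have hAo : IsOpen (eNbhd E ε)ᶜ := (isClosed_eNbhd E ε).isOpen_compl
  have hVo : IsOpen V := hAo.connectedComponentIn
  have hz0V : z0 ∈ V := mem_connectedComponentIn hz0
  have hVsub : V ⊆ (eNbhd E ε)ᶜ := connectedComponentIn_subset _ _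
  -- joining
  have hjoin : ∀ T : Set Plane, IsPreconnected T → T ⊆ (eNbhd E ε)ᶜ → (T ∩ V).Nonempty →
      T ⊆ V := by
    rintro T hT hTs ⟨t, htT, htV⟩
    have : V = connectedComponentIn (eNbhd E ε)ᶜ t := connectedComponentIn_eq htV
    rw [this]
    exact hT.subset_connectedComponentIn htT hTs
  obtain ⟨z, hzV, hmax⟩ := hb.isCompact_closure.exists_isMaxOn ⟨z0, subset_closure hz0V⟩
    (show ContinuousOn (fun u : Plane => ‖u - x‖) (closure V) by fun_prop)
  have hmax : ∀ u ∈ closure V, ‖u - x‖ ≤ ‖z - x‖ := fun u hu => hmax hu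
  -- no point of the closure can be reached by moving outwards
  have hno : ∀ v : Plane, 0 < ⟪z - x, v⟫ → ¬ (∀ᶠ t : ℝ in 𝓝[>] 0, z + t • v ∈ closure V) := by
    intro v hv hev
    obtain ⟨t, ht1, ht2⟩ := (hev.and self_mem_nhdsWithin).exists
    have ht2 : 0 < t := ht2
    have h1 := hmax _ ht1
    have h2 : ‖z + t • v - x‖ ^ 2 = ‖z - x‖ ^ 2 + 2 * t * ⟪z - x, v⟫ + t ^ 2 * ‖v‖ ^ 2 := by
      rw [show z + t • v - x = (z - x) + t • v by abel, norm_add_sq_real, inner_smul_right,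
        norm_smul, mul_pow, Real.norm_eq_abs, sq_abs]; ring
    have h3 := pow_le_pow_left₀ (norm_nonneg _) h1 2
    have h4 : 0 ≤ t ^ 2 * ‖v‖ ^ 2 := by positivity
    nlinarith [mul_pos ht2 hv]
  have hzx : z ≠ x := by
    rintro rfl
    have hall : ∀ u ∈ V, u = z := by
      intro u hu
      have := hmax u (subset_closure hu)
      simp only [sub_self, norm_zero] at this
      exact sub_eq_zero.1 (norm_le_zero_iff.1 this)
    have hs : V = {z0} := by
      ext u; constructor
      · intro hu; rw [mem_singleton_iff, hall u hu, hall z0 hz0V]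
      · rintro rfl; exact hz0V
    rw [hs] at hVo
    exact not_isOpen_singleton z0 hVo
  have hzcl : z ∈ closure (eNbhd E ε)ᶜ := closure_mono hVsub hzV
  have hpos : 0 < ‖z - x‖ := norm_pos_iff.2 (sub_ne_zero.2 hzx)
  have hzA : z ∈ eNbhd E ε := by
    by_contra hzn
    have hzV' : z ∈ V := by
      have ho : IsOpen (connectedComponentIn (eNbhd E ε)ᶜ z) := hAo.connectedComponentIn
      obtain ⟨u, hu1, hu2⟩ := mem_closure_iff.1 hzV _ ho (mem_connectedComponentIn hzn)
      exact hjoin _ isPreconnected_connectedComponentIn (connectedComponentIn_subset _ _)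
        ⟨u, hu1, hu2⟩ (mem_connectedComponentIn hzn)
    refine hno (z - x) (by rw [real_inner_self_eq_norm_sq]; positivity) ?_
    have hc : Tendsto (fun t : ℝ => z + t • (z - x)) (𝓝 0) (𝓝 z) := by
      have : Continuous (fun t : ℝ => z + t • (z - x)) := by fun_prop
      simpa using this.tendsto 0
    have := hc.eventually (hVo.mem_nhds hzV')
    exact (this.mono fun t ht => subset_closure ht).filter_mono nhdsWithin_le_nhds
  have hzF := mem_frontier_of hzcl hzA
  have hfe := frontier_feasible hE hε hzcl
  obtain ⟨y1, y2, hy1, hy2, hn1, hn2, hext, hcase⟩ := ext_structure hE hε hzF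
  have hlt : ⟪y1 - z, y2 - z⟫ < (-1 + δ) * ε ^ 2 := by
    rcases hcase with hopp | ⟨hnopp, hcone⟩
    · rw [hopp, inner_neg_left, real_inner_self_eq_norm_sq, hn2]
      have : 0 < δ * ε ^ 2 := by positivity
      linarith
    · set e := ‖z - x‖⁻¹ • (z - x) with he
      have hen : ‖e‖ = 1 := by
        rw [he, norm_smul, norm_inv, norm_norm, inv_mul_cancel₀ hpos.ne']
      have hze : z - x = ‖z - x‖ • e := by
        rw [he, smul_smul, mul_inv_cancel₀ hpos.ne', one_smul]
      rcases cone_dichotomy hε (y1 - z) (y2 - z) e hn1 hn2 hen hnopp with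
        ⟨a, b, ha, hb', hab⟩ | ⟨v, hv1, hv2, hv3⟩
      · by_contra hge
        push Not at hge
        have t1 := htilt z hzV (y1, e) ⟨hy1, by simpa using hen⟩ hzx hfe hze hn1
        have t2 := htilt z hzV (y2, e) ⟨hy2, by simpa using hen⟩ hzx hfe hze hn2
        simp only at t1 t2
        have k1 : (1:ℝ) = a * ⟪y1 - z, e⟫ + b * ⟪y2 - z, e⟫ := by
          have : ⟪e, e⟫ = (1:ℝ) := by rw [real_inner_self_eq_norm_sq, hen]; norm_num
          rw [← this]
          conv_lhs => rw [hab]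
          rw [inner_add_left, inner_smul_left, inner_smul_left, ← hab]; simp
        have k2 : (1:ℝ) = a ^ 2 * ε ^ 2 + b ^ 2 * ε ^ 2 + 2 * (a * b) * ⟪y1 - z, y2 - z⟫ := by
          have h : ‖e‖ ^ 2 = 1 := by rw [hen]; norm_num
          rw [← h, hab, norm_add_sq_real, norm_smul, norm_smul, hn1, hn2, inner_smul_left,
            inner_smul_right, mul_pow, mul_pow, Real.norm_eq_abs, Real.norm_eq_abs, sq_abs, sq_abs]
          simp only [conj_trivial]; ring
        have k3 : δ * ε ^ 2 * (a ^ 2 + b ^ 2) ≤ 1 := by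
          have hab0 : 0 ≤ a * b := mul_nonneg ha hb'
          have g1 := mul_le_mul_of_nonneg_left hge hab0
          have g2 : 0 ≤ (1 - δ) * ε ^ 2 * (a - b) ^ 2 :=
            mul_nonneg (mul_nonneg (by linarith) (by positivity)) (sq_nonneg _)
          nlinarith
        have k4 : 1 ≤ (a + b) * (ε * δ / 2) := by
          nlinarith [mul_le_mul_of_nonneg_left t1 ha, mul_le_mul_of_nonneg_left t2 hb']
        have k5 : (1:ℝ) ≤ ((a + b) * (ε * δ / 2)) ^ 2 := by nlinarith
        have k6 : ((a + b) * (ε * δ / 2)) ^ 2 ≤ δ / 2 * (δ * ε ^ 2 * (a ^ 2 + b ^ 2)) := by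
          have : 0 ≤ δ ^ 2 * ε ^ 2 * (a - b) ^ 2 := by positivity
          nlinarith
        nlinarith [mul_le_mul_of_nonneg_left k3 (show 0 ≤ δ / 2 by positivity)]
      · exfalso
        have hstrict : ∀ y ∈ E, ‖y - z‖ = ε → ⟪y - z, v⟫ < 0 := by
          intro y hyE hyn
          obtain ⟨a, b, ha, hb', hab⟩ := hcone y hyE hyn
          refine neg_of_cone ha hb' hab ?_ hv1 hv2
          rw [← norm_ne_zero_iff, hyn]; exact hε.ne'
        have hp := push_eventually hE hfe hstrict
        rw [nhds_prod_eq] at hp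
        obtain ⟨pu, hpu, pt, hpt, hP⟩ := eventually_prod_iff.1 hp
        obtain ⟨r, hr, hrt⟩ := Metric.eventually_nhds_iff.1 hpt
        refine hno v ?_ ?_
        · rw [hze, inner_smul_left]; simp only [conj_trivial]; positivity
        · filter_upwards [Ioo_mem_nhdsGT hr] with t ht
          have hcont : Tendsto (fun u : Plane => u + t • v) (𝓝[V] z) (𝓝 (z + t • v)) := by
            have : Continuous (fun u : Plane => u + t • v) := by fun_prop
            exact (this.tendsto z).mono_left nhdsWithin_le_nhds
          have : (𝓝[V] z).NeBot := mem_closure_iff_nhdsWithin_neBot.1 hzV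
          refine mem_closure_of_tendsto hcont ?_
          filter_upwards [self_mem_nhdsWithin, mem_nhdsWithin_of_mem_nhds hpu] with u huV hu
          have huA := (notMem_eNbhd_iff hE hε u).1 (hVsub huV)
          have hseg : (fun s : ℝ => u + s • v) '' Icc 0 t ⊆ V := by
            apply hjoin
            · exact isPreconnected_Icc.image _ (by fun_prop)
            · rintro _ ⟨s, hs, rfl⟩
              rcases hs.1.lt_or_eq with h | h
              · refine (notMem_eNbhd_iff hE hε _).2 fun y hy => ?_
                refine hP hu (hrt (y := s) ?_) y hy h (huA y hy).le
                rw [Real.dist_eq, sub_zero, abs_of_pos h]; exact lt_of_le_of_lt hs.2 ht.2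
              · rw [← h]; simpa using hVsub huV
            · exact ⟨u, ⟨0, ⟨le_refl _, ht.1.le⟩, by simp⟩, huV⟩
          exact hseg ⟨t, ⟨ht.1.le, le_refl _⟩, rfl⟩
  refine ⟨z, hzV, ⟨hzF, ?_⟩, hzx, y1, y2, hn1, hn2, hext, hlt⟩
  rintro ⟨⟨_, y, hy⟩, _⟩
  have c1 : y1 ∈ contributors E ε z := (contributors_iff hE hε hzF _).2 ⟨hy1, hn1⟩
  have c2 : y2 ∈ contributors E ε z := (contributors_iff hE hε hzF _).2 ⟨hy2, hn2⟩
  rw [hy, mem_singleton_iff] at c1 c2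
  rw [c1, c2, real_inner_self_eq_norm_sq] at hlt
  rw [c1] at hn1
  rw [hn1] at hlt
  nlinarith [pow_pos hε 2]

lemma isPreconnected_outside (R : ℝ) (hR : 0 ≤ R) : IsPreconnected {u : Plane | R < ‖u‖} := by
  have hs : IsPreconnected (sphere (0 : Plane) 1) := by
    apply isPreconnected_sphere
    rw [← Module.finrank_eq_rank, finrank_euclideanSpace_fin]
    norm_num
  have him := ((isPreconnected_Ioi (a := R)).prod hs).image (fun p : ℝ × Plane => p.1 • p.2)
    (by fun_prop)
  convert him using 1
  ext u
  constructor
  · intro hu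
    have hu : R < ‖u‖ := hu
    have hpos : 0 < ‖u‖ := lt_of_le_of_lt hR hu
    refine ⟨(‖u‖, ‖u‖⁻¹ • u), ⟨hu, ?_⟩, ?_⟩
    · rw [mem_sphere_zero_iff_norm, norm_smul, norm_inv, norm_norm, inv_mul_cancel₀ hpos.ne']
    · simp [smul_smul, mul_inv_cancel₀ hpos.ne']
  · rintro ⟨⟨r, w⟩, ⟨hr, hw⟩, rfl⟩
    have hr : R < r := hr
    have hw : ‖w‖ = 1 := by simpa using hw
    show R < ‖r • w‖
    rw [norm_smul, hw, mul_one, Real.norm_eq_abs, abs_of_pos (lt_of_le_of_lt hR hr)]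
    exact hr

lemma unbounded_unique {E : Set Plane} (hE : IsCompact E) {ε : ℝ} (hε : 0 < ε)
    {V1 V2 : Set Plane} (h1 : IsCompOfCompl E ε V1) (h2 : IsCompOfCompl E ε V2)
    (hd : Disjoint V1 V2) (hu1 : ¬ Bornology.IsBounded V1) : Bornology.IsBounded V2 := by
  by_contra hu2
  obtain ⟨R0, hR0⟩ := hE.isBounded.subset_closedBall (0 : Plane)
  set R := max (R0 + ε) 0 with hRdef
  have hR : 0 ≤ R := le_max_right _ _
  have hTA : {u : Plane | R < ‖u‖} ⊆ (eNbhd E ε)ᶜ := by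
    intro u hu
    have hu : R < ‖u‖ := hu
    refine (notMem_eNbhd_iff hE hε u).2 fun y hy => ?_
    have hy' : ‖y‖ ≤ R0 := by simpa using hR0 hy
    have h3 : R0 + ε ≤ R := le_max_left _ _
    have h4 : ‖u‖ - ‖y‖ ≤ ‖y - u‖ := by rw [norm_sub_rev]; exact norm_sub_norm_le u y
    linarith
  have key : ∀ V : Set Plane, IsCompOfCompl E ε V → ¬ Bornology.IsBounded V →
      {u : Plane | R < ‖u‖} ⊆ V := by
    rintro V ⟨z, hz, rfl⟩ hub
    have hex : ∃ u ∈ connectedComponentIn (eNbhd E ε)ᶜ z, R < ‖u‖ := by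
      by_contra hcon
      push Not at hcon
      exact hub (isBounded_iff_forall_norm_le.2 ⟨R, hcon⟩)
    obtain ⟨u, hu, hur⟩ := hex
    rw [connectedComponentIn_eq hu]
    exact (isPreconnected_outside R hR).subset_connectedComponentIn hur hTA
  by_cases hne : V1.Nonempty
  · have hex : ∃ u ∈ V1, R < ‖u‖ := by
      by_contra hcon
      push Not at hcon
      exact hu1 (isBounded_iff_forall_norm_le.2 ⟨R, hcon⟩)
    obtain ⟨u, hu, hur⟩ := hex
    exact Set.disjoint_left.1 hd hu (key V2 h2 hu2 hur)
  · rw [Set.not_nonempty_iff_eq_empty] at hne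
    rw [hne] at hu1
    exact hu1 Bornology.isBounded_empty

lemma comp_nonempty {E : Set Plane} {ε : ℝ} {V : Set Plane} (h : IsCompOfCompl E ε V) :
    V.Nonempty := by
  obtain ⟨z, hz, rfl⟩ := h
  exact ⟨z, mem_connectedComponentIn hz⟩

lemma forward {E : Set Plane} (hE : IsCompact E) {ε : ℝ} (hε : 0 < ε) {x : Plane}
    (h : ∃ Vs : ℕ → Set Plane, (∀ n, IsCompOfCompl E ε (Vs n)) ∧
      (Pairwise fun m n => Disjoint (Vs m) (Vs n)) ∧
      Tendsto (fun n => hausdorffDist {x} (Vs n)) atTop (nhds 0)) :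
    ∃ u : ℕ → Plane, IsChainSeq E ε x u := by
  obtain ⟨Vs, hc, hdisj, hlim⟩ := h
  have hbdd : ∀ᶠ n in atTop, Bornology.IsBounded (Vs n) := by
    by_cases hall : ∀ n, Bornology.IsBounded (Vs n)
    · exact Eventually.of_forall hall
    · push Not at hall
      obtain ⟨m, hm⟩ := hall
      filter_upwards [eventually_gt_atTop m] with n hn
      exact unbounded_unique hE hε (hc m) (hc n) (hdisj hn.ne) hm
  have key : ∀ δ : ℝ, 0 < δ → δ ≤ 1 → ∃ z, dist z x ≤ δ ∧ IsSingularity E ε z ∧ z ≠ x ∧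
      ∃ y1 y2 : Plane, ‖y1 - z‖ = ε ∧ ‖y2 - z‖ = ε ∧ extContrib E ε z = {y1, y2} ∧
      ⟪y1 - z, y2 - z⟫ < (-1 + δ) * ε ^ 2 := by
    intro δ hδ hδ1
    have ht := tilt_eventually hE hε (x := x) (show 0 < ε * δ / 2 by positivity)
    obtain ⟨r, hr, hrt⟩ := Metric.eventually_nhds_iff.1 ht
    have hsm := hlim.eventually (gt_mem_nhds (show 0 < min r δ by positivity))
    obtain ⟨n, hnb, hns⟩ := (hbdd.and hsm).exists
    have hfin : hausdorffEDist (Vs n) {x} ≠ ⊤ :=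
      hausdorffEDist_ne_top_of_nonempty_of_bounded (comp_nonempty (hc n)) (singleton_nonempty x)
        hnb Bornology.isBounded_singleton
    have hsub : closure (Vs n) ⊆ closedBall x (hausdorffDist {x} (Vs n)) := by
      apply closure_minimal _ isClosed_closedBall
      intro v hv
      have := infDist_le_hausdorffDist_of_mem hv hfin
      rw [infDist_singleton, hausdorffDist_comm] at this
      exact this
    obtain ⟨z, hzV, hz1, hz2, hz3⟩ := forward_point hE hε hδ hδ1 (hc n) hnb (x := x) (by
      intro z hz
      exact hrt (lt_of_le_of_lt (hsub hz) (lt_of_lt_of_le hns (min_le_left _ _))))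
    exact ⟨z, (mem_closedBall.1 (hsub hzV)).trans (hns.le.trans (min_le_right _ _)), hz1, hz2, hz3⟩
  have key2 := fun n : ℕ => key (1 / ((n : ℝ) + 1)) (by positivity) (by
    rw [div_le_one (by positivity)]; have : (0:ℝ) ≤ n := by positivity
    linarith)
  choose u hu1 hu2 hu3 y1 y2 hy1 hy2 hext hin using key2
  refine ⟨u, hu2, hu3, ?_, y1, y2, hext, ?_⟩
  · rw [tendsto_iff_dist_tendsto_zero]
    exact squeeze_zero (fun n => dist_nonneg) hu1 tendsto_one_div_add_atTop_nhds_zero_nat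
  · have hε2 : 0 < ε ^ 2 := by positivity
    have hval : ∀ n, ⟪ε⁻¹ • (y1 n - u n), ε⁻¹ • (y2 n - u n)⟫ =
        (ε ^ 2)⁻¹ * ⟪y1 n - u n, y2 n - u n⟫ := by
      intro n
      rw [inner_smul_left, inner_smul_right]; simp only [conj_trivial]
      rw [← mul_assoc]; congr 1; rw [sq, mul_inv]
    have hub : Tendsto (fun n : ℕ => -1 + 1 / ((n : ℝ) + 1)) atTop (𝓝 (-1)) := by
      simpa using (tendsto_one_div_add_atTop_nhds_zero_nat (𝕜 := ℝ)).const_add (-1)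
    refine tendsto_of_tendsto_of_tendsto_of_le_of_le tendsto_const_nhds hub ?_ ?_
    · intro n
      show (-1 : ℝ) ≤ ⟪ε⁻¹ • (y1 n - u n), ε⁻¹ • (y2 n - u n)⟫
      rw [hval, inv_mul_eq_div, le_div_iff₀ hε2]
      have := neg_le_of_abs_le (abs_real_inner_le_norm (y1 n - u n) (y2 n - u n))
      rw [hy1, hy2] at this
      linarith
    · intro n
      show ⟪ε⁻¹ • (y1 n - u n), ε⁻¹ • (y2 n - u n)⟫ ≤ -1 + 1 / ((n : ℝ) + 1)
      rw [hval, inv_mul_eq_div, div_le_iff₀ hε2]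
      exact (hin n).le

/-! ## Backward direction -/

lemma backward_core {E : Set Plane} (hE : IsCompact E) {ε : ℝ} (hε : 0 < ε) {x f g : Plane}
    (hdec : ∀ v : Plane, v = ⟪v, g⟫ • g + ⟪v, f⟫ • f)
    (hnorm : ∀ v : Plane, ‖v‖ ^ 2 = ⟪v, g⟫ ^ 2 + ⟪v, f⟫ ^ 2)
    (hff : ⟪f, f⟫ = 1) (hfg : ⟪f, g⟫ = 0)
    (hp : x + ε • f ∈ E) (hm : x - ε • f ∈ E)
    (hP : ∀ η > 0, ∃ x' ∈ frontier (eNbhd E ε), 0 < ⟪x' - x, g⟫ ∧ ⟪x' - x, g⟫ < η ∧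
      |⟪x' - x, f⟫| < ε / 2 ∧ ∀ t : ℝ, |t| ≤ ε → x' + t • f ∈ eNbhd E ε) :
    ∃ Vs : ℕ → Set Plane, (∀ n, IsCompOfCompl E ε (Vs n)) ∧
      (Pairwise fun m n => Disjoint (Vs m) (Vs n)) ∧
      Tendsto (fun n => hausdorffDist {x} (Vs n)) atTop (nhds 0) := by
  set P : Set ℝ := {p | ∃ x' ∈ frontier (eNbhd E ε), p = ⟪x' - x, g⟫ ∧ 0 < p ∧ p < ε / 2 ∧
      |⟪x' - x, f⟫| < ε / 2 ∧ ∀ t : ℝ, |t| ≤ ε → x' + t • f ∈ eNbhd E ε} with hPdef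
  have hPex : ∀ η > 0, ∃ p ∈ P, p < η := by
    intro η hη
    obtain ⟨x', h1, h2, h3, h4, h5⟩ := hP (min η (ε / 2)) (by positivity)
    exact ⟨_, ⟨x', h1, rfl, h2, lt_of_lt_of_le h3 (min_le_right _ _), h4, h5⟩,
      lt_of_lt_of_le h3 (min_le_left _ _)⟩
  have hglb : IsGLB P 0 := by
    constructor
    · rintro p ⟨_, _, _, h, _⟩; exact h.le
    · intro b hb
      by_contra hcon
      push Not at hcon
      obtain ⟨p, hpP, hpb⟩ := hPex b hcon
      exact absurd (hb hpP) (not_le.2 hpb)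
  obtain ⟨p, hanti, hpos, hplim, hpP⟩ := hglb.exists_seq_strictAnti_tendsto_of_notMem
    (by rintro ⟨_, _, _, h, _⟩; exact lt_irrefl _ h)
    (by obtain ⟨q, hq, _⟩ := hPex 1 one_pos; exact ⟨q, hq⟩)
  choose X hXF hXp _ hpε hXf hwall using hpP
  set R : ℕ → Set Plane := fun n =>
    {v | p (2 * n + 2) < ⟪v - x, g⟫ ∧ ⟪v - x, g⟫ < p (2 * n) ∧ |⟪v - x, f⟫| < ε / 2} with hR
  have hRo : ∀ n, IsOpen (R n) := by
    intro n
    have o1 : IsOpen {v : Plane | p (2 * n + 2) < ⟪v - x, g⟫} :=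
      isOpen_lt continuous_const (by fun_prop)
    have o2 : IsOpen {v : Plane | ⟪v - x, g⟫ < p (2 * n)} :=
      isOpen_lt (by fun_prop) continuous_const
    have o3 : IsOpen {v : Plane | |⟪v - x, f⟫| < ε / 2} :=
      isOpen_lt (by fun_prop) continuous_const
    exact o1.inter (o2.inter o3)
  have hex : ∀ n, ∃ z, z ∉ eNbhd E ε ∧ z ∈ R n := by
    intro n
    have hXR : X (2 * n + 1) ∈ R n := by
      refine ⟨?_, ?_, hXf _⟩
      · rw [← hXp]; exact hanti (by omega)
      · rw [← hXp]; exact hanti (by omega)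
    obtain ⟨z, hz1, hz2⟩ := mem_closure_iff.1 (frontier_closure_compl (hXF (2 * n + 1))) _ (hRo n) hXR
    exact ⟨z, hz2, hz1⟩
  choose z hzA hzR using hex
  have hcoef_p : ∀ v : Plane, ‖x + ε • f - v‖ ^ 2 = ⟪v - x, g⟫ ^ 2 + (ε - ⟪v - x, f⟫) ^ 2 := by
    intro v
    have a1 : ⟪ε • f - (v - x), g⟫ = -⟪v - x, g⟫ := by
      rw [inner_sub_left (ε • f) (v - x) g, inner_smul_left, hfg]; simp
    have a2 : ⟪ε • f - (v - x), f⟫ = ε - ⟪v - x, f⟫ := by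
      rw [inner_sub_left (ε • f) (v - x) f, inner_smul_left, hff]; simp
    rw [show x + ε • f - v = ε • f - (v - x) by abel, hnorm, a1, a2, neg_sq]
  have hcoef_m : ∀ v : Plane, ‖x - ε • f - v‖ ^ 2 = ⟪v - x, g⟫ ^ 2 + (ε + ⟪v - x, f⟫) ^ 2 := by
    intro v
    rw [show x - ε • f - v = -(ε • f + (v - x)) by abel, norm_neg, hnorm, inner_add_left,
      inner_add_left, inner_smul_left, inner_smul_left, hff, hfg]
    simp
  have hout : ∀ v, v ∉ eNbhd E ε → ε ^ 2 < ⟪v - x, g⟫ ^ 2 + (ε - ⟪v - x, f⟫) ^ 2 ∧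
      ε ^ 2 < ⟪v - x, g⟫ ^ 2 + (ε + ⟪v - x, f⟫) ^ 2 := by
    intro v hv
    have h := (notMem_eNbhd_iff hE hε v).1 hv
    rw [← hcoef_p, ← hcoef_m]
    exact ⟨pow_lt_pow_left₀ (h _ hp) hε.le two_ne_zero,
      pow_lt_pow_left₀ (h _ hm) hε.le two_ne_zero⟩
  -- walls
  have hwall2 : ∀ k v, ⟪v - x, g⟫ = p k → |⟪v - x, f⟫| ≤ ε / 2 → v ∈ eNbhd E ε := by
    intro k v hv hvf
    have h0 : ⟪v - X k, g⟫ = 0 := by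
      rw [show v - X k = (v - x) - (X k - x) by abel, inner_sub_left, hv, ← hXp]; ring
    have h1 : ⟪v - X k, f⟫ = ⟪v - x, f⟫ - ⟪X k - x, f⟫ := by
      rw [← inner_sub_left]; congr 1; abel
    have h2 := hdec (v - X k)
    rw [h0, zero_smul, zero_add] at h2
    have h3 : v = X k + ⟪v - X k, f⟫ • f := by rw [← h2]; abel
    rw [h3]
    apply hwall
    rw [h1]
    have := hXf k
    rw [abs_le] at hvf ⊢
    rw [abs_lt] at this
    constructor <;> linarith [this.1, this.2, hvf.1, hvf.2]
  set Vs : ℕ → Set Plane := fun n => connectedComponentIn (eNbhd E ε)ᶜ (z n) with hVs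
  have hVR : ∀ n, Vs n ⊆ R n := by
    intro n
    refine isPreconnected_connectedComponentIn.subset_of_closure_inter_subset (hRo n)
      ⟨z n, mem_connectedComponentIn (hzA n), hzR n⟩ ?_
    rintro v ⟨hvR, hvV⟩
    have hvA : v ∉ eNbhd E ε := connectedComponentIn_subset _ _ hvV
    have hcl : closure (R n) ⊆ {v | p (2 * n + 2) ≤ ⟪v - x, g⟫} ∩
        ({v | ⟪v - x, g⟫ ≤ p (2 * n)} ∩ {v | |⟪v - x, f⟫| ≤ ε / 2}) := by
      apply closure_minimal
      · rintro v ⟨h1, h2, h3⟩; exact ⟨h1.le, h2.le, h3.le⟩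
      · exact (isClosed_le continuous_const (by fun_prop)).inter
          ((isClosed_le (by fun_prop) continuous_const).inter
            (isClosed_le (by fun_prop) continuous_const))
    obtain ⟨h1, h2, h3⟩ := hcl hvR
    have h1 : p (2 * n + 2) ≤ ⟪v - x, g⟫ := h1
    have h2 : ⟪v - x, g⟫ ≤ p (2 * n) := h2
    have h3 : |⟪v - x, f⟫| ≤ ε / 2 := h3
    refine ⟨lt_of_le_of_ne h1 fun h => hvA (hwall2 _ v h.symm h3),
      lt_of_le_of_ne h2 fun h => hvA (hwall2 _ v h h3), lt_of_le_of_ne h3 fun h => ?_⟩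
    obtain ⟨o1, o2⟩ := hout v hvA
    have hg0 : 0 < ⟪v - x, g⟫ := lt_of_lt_of_le (hpos _) h1
    have hg1 : ⟪v - x, g⟫ < ε / 2 := lt_of_le_of_lt h2 (hpε _)
    rcases (abs_eq (by positivity)).1 h with h' | h'
    · rw [h'] at o1; nlinarith
    · rw [h'] at o2; nlinarith
  have hbound : ∀ n, ∀ v ∈ Vs n, dist v x ≤ 2 * p (2 * n) := by
    intro n v hv
    obtain ⟨h1, h2, h3⟩ := hVR n hv
    have hvA : v ∉ eNbhd E ε := connectedComponentIn_subset _ _ hv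
    obtain ⟨o1, o2⟩ := hout v hvA
    have hg0 : 0 < ⟪v - x, g⟫ := lt_trans (hpos _) h1
    have hg1 : ⟪v - x, g⟫ < ε / 2 := lt_trans h2 (hpε _)
    rw [dist_eq_norm]
    have hn := hnorm (v - x)
    generalize ⟪v - x, g⟫ = a at *
    generalize ⟪v - x, f⟫ = b at *
    rw [abs_lt] at h3
    have hb1 : b ≤ a := by
      by_contra hcon; push Not at hcon; nlinarith
    have hb2 : -b ≤ a := by
      by_contra hcon; push Not at hcon; nlinarith
    have : ‖v - x‖ ^ 2 ≤ (2 * p (2 * n)) ^ 2 := by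
      rw [hn]
      nlinarith
    exact (pow_le_pow_iff_left₀ (norm_nonneg _) (by linarith [hpos (2 * n)]) two_ne_zero).1 this
  refine ⟨Vs, fun n => ⟨z n, hzA n, rfl⟩, ?_, ?_⟩
  · have hlt : ∀ m n, m < n → Disjoint (Vs m) (Vs n) := by
      intro m n hmn
      rw [Set.disjoint_left]
      intro v hv1 hv2
      have a1 := (hVR m hv1).1
      have a2 := (hVR n hv2).2.1
      have : p (2 * n) ≤ p (2 * m + 2) := hanti.antitone (by omega)
      linarith
    intro m n hmn
    rcases lt_or_gt_of_ne hmn with h | h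
    · exact hlt m n h
    · exact (hlt n m h).symm
  · have hl : Tendsto (fun n : ℕ => 2 * p (2 * n)) atTop (𝓝 0) := by
      have h2 : Tendsto (fun n : ℕ => 2 * n) atTop atTop :=
        tendsto_id.const_mul_atTop' two_pos
      simpa using (hplim.comp h2).const_mul 2
    refine squeeze_zero (fun n => hausdorffDist_nonneg) (fun n => ?_) hl
    apply hausdorffDist_le_of_mem_dist (by linarith [hpos (2 * n)])
    · rintro w rfl
      have hzV : z n ∈ Vs n := mem_connectedComponentIn (hzA n)
      exact ⟨z n, hzV, by rw [dist_comm]; exact hbound n _ hzV⟩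
    · intro v hv
      exact ⟨x, rfl, hbound n v hv⟩

lemma backward {E : Set Plane} (hE : IsCompact E) {ε : ℝ} (hε : 0 < ε) {x : Plane}
    (h : ∃ u : ℕ → Plane, IsChainSeq E ε x u) :
    ∃ Vs : ℕ → Set Plane, (∀ n, IsCompOfCompl E ε (Vs n)) ∧
      (Pairwise fun m n => Disjoint (Vs m) (Vs n)) ∧
      Tendsto (fun n => hausdorffDist {x} (Vs n)) atTop (nhds 0) := by
  obtain ⟨u, hsing, hne, hlim, y1, y2, hext, hin⟩ := h
  have hmem : ∀ n, (y1 n ∈ E ∧ ‖y1 n - u n‖ = ε) ∧ (y2 n ∈ E ∧ ‖y2 n - u n‖ = ε) := by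
    intro n
    have a1 : y1 n ∈ extContrib E ε (u n) := by rw [hext]; simp
    have a2 : y2 n ∈ extContrib E ε (u n) := by rw [hext]; simp
    exact ⟨(contributors_iff hE hε (hsing n).1 _).1 a1.1,
      (contributors_iff hE hε (hsing n).1 _).1 a2.1⟩
  obtain ⟨⟨yp, ym⟩, ⟨hyp, hym⟩, φ, hφ, hφl⟩ :=
    (hE.prod hE).tendsto_subseq (x := fun n => (y1 n, y2 n)) (fun n => ⟨(hmem n).1.1, (hmem n).2.1⟩)
  have hyp : yp ∈ E := hyp
  have hym : ym ∈ E := hym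
  have hu : Tendsto (fun n => u (φ n)) atTop (𝓝 x) := hlim.comp hφ.tendsto_atTop
  have hl1 : Tendsto (fun n => y1 (φ n)) atTop (𝓝 yp) :=
    (continuous_fst.tendsto _).comp hφl
  have hl2 : Tendsto (fun n => y2 (φ n)) atTop (𝓝 ym) :=
    (continuous_snd.tendsto _).comp hφl
  have hnp : ‖yp - x‖ = ε :=
    tendsto_nhds_unique ((hl1.sub hu).norm) (by simp only [(hmem _).1.2]; exact tendsto_const_nhds)
  have hnm : ‖ym - x‖ = ε :=
    tendsto_nhds_unique ((hl2.sub hu).norm) (by simp only [(hmem _).2.2]; exact tendsto_const_nhds)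
  have hinn : ⟪ε⁻¹ • (yp - x), ε⁻¹ • (ym - x)⟫ = (-1 : ℝ) :=
    tendsto_nhds_unique (((hl1.sub hu).const_smul ε⁻¹).inner ((hl2.sub hu).const_smul ε⁻¹))
      (hin.comp hφ.tendsto_atTop)
  set f : Plane := ε⁻¹ • (yp - x) with hf
  have hfn : ‖f‖ = 1 := by
    rw [hf, norm_smul, hnp, norm_inv, Real.norm_eq_abs, abs_of_pos hε, inv_mul_cancel₀ hε.ne']
  have hfm : ‖ε⁻¹ • (ym - x)‖ = 1 := by
    rw [norm_smul, hnm, norm_inv, Real.norm_eq_abs, abs_of_pos hε, inv_mul_cancel₀ hε.ne']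
  have hopp : f + ε⁻¹ • (ym - x) = 0 := by
    have : ‖f + ε⁻¹ • (ym - x)‖ ^ 2 = 0 := by
      rw [norm_add_sq_real, hfn, hfm, hinn]; norm_num
    exact norm_eq_zero.1 (pow_eq_zero_iff two_ne_zero |>.1 this)
  have hypx : yp - x = ε • f := by rw [hf, smul_smul, mul_inv_cancel₀ hε.ne', one_smul]
  have hymx : ym - x = -(ε • f) := by
    have : ε⁻¹ • (ym - x) = -f := eq_neg_of_add_eq_zero_right hopp
    rw [← smul_neg, ← this, smul_smul, mul_inv_cancel₀ hε.ne', one_smul]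
  have hp : x + ε • f ∈ E := by rw [← hypx]; simpa using hyp
  have hm : x - ε • f ∈ E := by
    rw [sub_eq_add_neg, ← hymx]; simpa using hym
  have hf2 := normSq_coord f
  rw [hfn] at hf2
  have hff : ⟪f, f⟫ = (1:ℝ) := by rw [real_inner_self_eq_norm_sq, hfn]; norm_num
  have hdec : ∀ v : Plane, v = ⟪v, rotJ f⟫ • rotJ f + ⟪v, f⟫ • f := by
    intro v
    apply plane_ext
    · simp only [inner_coord, PiLp.add_apply, PiLp.smul_apply, smul_eq_mul, rotJ_zero, rotJ_one]
      linear_combination (v 0) * hf2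
    · simp only [inner_coord, PiLp.add_apply, PiLp.smul_apply, smul_eq_mul, rotJ_zero, rotJ_one]
      linear_combination (v 1) * hf2
  have hnorm : ∀ v : Plane, ‖v‖ ^ 2 = ⟪v, rotJ f⟫ ^ 2 + ⟪v, f⟫ ^ 2 := by
    intro v
    rw [normSq_coord]
    simp only [inner_coord, rotJ_zero, rotJ_one]
    linear_combination (v 0 ^ 2 + v 1 ^ 2) * hf2
  have hfg : ⟪f, rotJ f⟫ = (0:ℝ) := by rw [inner_coord]; simp; ring
  by_cases hP : ∀ η > 0, ∃ x' ∈ frontier (eNbhd E ε), 0 < ⟪x' - x, rotJ f⟫ ∧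
      ⟪x' - x, rotJ f⟫ < η ∧
      |⟪x' - x, f⟫| < ε / 2 ∧ ∀ t : ℝ, |t| ≤ ε → x' + t • f ∈ eNbhd E ε
  · exact backward_core hE hε hdec hnorm hff hfg hp hm hP
  · refine backward_core hE hε (g := -rotJ f) (f := f) ?_ ?_ hff ?_ hp hm ?_
    · intro v
      conv_lhs => rw [hdec v]
      rw [inner_neg_right, smul_neg, neg_smul, neg_neg]
    · intro v
      rw [hnorm v, inner_neg_right, neg_sq]
    · rw [inner_neg_right, hfg, neg_zero]
    · push Not at hP
      obtain ⟨η0, hη0, hP⟩ := hP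
      intro η hη
      have hd : Tendsto (fun n => u (φ n) - x) atTop (𝓝 0) := by
        simpa using hu.sub_const x
      have t1 : Tendsto (fun n => |⟪u (φ n) - x, rotJ f⟫|) atTop (𝓝 0) := by
        have : Tendsto (fun n => ⟪u (φ n) - x, rotJ f⟫) atTop (𝓝 (⟪(0 : Plane), rotJ f⟫)) :=
          hd.inner tendsto_const_nhds
        simpa using this.abs
      have t2 : Tendsto (fun n => |⟪u (φ n) - x, f⟫|) atTop (𝓝 0) := by
        have : Tendsto (fun n => ⟪u (φ n) - x, f⟫) atTop (𝓝 (⟪(0 : Plane), f⟫)) :=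
          hd.inner tendsto_const_nhds
        simpa using this.abs
      have t3 : Tendsto (fun n => ⟪y1 (φ n) - u (φ n), f⟫) atTop (𝓝 ε) := by
        have := Filter.Tendsto.inner (𝕜 := ℝ) (hl1.sub hu) (tendsto_const_nhds (x := f))
        rw [hypx, inner_smul_left, hff] at this
        simpa using this
      have t4 : Tendsto (fun n => ⟪y2 (φ n) - u (φ n), f⟫) atTop (𝓝 (-ε)) := by
        have := Filter.Tendsto.inner (𝕜 := ℝ) (hl2.sub hu) (tendsto_const_nhds (x := f))
        rw [hymx, inner_neg_left, inner_smul_left, hff] at this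
        simpa using this
      have e1 := t1.eventually (gt_mem_nhds (show 0 < min η0 η by positivity))
      have e2 := t2.eventually (gt_mem_nhds (show 0 < ε / 2 by positivity))
      have e3 := t3.eventually (lt_mem_nhds (show ε / 2 < ε by linarith))
      have e4 := t4.eventually (gt_mem_nhds (show -ε < -(ε / 2) by linarith))
      obtain ⟨n, ⟨n1, n2⟩, n3, n4⟩ := ((e1.and e2).and (e3.and e4)).exists
      have hF := (hsing (φ n)).1
      have hfe := frontier_feasible hE hε (frontier_closure_compl hF)
      have hw : ∀ t : ℝ, |t| ≤ ε → u (φ n) + t • f ∈ eNbhd E ε := by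
        intro t ht
        by_contra hcon
        have hall := (notMem_eNbhd_iff hE hε _).1 hcon
        obtain ⟨⟨b1, b2⟩, b3, b4⟩ := hmem (φ n)
        rw [abs_le] at ht
        rcases le_total 0 t with h0 | h0
        · have := pow_lt_pow_left₀ (hall _ b1) hε.le two_ne_zero
          rw [norm_sub_smul_sq, b2, hfn] at this
          nlinarith
        · have := pow_lt_pow_left₀ (hall _ b3) hε.le two_ne_zero
          rw [norm_sub_smul_sq, b4, hfn] at this
          nlinarith
      have hnz : ⟪u (φ n) - x, rotJ f⟫ ≠ 0 := by
        intro h0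
        have q1 := feasible_inner yp (u (φ n)) x hε hnp (hfe yp hyp)
        have q2 := feasible_inner ym (u (φ n)) x hε hnm (hfe ym hym)
        rw [hypx, inner_smul_left, hnorm, h0, real_inner_comm] at q1
        rw [hymx, inner_neg_left, inner_smul_left, hnorm, h0, real_inner_comm] at q2
        simp only [conj_trivial] at q1 q2
        have hb0 : ⟪u (φ n) - x, f⟫ ≠ 0 := by
          intro hb
          have := hdec (u (φ n) - x)
          rw [h0, hb] at this
          exact hne (φ n) (sub_eq_zero.1 (by simpa using this))
        rw [abs_lt] at n2
        rcases lt_or_gt_of_ne hb0 with h | h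
        · nlinarith
        · nlinarith
      have n1' := lt_min_iff.1 n1
      rw [abs_lt, abs_lt] at n1'
      have hneg : ⟪u (φ n) - x, rotJ f⟫ < 0 := by
        rcases lt_or_gt_of_ne hnz with h | h
        · exact h
        · exfalso
          obtain ⟨t, ht, hcon⟩ := hP _ hF h n1'.1.2 n2
          exact hcon (hw t ht)
      refine ⟨u (φ n), hF, ?_, ?_, n2, hw⟩
      · rw [inner_neg_right]; linarith
      · rw [inner_neg_right]; linarith [n1'.2.1]

/-- Characterisation of chain singularities: accumulation of pairwise disjoint connected
components of the complement at `x` in Hausdorff distance is equivalent to the existence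
of a chain sequence of singularities converging to `x`. -/
theorem characterisation_of_chain_singularities (E : Set Plane) (hE : IsCompact E)
    {ε : ℝ} (hε : 0 < ε) (x : Plane) (hx : x ∈ frontier (eNbhd E ε)) :
    (∃ Vs : ℕ → Set Plane, (∀ n, IsCompOfCompl E ε (Vs n)) ∧
      (Pairwise fun m n => Disjoint (Vs m) (Vs n)) ∧
      Tendsto (fun n => hausdorffDist {x} (Vs n)) atTop (nhds 0)) ↔
    (∃ u : ℕ → Plane, IsChainSeq E ε x u) := by
  exact ⟨forward hE hε, backward hE hε⟩

end
end
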